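/- Let μ₁, …, μ_d > 0 with weighted norm ‖x‖_μ := (Σᵢ μᵢ xᵢ²)^{1/2}, and let T : ℝ^d → ℝ^d be continuously differentiable, satisfy ‖T(x) − T(y)‖_μ ≤ γ‖x − y‖_μ for all x, y with γ ∈ (0,1), and have every second partial derivative of every component bounded in absolute value by M < ∞. Let x* be the unique fixed point of T and J := DT(x*). Let ν be a probability law on ℝ^d with mean 0, symmetric positive definite covariance Σ, and finite third absolute moment. Let Σ_Y be the unique symmetric positive definite solution of (J − I)Σ_Y + Σ_Y(J − I)ᵀ + Σ = 0, and let γ_G be the centered Gaussian law on ℝ^d with covariance Σ_Y. Then there exist α'' ∈ (0,1] and finite constants U₃, U₃' such that for every α ∈ (0,α''): the chain X_{k+1} = X_k + α(T(X_k) − X_k + ξ_k), with ξ_k i.i.d. ∼ ν, admits a unique invariant probability measure μ_α (invariance meaning: X ∼ μ_α and ξ ∼ ν independent imply X + α(T(X) − X + ξ) ∼ μ_α), and, writing π_α for the law of (X − x*)/√α under μ_α: (i) for every 1-Lipschitz h : ℝ^d → ℝ, |∫h dπ_α − ∫h dγ_G| ≤ U₃ · α^{1/2} log(1/α); (ii)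 for every ζ ∈ ℝ^d with ‖ζ‖ = 1 and every a > 0, |π_α{y : ⟨y, ζ⟩ > a} − P(Z_ζ > a)| ≤ U₃' · α^{1/4}(log(1/α))^{1/2}/a, where Z_ζ is a real Gaussian with mean 0 and variance ζᵀΣ_Yζ. -/

import Mathlib

/-!
**Existence and uniqueness.** With `D = diag(√wᵢ)` the weighted norm is `‖D ·‖`, so the chain seen
through `D` is a random iteration whose one-step maps all contract with the factor
`1 - α (1 - γ)`. On the space of i.i.d. noise sequences the update is then a contraction of `L²`,
and the law of its fixed point is invariant (`exists_invariant`). Uniqueness comes from running two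
copies with the same noise (`invariant_unique`). Squaring the recursion gives
`E ‖X - x*‖² = O(α)` (`second_moment`).

**The linearised recursion.** With `A = 1 + α (J - 1)`, Taylor's formula at `x*` shows that the law
`π` of `(X - x*) / √α` is invariant for `y ↦ A y + p y + √α ξ` with `‖p y‖ = O(α^{3/2} ‖y‖²)`
(`taylor_bound`, `rescaled_invariant`).

**Comparison with the Gaussian law.** Write `P` for `Σ_Y`. The Lyapunov equation makes
`P - A^k P (A^k)ᵀ` comparable to `min (1, kα)` times the identity (`exists_gauss_family`). Let
`L_k` be a square root of it, `n` a standard Gaussian vector, and `f_k x = E h (A^k x + L_k n)`, so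
that `f_0 = h` and `f_k x → E h (P^{1/2} n)`. Since `E f_k (A x + L_1 n) = f_{k+1} x`, the
difference `∫ f_k dπ - ∫ f_{k+1} dπ` is the cost of dropping `p` and of replacing `√α ξ` by the
Gaussian `L_1 n` inside `f_k`, and the sum over `k` telescopes (`telescope`).

The two noises are centered and their covariances differ by `O(α²)`. For `k ≥ 1` the function `f_k`
is smoothed by `L_k n`: expanding the Cameron–Martin density gives it a second order Taylor
expansion with a cubic remainder (`gauss_taylor`), and the first two orders cancel
(`step_compare`). With `ρ = 1 - α (1 - γ)` the cost is `O(√α (ρ^k / k + α ρ^k))` (`local_bound`).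
As `∑ ρ^k / k = -log (1 - ρ)`, the total is `O(√α log (1/α))` (`limit_bound`, `rate_fixed`).

**Tails.** Sandwiching the indicator of `(a, ∞)` between ramps of slope `1/ε` turns a Wasserstein
bound `W` into a tail bound `W / ε + O(ε / a²)`, and `ε` of order `a √W` balances the two terms
(`tail_of_wass`, `tail_fixed`).
-/

open MeasureTheory Matrix
open scoped RealInnerProductSpace NNReal

/-- The weighted Euclidean norm `‖x‖_μ := (Σᵢ μᵢ xᵢ²)^{1/2}` with weights `w`. -/
noncomputable def wnorm {d : ℕ} (w : Fin d → ℝ) (x : EuclideanSpace ℝ (Fin d)) : ℝ :=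
  Real.sqrt (∑ i, w i * x i ^ 2)

set_option linter.unusedSectionVars false

/-! ### Invariant law of a contractive random iteration -/

/-- Splitting off the first term of an i.i.d. sequence leaves an i.i.d. sequence and an independent
term with the same laws. -/
lemma shift_preserving {E : Type*} [MeasurableSpace E] (ν : Measure E) [IsProbabilityMeasure ν] :
    MeasurePreserving (fun ω : ℕ → E => ((fun n => ω (n + 1)), ω 0))
      (Measure.infinitePi fun _ : ℕ => ν)
      ((Measure.infinitePi fun _ : ℕ => ν).prod ν) := by
  refine ⟨by fun_prop, ?_⟩
  have hm : Measurable (fun p : (ℕ → E) × E => (fun n : ℕ => Nat.casesOn n p.2 p.1 : ℕ → E)) := by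
    refine measurable_pi_iff.2 fun n => ?_
    cases n with
    | zero => exact measurable_snd
    | succ n => exact (measurable_pi_apply n).comp measurable_fst
  have key : Measure.map (fun p : (ℕ → E) × E => (fun n : ℕ => Nat.casesOn n p.2 p.1 : ℕ → E))
      ((Measure.infinitePi fun _ : ℕ => ν).prod ν) = Measure.infinitePi fun _ : ℕ => ν := by
    refine Measure.eq_infinitePi _ ?_
    intro s t ht
    classical
    rw [Measure.map_apply hm (MeasurableSet.pi (Finset.countable_toSet _) fun i _ => ht i)]
    let t' : ℕ → Set E := fun i => if i ∈ s then t i else Set.univ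
    have ht' : ∀ i, MeasurableSet (t' i) := fun i => by
      by_cases h : i ∈ s <;> simp [t', h, ht]
    obtain ⟨N, hN⟩ : ∃ N, s ⊆ Finset.range (N + 1) := by
      obtain ⟨N, hN⟩ := s.exists_nat_subset_range
      exact ⟨N, hN.trans (by simp)⟩
    have hset : (fun p : (ℕ → E) × E => (fun n : ℕ => Nat.casesOn n p.2 p.1 : ℕ → E)) ⁻¹'
        (Set.pi s t) = (Set.pi (Finset.range N) fun i => t' (i + 1)) ×ˢ (t' 0) := by
      ext p
      simp only [Set.mem_preimage, Set.mem_pi, Set.mem_prod, Finset.mem_coe, Finset.mem_range]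
      constructor
      · intro h
        refine ⟨fun i hi => ?_, ?_⟩
        · by_cases his : i + 1 ∈ s
          · simpa [t', his] using h (i + 1) his
          · simp [t', his]
        · by_cases his : 0 ∈ s
          · simpa [t', his] using h 0 his
          · simp [t', his]
      · rintro ⟨h1, h2⟩ i hi
        cases i with
        | zero => simpa [t', hi] using h2
        | succ i =>
          have := h1 i (by have := Finset.mem_range.1 (hN hi); omega)
          simpa [t', hi] using this
    rw [hset, Measure.prod_prod, Measure.infinitePi_pi _ (fun i _ => ht' _), mul_comm]
    have := Finset.prod_range_succ' (fun i => ν (t' i)) N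
    rw [mul_comm, ← this]
    rw [← Finset.prod_subset hN]
    · refine Finset.prod_congr rfl fun i hi => by simp [t', hi]
    · intro i _ hi; simp [t', hi]
  rw [← key, Measure.map_map (by fun_prop) hm]
  convert Measure.map_id
  rfl

/-- Let `ω` be i.i.d. noise and `θ` the shift. The map `Y ↦ Φ(Y ∘ θ, ω₀)` is a contraction of `L²`,
and the law of its fixed point is invariant. -/
lemma exists_invariant {E : Type*} [NormedAddCommGroup E] [CompleteSpace E]
    [MeasurableSpace E] [BorelSpace E] [SecondCountableTopology E]
    (ν : Measure E) [IsProbabilityMeasure ν] (Φ : E × E → E) (hΦ : Continuous Φ)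
    (ρ : ℝ≥0) (hρ : ρ < 1) (hlip : ∀ x y z, ‖Φ (x, z) - Φ (y, z)‖ ≤ ρ * ‖x - y‖)
    (h0 : MemLp (fun z => Φ (0, z)) 2 ν) :
    ∃ μ : Measure E, IsProbabilityMeasure μ ∧ Measure.map Φ (μ.prod ν) = μ ∧
      MemLp (fun x => x) 2 μ := by
  set P := Measure.infinitePi (fun _ : ℕ => ν) with hP
  have hsh : MeasurePreserving (fun ω : ℕ → E => ((fun n => ω (n + 1)), ω 0)) P (P.prod ν) :=
    shift_preserving ν
  have hθ : MeasurePreserving (fun ω : ℕ → E => (fun n => ω (n + 1))) P P :=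
    measurePreserving_fst.comp hsh
  have h00 : MeasurePreserving (fun ω : ℕ → E => ω 0) P ν := measurePreserving_snd.comp hsh
  have hmem : ∀ Y : Lp E 2 P, MemLp (fun ω : ℕ → E => Φ (Y (fun n => ω (n + 1)), ω 0)) 2 P := by
    intro Y
    have hY : Measurable (Y : (ℕ → E) → E) := (Lp.stronglyMeasurable Y).measurable
    have h1 : MemLp (fun ω : ℕ → E => Φ (0, ω 0)) 2 P := h0.comp_measurePreserving h00
    have h2 : MemLp (fun ω : ℕ → E => Y (fun n => ω (n + 1))) 2 P :=
      (Lp.memLp Y).comp_measurePreserving hθ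
    have h3 : MemLp (fun ω : ℕ → E => Φ (Y (fun n => ω (n + 1)), ω 0) - Φ (0, ω 0)) 2 P := by
      refine MemLp.of_le_mul (c := ρ) h2 ?_ (Filter.Eventually.of_forall fun ω => ?_)
      · exact ((hΦ.measurable.comp (by fun_prop)).sub
          (hΦ.measurable.comp (by fun_prop))).aestronglyMeasurable
      · simpa using hlip (Y (fun n => ω (n + 1))) 0 (ω 0)
    exact (h3.add h1).ae_eq (Filter.Eventually.of_forall fun ω => by simp)
  -- the random iteration started in the past, as a map on square integrable functions of the noise
  let F : Lp E 2 P → Lp E 2 P := fun Y => (hmem Y).toLp _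
  have hF : ContractingWith ρ F := by
    refine ⟨hρ, LipschitzWith.of_dist_le_mul fun Y Z => ?_⟩
    rw [dist_eq_norm, dist_eq_norm]
    have e1 : F Y - F Z = ((hmem Y).sub (hmem Z)).toLp _ := (MemLp.toLp_sub _ _).symm
    have e2 : MemLp (fun ω : ℕ → E => (Y - Z : Lp E 2 P) (fun n => ω (n + 1))) 2 P :=
      (Lp.memLp (Y - Z)).comp_measurePreserving hθ
    have e3 : ‖Y - Z‖ = ‖e2.toLp _‖ := by
      rw [Lp.norm_toLp, Lp.norm_def]
      congr 1
      exact (eLpNorm_comp_measurePreserving (Lp.aestronglyMeasurable _) hθ).symm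
    rw [e3, e1]
    refine Lp.norm_le_mul_norm_of_ae_le_mul ?_
    have e4 : ∀ᵐ ω ∂P, (Y - Z : Lp E 2 P) (fun n => ω (n + 1)) =
        Y (fun n => ω (n + 1)) - Z (fun n => ω (n + 1)) :=
      hθ.quasiMeasurePreserving.ae (Lp.coeFn_sub Y Z)
    filter_upwards [MemLp.coeFn_toLp ((hmem Y).sub (hmem Z)), MemLp.coeFn_toLp e2, e4]
      with ω a1 a2 a3
    rw [a1, a2, a3]
    exact hlip _ _ _
  set Y := ContractingWith.fixedPoint F hF with hYdef
  have hfix : F Y = Y := hF.fixedPoint_isFixedPt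
  have hYm : Measurable (Y : (ℕ → E) → E) := (Lp.stronglyMeasurable Y).measurable
  have hae : (fun ω : ℕ → E => Φ (Y (fun n => ω (n + 1)), ω 0)) =ᵐ[P] Y := by
    have := MemLp.coeFn_toLp (hmem Y)
    change F Y =ᵐ[P] _ at this
    rw [hfix] at this
    exact this.symm
  refine ⟨P.map Y, Measure.isProbabilityMeasure_map hYm.aemeasurable, ?_, ?_⟩
  · have h1 : (P.map Y).prod ν = Measure.map (Prod.map Y id) (P.prod ν) := by
      rw [← Measure.map_prod_map _ _ hYm measurable_id, Measure.map_id]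
    rw [h1, Measure.map_map hΦ.measurable (hYm.prodMap measurable_id), ← hsh.map_eq,
      Measure.map_map (hΦ.measurable.comp (hYm.prodMap measurable_id)) hsh.measurable]
    exact Measure.map_congr hae
  · exact (memLp_map_measure_iff (by fun_prop) hYm.aemeasurable).2 (Lp.memLp Y)

/-- Synchronous coupling: if `f` is bounded by `1` and `K`-Lipschitz, using the same noise `n` times
gives `‖∫ f dμ - ∫ f dμ'‖ ≤ ∫ min (2, K ρ^n ‖x - y‖) d(μ ⊗ μ')`, which tends to `0` without any
moment assumption. It is applied to the characters `x ↦ exp (i ⟨x, t⟩)`. -/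
lemma invariant_unique {E : Type*} [NormedAddCommGroup E] [InnerProductSpace ℝ E] [CompleteSpace E]
    [MeasurableSpace E] [BorelSpace E] [SecondCountableTopology E]
    (ν : Measure E) [IsProbabilityMeasure ν] (Φ : E × E → E) (hΦ : Continuous Φ)
    (ρ : ℝ) (hρ0 : 0 ≤ ρ) (hρ : ρ < 1)
    (hlip : ∀ x y z, ‖Φ (x, z) - Φ (y, z)‖ ≤ ρ * ‖x - y‖)
    (μ μ' : Measure E) [IsProbabilityMeasure μ] [IsProbabilityMeasure μ']
    (hμ : Measure.map Φ (μ.prod ν) = μ) (hμ' : Measure.map Φ (μ'.prod ν) = μ') : μ = μ' := by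
  have hint : ∀ (m : Measure (E × E)) [IsProbabilityMeasure m] (K : ℝ), 0 ≤ K →
      Integrable (fun p : E × E => min 2 (K * ‖p.1 - p.2‖)) m := by
    intro m _ K hK
    refine Integrable.of_bound (C := 2) (by fun_prop) (Filter.Eventually.of_forall fun p => ?_)
    rw [Real.norm_of_nonneg (le_min (by norm_num) (by positivity))]
    exact min_le_left _ _
  have base : ∀ (K : ℝ), 0 ≤ K → ∀ f : E → ℂ, Continuous f → (∀ x, ‖f x‖ ≤ 1) →
      (∀ x y, ‖f x - f y‖ ≤ K * ‖x - y‖) →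
      ‖(∫ x, f x ∂μ) - ∫ x, f x ∂μ'‖ ≤ ∫ p, min 2 (K * ‖p.1 - p.2‖) ∂(μ.prod μ') := by
    intro K hK f hf hb hl
    have hfi : ∀ (m : Measure E) [IsProbabilityMeasure m], Integrable f m := fun m _ =>
      Integrable.of_bound hf.aestronglyMeasurable 1 (Filter.Eventually.of_forall hb)
    have e1 : (∫ x, f x ∂μ) = ∫ p, f p.1 ∂(μ.prod μ') := by
      rw [integral_fun_fst]; simp
    have e2 : (∫ x, f x ∂μ') = ∫ p, f p.2 ∂(μ.prod μ') := by
      rw [integral_fun_snd]; simp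
    rw [e1, e2, ← integral_sub ((hfi μ).comp_fst _) ((hfi μ').comp_snd _)]
    refine norm_integral_le_of_norm_le (hint _ K hK) (Filter.Eventually.of_forall fun p => ?_)
    refine le_min ?_ (hl _ _)
    calc ‖f p.1 - f p.2‖ ≤ ‖f p.1‖ + ‖f p.2‖ := norm_sub_le _ _
      _ ≤ 2 := by linarith [hb p.1, hb p.2]
  have step : ∀ n : ℕ, ∀ (K : ℝ), 0 ≤ K → ∀ f : E → ℂ, Continuous f → (∀ x, ‖f x‖ ≤ 1) →
      (∀ x y, ‖f x - f y‖ ≤ K * ‖x - y‖) →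
      ‖(∫ x, f x ∂μ) - ∫ x, f x ∂μ'‖ ≤
        ∫ p, min 2 (K * ρ ^ n * ‖p.1 - p.2‖) ∂(μ.prod μ') := by
    intro n
    induction n with
    | zero => intro K hK f h1 h2 h3; simpa using base K hK f h1 h2 h3
    | succ n ih =>
      intro K hK f hf hb hl
      have hfi : ∀ (m : Measure (E × E)) [IsProbabilityMeasure m],
          Integrable (fun p => f (Φ p)) m := fun m _ =>
        Integrable.of_bound (hf.comp hΦ).aestronglyMeasurable 1
          (Filter.Eventually.of_forall fun p => hb _)
      have hfx : ∀ x, Integrable (fun z => f (Φ (x, z))) ν := fun x =>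
        Integrable.of_bound (hf.comp (hΦ.comp (by fun_prop))).aestronglyMeasurable 1
          (Filter.Eventually.of_forall fun p => hb _)
      have hinv : ∀ (m : Measure E) [IsProbabilityMeasure m], Measure.map Φ (m.prod ν) = m →
          ∫ x, f x ∂m = ∫ x, (∫ z, f (Φ (x, z)) ∂ν) ∂m := by
        intro m _ hm
        conv_lhs => rw [← hm]
        rw [integral_map hΦ.aemeasurable hf.aestronglyMeasurable, integral_prod _ (hfi _)]
      rw [hinv μ hμ, hinv μ' hμ']
      have hl' : ∀ x y, ‖(∫ z, f (Φ (x, z)) ∂ν) - ∫ z, f (Φ (y, z)) ∂ν‖ ≤ (K * ρ) * ‖x - y‖ := by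
        intro x y
        rw [← integral_sub (hfx x) (hfx y)]
        have : ‖∫ z, (f (Φ (x, z)) - f (Φ (y, z))) ∂ν‖ ≤ (K * ρ * ‖x - y‖) * ν.real Set.univ := by
          refine norm_integral_le_of_norm_le_const (Filter.Eventually.of_forall fun z => ?_)
          calc _ ≤ K * ‖Φ (x, z) - Φ (y, z)‖ := hl _ _
            _ ≤ K * (ρ * ‖x - y‖) := by gcongr; exact hlip _ _ _
            _ = _ := by ring
        simpa using this
      have hc : Continuous fun x => ∫ z, f (Φ (x, z)) ∂ν := by
        refine (LipschitzWith.of_dist_le_mul (K := (K * ρ).toNNReal) fun x y => ?_).continuous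
        rw [dist_eq_norm, dist_eq_norm, Real.coe_toNNReal _ (by positivity)]
        exact hl' x y
      have := ih (K * ρ) (by positivity) _ hc (fun x => ?_) hl'
      · convert this using 5; ring
      · have : ‖∫ z, f (Φ (x, z)) ∂ν‖ ≤ 1 * ν.real Set.univ :=
          norm_integral_le_of_norm_le_const (Filter.Eventually.of_forall fun z => hb _)
        simpa using this
  have lim : ∀ K : ℝ, 0 ≤ K → Filter.Tendsto
      (fun n : ℕ => ∫ p, min 2 (K * ρ ^ n * ‖p.1 - p.2‖) ∂(μ.prod μ')) Filter.atTop (nhds 0) := by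
    intro K hK
    have : (0:ℝ) = ∫ p : E × E, (0:ℝ) ∂(μ.prod μ') := by simp
    rw [this]
    refine tendsto_integral_of_dominated_convergence (fun _ => 2) (fun n => by fun_prop)
      (integrable_const _) (fun n => Filter.Eventually.of_forall fun p => ?_)
      (Filter.Eventually.of_forall fun p => ?_)
    · rw [Real.norm_of_nonneg (le_min (by norm_num) (by positivity))]
      exact min_le_left _ _
    · have h1 : Filter.Tendsto (fun n : ℕ => K * ρ ^ n * ‖p.1 - p.2‖) Filter.atTop (nhds 0) := by
        have := ((tendsto_pow_atTop_nhds_zero_of_lt_one hρ0 hρ).const_mul K).mul_const ‖p.1 - p.2‖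
        simpa using this
      have := (tendsto_const_nhds (x := (2:ℝ))).min h1
      simpa using this
  refine Measure.ext_of_charFun (funext fun t => ?_)
  have hlipexp : ∀ x y : E, ‖Complex.exp ((⟪x, t⟫ : ℝ) * Complex.I) -
      Complex.exp ((⟪y, t⟫ : ℝ) * Complex.I)‖ ≤ ‖t‖ * ‖x - y‖ := by
    intro x y
    have h1 : Complex.exp ((⟪x, t⟫ : ℝ) * Complex.I) - Complex.exp ((⟪y, t⟫ : ℝ) * Complex.I)
      = Complex.exp ((⟪y, t⟫ : ℝ) * Complex.I) *
        (Complex.exp (Complex.I * ((⟪x - y, t⟫ : ℝ))) - 1) := by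
      rw [mul_sub, ← Complex.exp_add, inner_sub_left]
      push_cast; ring_nf
    rw [h1, norm_mul, Complex.norm_exp_ofReal_mul_I, one_mul]
    refine (Real.norm_exp_I_mul_ofReal_sub_one_le).trans ?_
    rw [mul_comm]; exact norm_inner_le_norm _ _
  have hz : ‖charFun μ t - charFun μ' t‖ ≤ 0 := by
    refine ge_of_tendsto (lim ‖t‖ (norm_nonneg _)) (Filter.Eventually.of_forall fun n => ?_)
    rw [charFun_apply, charFun_apply]
    exact step n ‖t‖ (norm_nonneg _) _ (by fun_prop)
      (fun x => (Complex.norm_exp_ofReal_mul_I _).le) hlipexp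
  exact sub_eq_zero.1 (norm_le_zero_iff.1 hz)

/-! ### Taylor expansion of Gaussian smoothings -/

section Gauss
variable {V : Type*} [NormedAddCommGroup V] [InnerProductSpace ℝ V] [FiniteDimensional ℝ V]
  [MeasurableSpace V] [BorelSpace V]

variable (V) in
/-- The density of the standard Gaussian law of `V` with respect to Lebesgue measure. -/
noncomputable def gdens (x : V) : ℝ :=
  ((2 * Real.pi) ^ (Module.finrank ℝ V / 2 : ℝ))⁻¹ * Real.exp (-‖x‖ ^ 2 / 2)

lemma gdens_nonneg (x : V) : 0 ≤ gdens V x := by unfold gdens; positivity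

lemma measurable_gdens : Measurable (gdens V) := by unfold gdens; fun_prop

lemma integrable_gdens : Integrable (gdens V) := by
  have h := (GaussianFourier.integrable_cexp_neg_mul_sq_norm_add (V := V) (b := 1 / 2)
    (by norm_num) 0 0).norm
  refine (h.const_mul ((2 * Real.pi) ^ (Module.finrank ℝ V / 2 : ℝ))⁻¹).congr
    (Filter.Eventually.of_forall fun x => ?_)
  simp only [gdens, Complex.norm_exp]
  congr 2
  simp [← Complex.ofReal_pow]
  ring

lemma stdGaussian_eq_withDensity :
    ProbabilityTheory.stdGaussian V = volume.withDensity (fun x => ENNReal.ofReal (gdens V x)) := by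
  have hfin : IsFiniteMeasure
      ((volume : Measure V).withDensity (fun x => ENNReal.ofReal (gdens V x))) :=
    isFiniteMeasure_withDensity_ofReal integrable_gdens.2
  refine Measure.ext_of_charFun (funext fun t => ?_)
  rw [ProbabilityTheory.charFun_stdGaussian, charFun_apply,
    integral_withDensity_eq_integral_toReal_smul measurable_gdens.ennreal_ofReal
      (Filter.Eventually.of_forall fun x => ENNReal.ofReal_lt_top)]
  have h := GaussianFourier.integral_cexp_neg_mul_sq_norm_add (V := V) (b := 1 / 2)
    (by norm_num) Complex.I t
  have hpi : (0:ℝ) < 2 * Real.pi := by positivity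
  have hc : ((Real.pi : ℂ) / (1 / 2)) ^ (Module.finrank ℝ V / 2 : ℂ) =
      (((2 * Real.pi) ^ (Module.finrank ℝ V / 2 : ℝ) : ℝ) : ℂ) := by
    rw [Complex.ofReal_cpow hpi.le]
    push_cast; congr 1; ring
  have hne : (((2 * Real.pi) ^ (Module.finrank ℝ V / 2 : ℝ) : ℝ) : ℂ) ≠ 0 := by
    exact_mod_cast (Real.rpow_pos_of_pos hpi _).ne'
  have e : ∀ x : V, (ENNReal.ofReal (gdens V x)).toReal • Complex.exp ((⟪x, t⟫ : ℝ) * Complex.I) =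
      (((2 * Real.pi) ^ (Module.finrank ℝ V / 2 : ℝ) : ℝ) : ℂ)⁻¹ *
      Complex.exp (-(1/2) * ‖x‖ ^ 2 + Complex.I * (⟪t, x⟫ : ℝ)) := by
    intro x
    rw [ENNReal.toReal_ofReal (gdens_nonneg x), gdens, Complex.real_smul, Complex.exp_add,
      real_inner_comm]
    push_cast
    rw [mul_assoc]
    congr 3
    · ring
    · ring
  simp_rw [e]
  rw [integral_const_mul]
  rw [h, hc, inv_mul_cancel_left₀ hne, Complex.I_sq]
  congr 1; ring

lemma integral_stdGaussian (F : V → ℝ) :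
    ∫ x, F x ∂(ProbabilityTheory.stdGaussian V) = ∫ x, gdens V x * F x := by
  rw [stdGaussian_eq_withDensity,
    integral_withDensity_eq_integral_toReal_smul measurable_gdens.ennreal_ofReal
      (Filter.Eventually.of_forall fun x => ENNReal.ofReal_lt_top)]
  refine integral_congr_ae (Filter.Eventually.of_forall fun x => ?_)
  simp [ENNReal.toReal_ofReal (gdens_nonneg x)]

/-- The Cameron–Martin formula: translating a Gaussian vector is a change of density. -/
lemma cameron_martin (F : V → ℝ) (a : V) :
    ∫ n, F (n + a) ∂(ProbabilityTheory.stdGaussian V) =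
      ∫ n, F n * Real.exp (⟪n, a⟫ - ‖a‖ ^ 2 / 2) ∂(ProbabilityTheory.stdGaussian V) := by
  rw [integral_stdGaussian, integral_stdGaussian,
    ← integral_add_right_eq_self (fun n => gdens V n * (F n * Real.exp (⟪n, a⟫ - ‖a‖ ^ 2 / 2))) a]
  refine integral_congr_ae (Filter.Eventually.of_forall fun n => ?_)
  simp only [gdens]
  have : Real.exp (-‖n‖ ^ 2 / 2) = Real.exp (-‖n + a‖ ^ 2 / 2) *
      Real.exp (⟪n + a, a⟫ - ‖a‖ ^ 2 / 2) := by
    rw [← Real.exp_add, norm_add_sq_real, inner_add_left, real_inner_self_eq_norm_sq]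
    congr 1; ring
  rw [this]; ring

/-- The weight that dominates all the Gaussian integrands. -/
noncomputable def gwt (n : V) : ℝ := Real.exp (3 * (‖n‖ + 1))

lemma integrable_gwt : Integrable (gwt (V := V)) (ProbabilityTheory.stdGaussian V) := by
  obtain ⟨C, hC, hi⟩ := ProbabilityTheory.IsGaussian.exists_integrable_exp_sq
    (ProbabilityTheory.stdGaussian V)
  refine (hi.const_mul (Real.exp (3 + 9 / (4 * C)))).mono'
    (by unfold gwt; fun_prop) (Filter.Eventually.of_forall fun n => ?_)
  unfold gwt
  rw [Real.norm_of_nonneg (Real.exp_nonneg _), ← Real.exp_add]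
  refine Real.exp_le_exp.2 ?_
  have : 0 ≤ C * (‖n‖ - 3 / (2 * C)) ^ 2 := by positivity
  have h2 : C * (‖n‖ - 3 / (2 * C)) ^ 2 = C * ‖n‖ ^ 2 - 3 * ‖n‖ + 9 / (4 * C) := by
    field_simp; ring
  linarith

lemma cube_le_gwt (n : V) : (‖n‖ + 1) ^ 3 ≤ 6 * Real.exp (‖n‖ + 1) := by
  have := Real.pow_div_factorial_le_exp (‖n‖ + 1) (by positivity) 3
  rw [div_le_iff₀ (by positivity)] at this
  simp [Nat.factorial] at this
  linarith

lemma cube_le_gwt' (n : V) : (‖n‖ + 1) ^ 3 ≤ 6 * gwt n := by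
  refine (cube_le_gwt n).trans ?_
  unfold gwt
  gcongr
  linarith [norm_nonneg n]

lemma exp_rem (x : ℝ) : |Real.exp x - 1 - x - x ^ 2 / 2| ≤ |x| ^ 3 * Real.exp |x| := by
  have := Complex.norm_exp_sub_sum_le_norm_mul_exp (x : ℂ) 3
  have e : Complex.exp (x : ℂ) - ∑ m ∈ Finset.range 3, (x : ℂ) ^ m / m.factorial =
      ((Real.exp x - 1 - x - x ^ 2 / 2 : ℝ) : ℂ) := by
    simp [Finset.sum_range_succ, Nat.factorial]
    ring
  rw [e, Complex.norm_real, Complex.norm_real] at this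
  exact this

/-- Third-order remainder of the Cameron–Martin density: in the direction `a` its expansion is
given by the Hermite polynomials `1`, `⟨n, a⟩` and `(⟨n, a⟩² - ‖a‖²) / 2`. -/
lemma cm_rem (n a : V) (ha : ‖a‖ ≤ 1) :
    |Real.exp (⟪n, a⟫ - ‖a‖ ^ 2 / 2) - 1 - ⟪n, a⟫ - (⟪n, a⟫ ^ 2 - ‖a‖ ^ 2) / 2| ≤
      ‖a‖ ^ 3 * (2 * ((‖n‖ + 1) ^ 3 * Real.exp (‖n‖ + 1))) := by
  set s : ℝ := ⟪n, a⟫ with hs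
  have hs1 : |s| ≤ ‖n‖ * ‖a‖ := abs_real_inner_le_norm n a
  have hr := norm_nonneg n
  have ha0 := norm_nonneg a
  have hx : |s - ‖a‖ ^ 2 / 2| ≤ ‖a‖ * (‖n‖ + 1) := by
    refine (abs_sub _ _).trans ?_
    rw [abs_of_nonneg (show 0 ≤ ‖a‖ ^ 2 / 2 by positivity)]
    nlinarith
  have hx1 : |s - ‖a‖ ^ 2 / 2| ≤ ‖n‖ + 1 := hx.trans (by nlinarith)
  have h1 := exp_rem (s - ‖a‖ ^ 2 / 2)
  have h2 : |s - ‖a‖ ^ 2 / 2| ^ 3 * Real.exp |s - ‖a‖ ^ 2 / 2| ≤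
      (‖a‖ * (‖n‖ + 1)) ^ 3 * Real.exp (‖n‖ + 1) := by gcongr
  have h3 : |-(s * ‖a‖ ^ 2 / 2) + ‖a‖ ^ 4 / 8| ≤ ‖a‖ ^ 3 * (‖n‖ + 1) := by
    refine (abs_add_le _ _).trans ?_
    rw [abs_neg, abs_div, abs_mul, abs_of_nonneg (show 0 ≤ ‖a‖ ^ 2 by positivity),
      abs_of_nonneg (show 0 ≤ ‖a‖ ^ 4 / 8 by positivity), abs_of_pos (show (0:ℝ) < 2 by norm_num)]
    have e1 : |s| * ‖a‖ ^ 2 ≤ ‖n‖ * ‖a‖ * ‖a‖ ^ 2 := by gcongr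
    have e2 : ‖a‖ ^ 4 ≤ ‖a‖ ^ 3 := pow_le_pow_of_le_one ha0 ha (by norm_num)
    have e3 : 0 ≤ ‖a‖ ^ 3 := by positivity
    nlinarith [mul_nonneg hr e3]
  have h4 : ‖n‖ + 1 ≤ (‖n‖ + 1) ^ 3 * Real.exp (‖n‖ + 1) := by
    have e1 : (1:ℝ) ≤ (‖n‖ + 1) ^ 2 := by nlinarith
    have e2 : (1:ℝ) ≤ Real.exp (‖n‖ + 1) := Real.one_le_exp (by linarith)
    calc ‖n‖ + 1 = (‖n‖ + 1) * 1 * 1 := by ring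
      _ ≤ (‖n‖ + 1) * (‖n‖ + 1) ^ 2 * Real.exp (‖n‖ + 1) := by gcongr
      _ = _ := by ring
  have e : Real.exp (s - ‖a‖ ^ 2 / 2) - 1 - s - (s ^ 2 - ‖a‖ ^ 2) / 2 =
      (Real.exp (s - ‖a‖ ^ 2 / 2) - 1 - (s - ‖a‖ ^ 2 / 2) - (s - ‖a‖ ^ 2 / 2) ^ 2 / 2) +
      (-(s * ‖a‖ ^ 2 / 2) + ‖a‖ ^ 4 / 8) := by ring
  rw [e]
  calc _ ≤ _ := abs_add_le _ _
    _ ≤ (‖a‖ * (‖n‖ + 1)) ^ 3 * Real.exp (‖n‖ + 1) + ‖a‖ ^ 3 * (‖n‖ + 1) :=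
        add_le_add (h1.trans h2) h3
    _ ≤ (‖a‖ * (‖n‖ + 1)) ^ 3 * Real.exp (‖n‖ + 1) +
        ‖a‖ ^ 3 * ((‖n‖ + 1) ^ 3 * Real.exp (‖n‖ + 1)) := by gcongr
    _ = _ := by ring

variable (V) in
/-- The constant of the Gaussian Taylor expansion `gauss_taylor`. -/
noncomputable def gK : ℝ := 12 * ∫ n, gwt n ∂(ProbabilityTheory.stdGaussian V)

lemma one_le_int_gwt : 1 ≤ ∫ n, gwt n ∂(ProbabilityTheory.stdGaussian V) := by
  have : ∫ _, (1:ℝ) ∂(ProbabilityTheory.stdGaussian V) ≤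
      ∫ n, gwt n ∂(ProbabilityTheory.stdGaussian V) := by
    refine integral_mono (integrable_const _) integrable_gwt fun n => ?_
    exact Real.one_le_exp (by positivity)
  simpa using this

/-- Gaussian smoothing of a `Λ`-Lipschitz function has a second order Taylor expansion with cubic
remainder, all constants being proportional to `Λ`. The coefficients are Gaussian integrals against
Hermite polynomials, read off from the expansion of the Cameron–Martin density. -/
lemma gauss_taylor (g : V → ℝ) (Λ : ℝ≥0) (hg : LipschitzWith Λ g) :
    ∃ (ℓ : V →ₗ[ℝ] ℝ) (b : V →ₗ[ℝ] V →ₗ[ℝ] ℝ), (∀ u v, |b u v| ≤ gK V * Λ * (‖u‖ * ‖v‖)) ∧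
      ∀ a, |(∫ n, g (n + a) ∂(ProbabilityTheory.stdGaussian V)) -
        (∫ n, g n ∂(ProbabilityTheory.stdGaussian V)) - ℓ a - b a a| ≤ gK V * Λ * ‖a‖ ^ 3 := by
  set G := ProbabilityTheory.stdGaussian V
  set I := ∫ n, gwt n ∂G with hI
  have hI1 : 1 ≤ I := one_le_int_gwt
  have hK : gK V = 12 * I := rfl
  have hgc : Continuous g := hg.continuous
  set D : V → ℝ := fun n => g n - g 0 with hD
  have hDc : Continuous D := by fun_prop
  have hDb : ∀ n, |D n| ≤ Λ * ‖n‖ := fun n => by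
    simpa [Real.dist_eq, D] using hg.dist_le_mul n 0
  have dom : ∀ (F : V → ℝ) (C : ℝ), Continuous F → (∀ n, |F n| ≤ C * gwt n) →
      Integrable F G ∧ |∫ n, F n ∂G| ≤ C * I := by
    intro F C hF hb
    have hi : Integrable F G := (integrable_gwt.const_mul C).mono' hF.aestronglyMeasurable
      (Filter.Eventually.of_forall hb)
    refine ⟨hi, ?_⟩
    rw [hI, ← integral_const_mul]
    rw [← Real.norm_eq_abs]
    exact norm_integral_le_of_norm_le (integrable_gwt.const_mul C)
      (Filter.Eventually.of_forall fun n => hb n)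
  have hΛ : (0:ℝ) ≤ Λ := Λ.2
  -- the linear coefficient
  have hl : ∀ a, Integrable (fun n => D n * ⟪n, a⟫) G ∧
      |∫ n, D n * ⟪n, a⟫ ∂G| ≤ 6 * Λ * ‖a‖ * I := by
    intro a
    refine dom _ _ (by fun_prop) fun n => ?_
    rw [abs_mul]
    calc |D n| * |⟪n, a⟫| ≤ (Λ * ‖n‖) * (‖n‖ * ‖a‖) := by
          gcongr
          · exact hDb n
          · exact abs_real_inner_le_norm n a
      _ = Λ * ‖a‖ * ‖n‖ ^ 2 := by ring
      _ ≤ Λ * ‖a‖ * (6 * gwt n) := by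
          gcongr
          refine le_trans ?_ (cube_le_gwt' n)
          nlinarith [norm_nonneg n, pow_nonneg (norm_nonneg n) 3, sq_nonneg ‖n‖]
      _ = _ := by ring
  -- the quadratic coefficient
  have hq : ∀ u v, Integrable (fun n => D n * (⟪n, u⟫ * ⟪n, v⟫ - ⟪u, v⟫) / 2) G ∧
      |∫ n, D n * (⟪n, u⟫ * ⟪n, v⟫ - ⟪u, v⟫) / 2 ∂G| ≤ 3 * Λ * (‖u‖ * ‖v‖) * I := by
    intro u v
    refine dom _ _ (by fun_prop) fun n => ?_
    rw [abs_div, abs_mul, abs_two]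
    have h1 : |(⟪n, u⟫ * ⟪n, v⟫ - ⟪u, v⟫ : ℝ)| ≤ (‖n‖ ^ 2 + 1) * (‖u‖ * ‖v‖) := by
      refine (abs_sub _ _).trans ?_
      rw [abs_mul]
      calc _ ≤ (‖n‖ * ‖u‖) * (‖n‖ * ‖v‖) + ‖u‖ * ‖v‖ := by
            gcongr <;> exact abs_real_inner_le_norm _ _
        _ = _ := by ring
    calc |D n| * |(⟪n, u⟫ * ⟪n, v⟫ - ⟪u, v⟫ : ℝ)| / 2
        ≤ (Λ * ‖n‖) * ((‖n‖ ^ 2 + 1) * (‖u‖ * ‖v‖)) / 2 := by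
          gcongr
          exact hDb n
      _ = Λ * (‖u‖ * ‖v‖) / 2 * (‖n‖ * (‖n‖ ^ 2 + 1)) := by ring
      _ ≤ Λ * (‖u‖ * ‖v‖) / 2 * (6 * gwt n) := by
          refine mul_le_mul_of_nonneg_left ?_ (by positivity)
          refine le_trans ?_ (cube_le_gwt' n)
          nlinarith [norm_nonneg n, pow_nonneg (norm_nonneg n) 3, sq_nonneg ‖n‖]
      _ = _ := by ring
  let ℓ : V →ₗ[ℝ] ℝ :=
    { toFun := fun a => ∫ n, D n * ⟪n, a⟫ ∂G
      map_add' := fun a b => by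
        rw [← integral_add (hl a).1 (hl b).1]
        simp only [inner_add_right, mul_add]
      map_smul' := fun c a => by
        rw [RingHom.id_apply, smul_eq_mul, ← integral_const_mul]
        simp only [real_inner_smul_right, mul_left_comm] }
  let b : V →ₗ[ℝ] V →ₗ[ℝ] ℝ := LinearMap.mk₂ ℝ
    (fun u v => ∫ n, D n * (⟪n, u⟫ * ⟪n, v⟫ - ⟪u, v⟫) / 2 ∂G)
    (fun u u' v => by
      rw [← integral_add (hq u v).1 (hq u' v).1]
      congr 1; ext n; simp only [inner_add_right, inner_add_left]; ring)
    (fun c u v => by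
      rw [smul_eq_mul, ← integral_const_mul]
      congr 1; ext n; simp only [real_inner_smul_right, real_inner_smul_left]; ring)
    (fun u v v' => by
      rw [← integral_add (hq u v).1 (hq u v').1]
      congr 1; ext n; simp only [inner_add_right]; ring)
    (fun c u v => by
      rw [smul_eq_mul, ← integral_const_mul]
      congr 1; ext n; simp only [real_inner_smul_right]; ring)
  have hℓ : ∀ a, ℓ a = ∫ n, D n * ⟪n, a⟫ ∂G := fun a => rfl
  have hb : ∀ u v, b u v = ∫ n, D n * (⟪n, u⟫ * ⟪n, v⟫ - ⟪u, v⟫) / 2 ∂G := fun u v => rfl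
  refine ⟨ℓ, b, fun u v => ?_, fun a => ?_⟩
  · rw [hb, hK]
    refine (hq u v).2.trans ?_
    have : 0 ≤ Λ * (‖u‖ * ‖v‖) * I := by positivity
    nlinarith
  have hgi : ∀ a, Integrable (fun n => g (n + a)) G := by
    intro a
    have : Integrable (fun n => g (n + a) - g a) G := by
      refine (dom _ (6 * Λ) (by fun_prop) fun n => ?_).1
      have h1 : |g (n + a) - g a| ≤ Λ * ‖n‖ := by
        simpa [Real.dist_eq, dist_eq_norm] using hg.dist_le_mul (n + a) a
      have h2 : ‖n‖ ≤ 6 * gwt n := by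
        refine le_trans ?_ (cube_le_gwt' n)
        nlinarith [norm_nonneg n, pow_nonneg (norm_nonneg n) 3, sq_nonneg ‖n‖]
      calc _ ≤ _ := h1
        _ ≤ Λ * (6 * gwt n) := by gcongr
        _ = _ := by ring
    exact (this.add (integrable_const (g a))).congr
      (Filter.Eventually.of_forall fun n => by simp)
  have hgi0 : Integrable g G := by simpa using hgi 0
  -- the expansion of the Cameron–Martin density is only useful near the origin
  rcases le_or_gt ‖a‖ 1 with ha | ha
  · have e1 : (∫ n, g (n + a) ∂G) - ∫ n, g n ∂G =
        ∫ n, D n * (Real.exp (⟪n, a⟫ - ‖a‖ ^ 2 / 2) - 1) ∂G := by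
      have h1 : ∫ n, D (n + a) ∂G = (∫ n, g (n + a) ∂G) - g 0 := by
        simp only [hD]
        rw [integral_sub (hgi a) (integrable_const _)]; simp
      have h2 : ∫ n, D n ∂G = (∫ n, g n ∂G) - g 0 := by
        simp only [hD]
        rw [integral_sub hgi0 (integrable_const _)]; simp
      have h3 := cameron_martin D a
      have hDi : Integrable D G := hgi0.sub (integrable_const _)
      have h4 : Integrable (fun n => D n * Real.exp (⟪n, a⟫ - ‖a‖ ^ 2 / 2)) G := by
        refine (dom _ Λ (by fun_prop) fun n => ?_).1
        rw [abs_mul, Real.abs_exp]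
        have e1 : ‖n‖ ≤ Real.exp (‖n‖ + 1) :=
          le_trans (by linarith) (Real.add_one_le_exp (‖n‖ + 1))
        have e2 : ⟪n, a⟫ - ‖a‖ ^ 2 / 2 ≤ 2 * (‖n‖ + 1) := by
          have := real_inner_le_norm n a
          nlinarith [norm_nonneg n, norm_nonneg a]
        calc |D n| * Real.exp (⟪n, a⟫ - ‖a‖ ^ 2 / 2)
            ≤ (Λ * Real.exp (‖n‖ + 1)) * Real.exp (2 * (‖n‖ + 1)) := by
              gcongr
              exact (hDb n).trans (by gcongr)
          _ = Λ * gwt n := by unfold gwt; rw [mul_assoc, ← Real.exp_add]; ring_nf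
      simp_rw [mul_sub, mul_one]
      rw [integral_sub h4 hDi, ← h3, h1, h2]; ring
    have h5 : Integrable (fun n => D n * (Real.exp (⟪n, a⟫ - ‖a‖ ^ 2 / 2) - 1 - ⟪n, a⟫ -
        (⟪n, a⟫ ^ 2 - ‖a‖ ^ 2) / 2)) G ∧ |∫ n, D n * (Real.exp (⟪n, a⟫ - ‖a‖ ^ 2 / 2) - 1 - ⟪n, a⟫ -
        (⟪n, a⟫ ^ 2 - ‖a‖ ^ 2) / 2) ∂G| ≤ 12 * Λ * ‖a‖ ^ 3 * I := by
      refine dom _ _ (by fun_prop) fun n => ?_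
      rw [abs_mul]
      have e1 : ‖n‖ ≤ Real.exp (‖n‖ + 1) :=
        le_trans (by linarith) (Real.add_one_le_exp (‖n‖ + 1))
      calc _ ≤ (Λ * Real.exp (‖n‖ + 1)) *
            (‖a‖ ^ 3 * (2 * ((‖n‖ + 1) ^ 3 * Real.exp (‖n‖ + 1)))) := by
            gcongr
            · exact (hDb n).trans (by gcongr)
            · exact cm_rem n a ha
        _ ≤ (Λ * Real.exp (‖n‖ + 1)) *
            (‖a‖ ^ 3 * (2 * ((6 * Real.exp (‖n‖ + 1)) * Real.exp (‖n‖ + 1)))) := by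
            gcongr; exact cube_le_gwt n
        _ = 12 * Λ * ‖a‖ ^ 3 *
            (Real.exp (‖n‖ + 1) * Real.exp (‖n‖ + 1) * Real.exp (‖n‖ + 1)) := by ring
        _ = 12 * Λ * ‖a‖ ^ 3 * gwt n := by
            unfold gwt; rw [← Real.exp_add, ← Real.exp_add]; ring_nf
    have e2 : (∫ n, g (n + a) ∂G) - (∫ n, g n ∂G) - ℓ a - b a a =
        ∫ n, D n * (Real.exp (⟪n, a⟫ - ‖a‖ ^ 2 / 2) - 1 - ⟪n, a⟫ -
        (⟪n, a⟫ ^ 2 - ‖a‖ ^ 2) / 2) ∂G := by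
      rw [e1, hℓ, hb, ← integral_sub _ (hl a).1, ← integral_sub _ (hq a a).1]
      · congr 1; ext n; rw [real_inner_self_eq_norm_sq]; ring
      · refine (h5.1.add (hq a a).1).congr (Filter.Eventually.of_forall fun n => ?_)
        simp only [Pi.add_apply]; rw [real_inner_self_eq_norm_sq]; ring
      · refine ((h5.1.add (hq a a).1).add (hl a).1).congr (Filter.Eventually.of_forall fun n => ?_)
        simp only [Pi.add_apply]; rw [real_inner_self_eq_norm_sq]; ring
    rw [e2, hK]
    refine h5.2.trans (le_of_eq ?_); ring
  -- for `‖a‖ > 1` each of the terms is separately at most of order `‖a‖ ^ 3`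
  · have h1 : |(∫ n, g (n + a) ∂G) - ∫ n, g n ∂G| ≤ Λ * ‖a‖ := by
      rw [← integral_sub (hgi a) hgi0]
      have : ‖∫ n, (g (n + a) - g n) ∂G‖ ≤ (Λ * ‖a‖) * G.real Set.univ := by
        refine norm_integral_le_of_norm_le_const (Filter.Eventually.of_forall fun n => ?_)
        simpa [Real.dist_eq, dist_eq_norm] using hg.dist_le_mul (n + a) n
      simpa using this
    have h2 := (hl a).2
    have h3 := (hq a a).2
    rw [← hℓ] at h2
    rw [← hb] at h3
    have t := abs_sub ((∫ n, g (n + a) ∂G) - (∫ n, g n ∂G) - ℓ a) (b a a)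
    have t' := abs_sub ((∫ n, g (n + a) ∂G) - (∫ n, g n ∂G)) (ℓ a)
    have e1 : ‖a‖ ≤ ‖a‖ ^ 3 := le_self_pow₀ ha.le (by norm_num)
    have e2 : ‖a‖ * ‖a‖ ≤ ‖a‖ ^ 3 := by
      calc ‖a‖ * ‖a‖ = ‖a‖ ^ 2 := by ring
        _ ≤ _ := pow_le_pow_right₀ ha.le (by norm_num)
    rw [hK]
    calc _ ≤ Λ * ‖a‖ * 1 + 6 * Λ * ‖a‖ * I + 3 * Λ * (‖a‖ * ‖a‖) * I := by linarith
      _ ≤ Λ * ‖a‖ ^ 3 * I + 6 * Λ * ‖a‖ ^ 3 * I + 3 * Λ * (‖a‖ ^ 3) * I := by gcongr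
      _ ≤ 12 * I * Λ * ‖a‖ ^ 3 := by
        have : 0 ≤ Λ * ‖a‖ ^ 3 * I := by positivity
        nlinarith

end Gauss

/-! ### Comparison of averages, and square roots of covariances -/

section Compare
variable {V : Type*} [NormedAddCommGroup V] [InnerProductSpace ℝ V] [FiniteDimensional ℝ V]
  [MeasurableSpace V] [BorelSpace V]

lemma gK_nonneg : 0 ≤ gK V := by
  have := one_le_int_gwt (V := V)
  unfold gK; linarith

lemma integrable_lip_of_integrable_norm {μ : Measure V} [IsProbabilityMeasure μ]
    (hμ : Integrable (fun u => ‖u‖) μ) {g : V → ℝ} {Λ : ℝ≥0} (hg : LipschitzWith Λ g) :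
    Integrable g μ := by
  refine Integrable.mono' ((integrable_const |g 0|).add (hμ.const_mul Λ))
    hg.continuous.aestronglyMeasurable (Filter.Eventually.of_forall fun u => ?_)
  have h := hg.dist_le_mul u 0
  rw [Real.dist_eq, dist_zero_right] at h
  have := abs_sub_abs_le_abs_sub (g u) (g 0)
  simp only [Pi.add_apply, Real.norm_eq_abs]
  linarith

lemma integrable_norm_std : Integrable (fun u : V => ‖u‖) (ProbabilityTheory.stdGaussian V) :=
  (ProbabilityTheory.IsGaussian.memLp_id (ProbabilityTheory.stdGaussian V) 1
    (by simp)).integrable le_rfl |>.norm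

lemma integrable_pow_of_cube {μ : Measure V} [IsProbabilityMeasure μ]
    (hμ : Integrable (fun u => ‖u‖ ^ 3) μ) {k : ℕ} (hk : k ≤ 3) :
    Integrable (fun u => ‖u‖ ^ k) μ := by
  refine Integrable.mono' ((integrable_const 1).add hμ) (by fun_prop)
    (Filter.Eventually.of_forall fun u => ?_)
  simp only [Pi.add_apply, Real.norm_eq_abs, abs_pow, abs_norm]
  rcases le_total ‖u‖ 1 with h | h
  · have := pow_le_one₀ (n := k) (norm_nonneg u) h
    have : 0 ≤ ‖u‖ ^ 3 := by positivity
    linarith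
  · have := pow_le_pow_right₀ h hk
    linarith

/-- Averages of a smoothed Lipschitz function against two centered laws with nearly equal
covariances differ by third-order terms and by the covariance defect `δ`. -/
lemma step_compare {E : Type*} [NormedAddCommGroup E] [InnerProductSpace ℝ E]
    [FiniteDimensional ℝ E] [MeasurableSpace E] [BorelSpace E]
    (g : V → ℝ) (Λ : ℝ≥0) (hg : LipschitzWith Λ g) (R : E →L[ℝ] V)
    (ν₁ ν₂ : Measure E) [IsProbabilityMeasure ν₁] [IsProbabilityMeasure ν₂]
    (h₁ : Integrable (fun u => ‖u‖ ^ 3) ν₁) (h₂ : Integrable (fun u => ‖u‖ ^ 3) ν₂)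
    (hm₁ : ∫ u, u ∂ν₁ = 0) (hm₂ : ∫ u, u ∂ν₂ = 0) (δ : ℝ)
    (hδ : ∀ (β : E →ₗ[ℝ] E →ₗ[ℝ] ℝ) (K : ℝ), (∀ u v, |β u v| ≤ K * (‖u‖ * ‖v‖)) →
      |(∫ u, β u u ∂ν₁) - ∫ u, β u u ∂ν₂| ≤ K * δ) :
    |(∫ u, ∫ n, g (n + R u) ∂ProbabilityTheory.stdGaussian V ∂ν₁)
      - ∫ u, ∫ n, g (n + R u) ∂ProbabilityTheory.stdGaussian V ∂ν₂|
      ≤ gK V * Λ * (‖R‖ ^ 3 * ((∫ u, ‖u‖ ^ 3 ∂ν₁) + ∫ u, ‖u‖ ^ 3 ∂ν₂) + ‖R‖ ^ 2 * δ) := by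
  obtain ⟨ℓ, b, hb, hT⟩ := gauss_taylor g Λ hg
  set F : V → ℝ := fun a => ∫ n, g (n + a) ∂ProbabilityTheory.stdGaussian V with hF
  have hFlip : LipschitzWith Λ F := by
    refine LipschitzWith.of_dist_le_mul fun a a' => ?_
    have hi : ∀ a, Integrable (fun n => g (n + a)) (ProbabilityTheory.stdGaussian V) := fun a =>
      integrable_lip_of_integrable_norm integrable_norm_std
        (hg.comp ((isometry_add_right a).lipschitz)) (Λ := Λ * 1)
    rw [Real.dist_eq, hF]
    simp only
    rw [← integral_sub (hi a) (hi a')]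
    have hb : ∀ n, ‖g (n + a) - g (n + a')‖ ≤ Λ * dist a a' := fun n => by
      have := hg.dist_le_mul (n + a) (n + a')
      rwa [dist_add_left, Real.dist_eq] at this
    have := norm_integral_le_of_norm_le_const (μ := ProbabilityTheory.stdGaussian V)
      (Filter.Eventually.of_forall hb)
    rwa [probReal_univ, mul_one] at this
  set β : E →ₗ[ℝ] E →ₗ[ℝ] ℝ := b.compl₁₂ (R : E →ₗ[ℝ] V) (R : E →ₗ[ℝ] V) with hβ
  have hβa : ∀ u v, β u v = b (R u) (R v) := fun u v => rfl
  have hβc : Continuous (fun u => β u u) := by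
    let bc : V →L[ℝ] V →L[ℝ] ℝ := LinearMap.mkContinuous₂ b (gK V * Λ) (fun u v => by
      rw [Real.norm_eq_abs]; simpa [mul_assoc] using hb u v)
    have : (fun u => β u u) = fun u => bc (R u) (R u) := rfl
    rw [this]; fun_prop
  have hK0 : 0 ≤ gK V * Λ := mul_nonneg gK_nonneg Λ.2
  have hβb : ∀ u v, |β u v| ≤ (gK V * Λ * ‖R‖ ^ 2) * (‖u‖ * ‖v‖) := by
    intro u v
    rw [hβa]
    refine (hb _ _).trans ?_
    calc gK V * Λ * (‖R u‖ * ‖R v‖) ≤ gK V * Λ * ((‖R‖ * ‖u‖) * (‖R‖ * ‖v‖)) := by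
          gcongr <;> exact R.le_opNorm _
      _ = _ := by ring
  have key : ∀ (ρ : Measure E) [IsProbabilityMeasure ρ], Integrable (fun u => ‖u‖ ^ 3) ρ →
      ∫ u, u ∂ρ = 0 → |(∫ u, F (R u) ∂ρ) - F 0 - ∫ u, β u u ∂ρ| ≤
        gK V * Λ * (‖R‖ ^ 3 * ∫ u, ‖u‖ ^ 3 ∂ρ) := by
    intro ρ _ h3 hm
    have h1 : Integrable (fun u : E => ‖u‖) ρ := by
      simpa using integrable_pow_of_cube h3 (k := 1) (by norm_num)
    have h2 := integrable_pow_of_cube h3 (k := 2) (by norm_num)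
    have h1' : Integrable (fun u : E => u) ρ := (integrable_norm_iff (by fun_prop)).1 h1
    have iF : Integrable (fun u => F (R u)) ρ :=
      integrable_lip_of_integrable_norm h1 (hFlip.comp R.lipschitz)
    have iβ : Integrable (fun u => β u u) ρ :=
      Integrable.mono' (h2.const_mul (gK V * Λ * ‖R‖ ^ 2)) hβc.aestronglyMeasurable
        (Filter.Eventually.of_forall fun u => by
          rw [Real.norm_eq_abs, pow_two ‖u‖]; exact hβb u u)
    have il0 : ∫ u, ℓ (R u) ∂ρ = 0 := by
      let ℓc : E →L[ℝ] ℝ := LinearMap.toContinuousLinearMap (ℓ ∘ₗ (R : E →ₗ[ℝ] V))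
      have := ℓc.integral_comp_comm h1'
      rw [hm, map_zero] at this
      exact this
    have il : Integrable (fun u => ℓ (R u)) ρ := by
      let ℓc : E →L[ℝ] ℝ := LinearMap.toContinuousLinearMap (ℓ ∘ₗ (R : E →ₗ[ℝ] V))
      exact ℓc.integrable_comp h1'
    have e : (∫ u, F (R u) ∂ρ) - F 0 - ∫ u, β u u ∂ρ
        = ∫ u, (F (R u) - F 0 - ℓ (R u) - β u u) ∂ρ := by
      have i1 : Integrable (fun u => F (R u) - F 0) ρ := iF.sub (integrable_const _)
      have i2 : Integrable (fun u => F (R u) - F 0 - ℓ (R u)) ρ := i1.sub il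
      rw [integral_sub i2 iβ, integral_sub i1 il, integral_sub iF (integrable_const _), il0]
      simp
    rw [e]
    calc |∫ u, (F (R u) - F 0 - ℓ (R u) - β u u) ∂ρ|
        ≤ ∫ u, gK V * Λ * (‖R‖ ^ 3 * ‖u‖ ^ 3) ∂ρ := by
          rw [← Real.norm_eq_abs]
          refine norm_integral_le_of_norm_le ((h3.const_mul _).const_mul _)
            (Filter.Eventually.of_forall fun u => ?_)
          have h := hT (R u)
          have hF0 : F 0 = ∫ n, g n ∂ProbabilityTheory.stdGaussian V := by simp [hF]
          rw [← hF0] at h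
          refine h.trans ?_
          rw [← mul_pow]
          gcongr
          exact R.le_opNorm u
      _ = _ := by rw [integral_const_mul, integral_const_mul]
  have k1 := key ν₁ h₁ hm₁
  have k2 := key ν₂ h₂ hm₂
  have k3 := hδ β _ hβb
  rw [abs_le] at *
  have : gK V * Λ * (‖R‖ ^ 3 * ((∫ u, ‖u‖ ^ 3 ∂ν₁) + ∫ u, ‖u‖ ^ 3 ∂ν₂) + ‖R‖ ^ 2 * δ) =
    gK V * Λ * (‖R‖ ^ 3 * ∫ u, ‖u‖ ^ 3 ∂ν₁) + gK V * Λ * (‖R‖ ^ 3 * ∫ u, ‖u‖ ^ 3 ∂ν₂) +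
    gK V * Λ * ‖R‖ ^ 2 * δ := by ring
  rw [this]
  constructor <;> linarith [k1.1, k1.2, k2.1, k2.2, k3.1, k3.2]

/-- A sum of two independent linear images of standard Gaussians is a linear image of a standard
Gaussian as soon as the covariance forms add up. -/
lemma gauss_add (L₁ L₂ L₃ : V →L[ℝ] V)
    (h : ∀ t, ‖L₁.adjoint t‖ ^ 2 + ‖L₂.adjoint t‖ ^ 2 = ‖L₃.adjoint t‖ ^ 2) :
    Measure.map (fun p : V × V => L₁ p.1 + L₂ p.2)
      ((ProbabilityTheory.stdGaussian V).prod (ProbabilityTheory.stdGaussian V)) =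
      Measure.map L₃ (ProbabilityTheory.stdGaussian V) := by
  have hm : Measurable (fun p : V × V => L₁ p.1 + L₂ p.2) := by fun_prop
  have : IsProbabilityMeasure (Measure.map (fun p : V × V => L₁ p.1 + L₂ p.2)
      ((ProbabilityTheory.stdGaussian V).prod (ProbabilityTheory.stdGaussian V))) :=
    Measure.isProbabilityMeasure_map hm.aemeasurable
  have : IsProbabilityMeasure (Measure.map L₃ (ProbabilityTheory.stdGaussian V)) :=
    Measure.isProbabilityMeasure_map (by fun_prop)
  refine Measure.ext_of_charFun (funext fun t => ?_)
  rw [charFun_apply, charFun_apply, integral_map hm.aemeasurable (by fun_prop),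
    integral_map (by fun_prop) (by fun_prop)]
  have e3 : ∀ x, ⟪L₃ x, t⟫ = ⟪x, L₃.adjoint t⟫ := fun x =>
    (ContinuousLinearMap.adjoint_inner_right L₃ x t).symm
  have e12 : ∀ p : V × V, Complex.exp ((⟪L₁ p.1 + L₂ p.2, t⟫ : ℝ) * Complex.I) =
      Complex.exp ((⟪p.1, L₁.adjoint t⟫ : ℝ) * Complex.I) *
      Complex.exp ((⟪p.2, L₂.adjoint t⟫ : ℝ) * Complex.I) := by
    intro p
    rw [ContinuousLinearMap.adjoint_inner_right, ContinuousLinearMap.adjoint_inner_right,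
      ← Complex.exp_add, inner_add_left]
    push_cast; ring_nf
  simp_rw [e3, e12]
  rw [integral_prod_mul (fun x => Complex.exp ((⟪x, L₁.adjoint t⟫ : ℝ) * Complex.I))
    (fun x => Complex.exp ((⟪x, L₂.adjoint t⟫ : ℝ) * Complex.I)),
    ← charFun_apply, ← charFun_apply, ← charFun_apply,
    ProbabilityTheory.charFun_stdGaussian, ProbabilityTheory.charFun_stdGaussian,
    ProbabilityTheory.charFun_stdGaussian, ← Complex.exp_add]
  congr 1
  have := h t
  rw [← Complex.ofReal_pow, ← Complex.ofReal_pow, ← Complex.ofReal_pow, ← this]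
  push_cast; ring

end Compare

section Sqrt
open scoped MatrixOrder
variable {d : ℕ}

/-- A positive semidefinite symmetric operator is the square of a symmetric operator, stated through
the quadratic form. -/
lemma exists_sqrt (Q : EuclideanSpace ℝ (Fin d) →L[ℝ] EuclideanSpace ℝ (Fin d))
    (hsym : Q.adjoint = Q) (hpos : ∀ t, 0 ≤ ⟪Q t, t⟫) :
    ∃ L : EuclideanSpace ℝ (Fin d) →L[ℝ] EuclideanSpace ℝ (Fin d),
      L.adjoint = L ∧ ∀ t, ‖L t‖ ^ 2 = ⟪Q t, t⟫ := by
  let Φ := Matrix.toEuclideanCLM (n := Fin d) (𝕜 := ℝ)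
  obtain ⟨Γ, rfl⟩ : ∃ Γ, Φ Γ = Q := ⟨Φ.symm Q, Φ.apply_symm_apply Q⟩
  have hstar : ∀ X, (Φ X).adjoint = Φ Xᴴ := fun X => by
    have := map_star Φ X
    rw [ContinuousLinearMap.star_eq_adjoint] at this
    exact this.symm
  have hH : Γ.IsHermitian := by
    rw [hstar] at hsym
    exact Φ.injective hsym
  have hP : Γ.PosSemidef := by
    refine PosSemidef.of_dotProduct_mulVec_nonneg hH fun x => ?_
    have := hpos (WithLp.toLp 2 x)
    rw [real_inner_comm] at this
    have h2 := Matrix.inner_toEuclideanCLM Γ (WithLp.toLp 2 x) (WithLp.toLp 2 x)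
    rw [h2] at this
    simpa [dotProduct_comm] using this
  have hsa : IsSelfAdjoint (Φ (CFC.sqrt Γ)) := (CFC.sqrt_nonneg Γ).isSelfAdjoint.map _
  refine ⟨Φ (CFC.sqrt Γ), hsa.adjoint_eq, fun t => ?_⟩
  rw [← real_inner_self_eq_norm_sq, ← ContinuousLinearMap.adjoint_inner_left, hsa.adjoint_eq,
    ← mul_apply_eq_comp, ← map_mul, CFC.sqrt_mul_sqrt_self _ hP.nonneg]

/-- A square root of a uniformly positive symmetric operator is invertible, with the expected
operator norm bounds. -/
lemma exists_sqrt_inv (Q : EuclideanSpace ℝ (Fin d) →L[ℝ] EuclideanSpace ℝ (Fin d))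
    (hsym : Q.adjoint = Q) {c C : ℝ} (hc : 0 < c) (hC : 0 ≤ C)
    (hlo : ∀ t, c * ‖t‖ ^ 2 ≤ ⟪Q t, t⟫) (hup : ∀ t, ⟪Q t, t⟫ ≤ C * ‖t‖ ^ 2) :
    ∃ L Li : EuclideanSpace ℝ (Fin d) →L[ℝ] EuclideanSpace ℝ (Fin d),
      (∀ t, ‖L.adjoint t‖ ^ 2 = ⟪Q t, t⟫) ∧ (∀ t, L (Li t) = t) ∧ ‖L‖ ≤ Real.sqrt C ∧
      ‖Li‖ ≤ Real.sqrt (1 / c) := by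
  obtain ⟨L, hLa, hL⟩ := exists_sqrt Q hsym (fun t => (by positivity : 0 ≤ c * ‖t‖ ^ 2).trans (hlo t))
  have hinj : Function.Injective (L : EuclideanSpace ℝ (Fin d) →ₗ[ℝ] EuclideanSpace ℝ (Fin d)) := by
    rw [injective_iff_map_eq_zero]
    intro t ht
    have h := hlo t
    have ht' : L t = 0 := ht
    rw [← hL, ht', norm_zero] at h
    have h2 : ‖t‖ ^ 2 ≤ 0 := by
      by_contra hcon
      push Not at hcon
      have := mul_pos hc hcon
      norm_num at h
      linarith
    have : ‖t‖ = 0 := by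
      have := sq_nonneg ‖t‖
      exact pow_eq_zero_iff (two_ne_zero) |>.1 (le_antisymm h2 this)
    exact norm_eq_zero.1 this
  let Le := (LinearEquiv.ofInjectiveEndo _ hinj).toContinuousLinearEquiv
  have hLe : ∀ t, L (Le.symm t) = t := fun t => Le.apply_symm_apply t
  refine ⟨L, Le.symm, fun t => by rw [hLa, hL], hLe, ?_, ?_⟩
  · refine L.opNorm_le_bound (Real.sqrt_nonneg _) fun t => ?_
    refine abs_le_of_sq_le_sq' ?_ (by positivity) |>.2
    rw [mul_pow, Real.sq_sqrt hC, hL]; exact hup t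
  · refine ContinuousLinearMap.opNorm_le_bound _ (Real.sqrt_nonneg _) fun t => ?_
    refine abs_le_of_sq_le_sq' ?_ (by positivity) |>.2
    rw [mul_pow, Real.sq_sqrt (by positivity)]
    have h := hlo (Le.symm t)
    rw [← hL, hLe] at h
    rw [one_div, ← div_eq_inv_mul, le_div_iff₀ hc]
    simp only [ContinuousLinearEquiv.coe_coe]
    linarith

end Sqrt

/-! ### Accumulated Gaussian covariances -/

section Cov
variable {d : ℕ}

local notation "𝔼" => EuclideanSpace ℝ (Fin d)

/-- One step of the covariance recursion. The hypothesis `hL` is the Lyapunov equation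
`B P + P Bᵀ = -Σ` written as a quadratic form, and it leaves
`(1 + αB) P (1 + αB)ᵀ = P - α Σ + α² B P Bᵀ`. -/
lemma cov_step (B P Sg : 𝔼 →L[ℝ] 𝔼) (hP : P.adjoint = P)
    (hL : ∀ t, 2 * ⟪P (B.adjoint t), t⟫ = -⟪Sg t, t⟫) (α : ℝ) (t : 𝔼) :
    ⟪P ((1 + α • B).adjoint t), (1 + α • B).adjoint t⟫ =
      ⟪P t, t⟫ - α * ⟪Sg t, t⟫ + α ^ 2 * ⟪P (B.adjoint t), B.adjoint t⟫ := by
  have e : (1 + α • B).adjoint t = t + α • B.adjoint t := by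
    rw [map_add, map_smulₛₗ]
    simp [ContinuousLinearMap.one_def, ContinuousLinearMap.adjoint_id]
  have h1 : ⟪P t, B.adjoint t⟫ = ⟪P (B.adjoint t), t⟫ := by
    rw [← ContinuousLinearMap.adjoint_inner_right, hP, real_inner_comm]
  rw [e, map_add, map_smul, inner_add_left, inner_add_right, inner_add_right, inner_smul_left,
    inner_smul_right, inner_smul_left, inner_smul_right, h1]
  simp only [conj_trivial]
  linear_combination α * hL t

/-- The rate `t / (1 + 2bt)` at which the accumulated covariance grows with time `t`. -/
noncomputable def srate (b t : ℝ) : ℝ := t / (1 + 2 * b * t)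

/-- `srate b` is a subsolution of the recursion satisfied by the lower bound of the accumulated
covariance, whose step shrinks by at most the factor `(1 - αb)²` and adds `α`. -/
lemma srate_step {b α t : ℝ} (hb : 0 ≤ b) (hα : 0 < α) (ht : 0 ≤ t) :
    srate b (t + α) ≤ α + (1 - α * b) ^ 2 * srate b t := by
  unfold srate
  have h1 : 0 < 1 + 2 * b * t := by positivity
  have h2 : 0 < 1 + 2 * b * (t + α) := by positivity
  have h3 : (t + α) / (1 + 2 * b * (t + α)) ≤ α + (1 - 2 * (α * b)) * (t / (1 + 2 * b * t)) := by
    rw [div_le_iff₀ h2]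
    have : (α + (1 - 2 * (α * b)) * (t / (1 + 2 * b * t))) * (1 + 2 * b * (t + α)) =
      (t + α) + 2 * b * α * (α + t) / (1 + 2 * b * t) := by
      field_simp
      ring
    rw [this]
    have : 0 ≤ 2 * b * α * (α + t) / (1 + 2 * b * t) := by positivity
    linarith
  refine h3.trans ?_
  have : 0 ≤ t / (1 + 2 * b * t) := by positivity
  nlinarith [mul_nonneg (sq_nonneg (α * b)) this]

set_option maxHeartbeats 2000000 in
/-- Square roots `L k` of the accumulated covariances `P - A^k P (A^k)ᵀ`, where `A = 1 + αB`. These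
forms lie between multiples of `srate b (kα) ‖t‖²`, so for `k ≥ 1` the `L k` are invertible, with
condition numbers bounded uniformly in `k` and `α` and inverses of order `(kα)^{-1/2} + 1`. -/
lemma exists_gauss_family (B P Sg : 𝔼 →L[ℝ] 𝔼) (hP : P.adjoint = P)
    (hL : ∀ t, 2 * ⟪P (B.adjoint t), t⟫ = -⟪Sg t, t⟫) {b p₁ s₀ s₁ N α : ℝ}
    (hb : ‖B‖ ≤ b) (hb0 : 0 ≤ b) (hp : ∀ t, 0 ≤ ⟪P t, t⟫) (hp₁ : ∀ t, ⟪P t, t⟫ ≤ p₁ * ‖t‖ ^ 2)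
    (hs₀ : ∀ t, s₀ * ‖t‖ ^ 2 ≤ ⟪Sg t, t⟫) (hs0 : 0 < s₀) (hs₁ : ∀ t, ⟪Sg t, t⟫ ≤ s₁ * ‖t‖ ^ 2)
    (hs10 : 0 ≤ s₁) (hp10 : 0 ≤ p₁)
    (hα : 0 < α) (hαb : α * b ≤ 1 / 2) (hαp : α * (b ^ 2 * p₁) ≤ s₀ / 2)
    (hN : ∀ k : ℕ, ‖(1 + α • B) ^ k‖ ≤ N) :
    ∃ L Li : ℕ → 𝔼 →L[ℝ] 𝔼,
      (∀ k t, ‖(L k).adjoint t‖ ^ 2 = ⟪P t, t⟫ -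
        ⟪P (((1 + α • B) ^ k).adjoint t), ((1 + α • B) ^ k).adjoint t⟫) ∧
      (∀ k, 1 ≤ k → ∀ t, L k (Li k t) = t) ∧
      (∀ k, 1 ≤ k → ‖L k‖ * ‖Li k‖ ≤ Real.sqrt ((p₁ + s₁ * N ^ 2) * (1 + 2 * b) / (s₀ / 2))) ∧
      (∀ k : ℕ, 1 ≤ k → ‖Li k‖ ^ 2 ≤ (1 / (k * α) + 2 * b) / (s₀ / 2)) ∧
      ‖L 1‖ ^ 2 ≤ s₁ * α := by
  set A : 𝔼 →L[ℝ] 𝔼 := 1 + α • B with hA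
  have hN0 : 0 ≤ N := (norm_nonneg _).trans (hN 0)
  set D : ℕ → 𝔼 → ℝ := fun k t => ⟪P t, t⟫ - ⟪P ((A ^ k).adjoint t), (A ^ k).adjoint t⟫ with hD
  have hadj : ∀ (k : ℕ) (t : 𝔼), (A ^ (k + 1)).adjoint t = (A ^ k).adjoint (A.adjoint t) := by
    intro k t
    rw [pow_succ']
    rw [← ContinuousLinearMap.star_eq_adjoint, ← ContinuousLinearMap.star_eq_adjoint,
      ← ContinuousLinearMap.star_eq_adjoint, star_mul]
    rfl
  have hadj' : ∀ (k : ℕ) (t : 𝔼), (A ^ (k + 1)).adjoint t = A.adjoint ((A ^ k).adjoint t) := by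
    intro k t
    rw [pow_succ]
    rw [← ContinuousLinearMap.star_eq_adjoint, ← ContinuousLinearMap.star_eq_adjoint,
      ← ContinuousLinearMap.star_eq_adjoint, star_mul]
    rfl
  have hnorm : ∀ (k : ℕ) (t : 𝔼), ‖(A ^ k).adjoint t‖ ≤ N * ‖t‖ := fun k t =>
    ((A ^ k).adjoint.le_opNorm t).trans (by
      gcongr
      rw [LinearIsometryEquiv.norm_map]; exact hN k)
  have hD0 : ∀ t, D 0 t = 0 := fun t => by
    simp [hD, ContinuousLinearMap.one_def, ContinuousLinearMap.adjoint_id]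
  have hD1 : ∀ t, D 1 t = α * ⟪Sg t, t⟫ - α ^ 2 * ⟪P (B.adjoint t), B.adjoint t⟫ := fun t => by
    simp only [hD, pow_one, hA]
    rw [cov_step B P Sg hP hL]; ring
  have hBn : ∀ t, ‖B.adjoint t‖ ≤ b * ‖t‖ := fun t =>
    (B.adjoint.le_opNorm t).trans (by gcongr; rw [LinearIsometryEquiv.norm_map]; exact hb)
  have hD1lo : ∀ t, s₀ / 2 * α * ‖t‖ ^ 2 ≤ D 1 t := fun t => by
    rw [hD1]
    have h1 : ⟪P (B.adjoint t), B.adjoint t⟫ ≤ p₁ * (b * ‖t‖) ^ 2 :=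
      (hp₁ _).trans (by gcongr; exact hBn t)
    have h2 := hs₀ t
    have h3 : α ^ 2 * ⟪P (B.adjoint t), B.adjoint t⟫ ≤ α * (s₀ / 2) * ‖t‖ ^ 2 :=
      calc _ ≤ α ^ 2 * (p₁ * (b * ‖t‖) ^ 2) := by gcongr
        _ = α * (α * (b ^ 2 * p₁)) * ‖t‖ ^ 2 := by ring
        _ ≤ _ := by gcongr
    nlinarith [mul_le_mul_of_nonneg_left h2 hα.le]
  have hD1up : ∀ t, D 1 t ≤ α * (s₁ * ‖t‖ ^ 2) := fun t => by
    rw [hD1]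
    have := mul_le_mul_of_nonneg_left (hs₁ t) hα.le
    have := mul_nonneg (sq_nonneg α) (hp (B.adjoint t))
    linarith
  -- the first form of the recursion gives the lower bound, the second one the upper bound
  have hDs : ∀ k t, D (k + 1) t = D 1 t + D k (A.adjoint t) := fun k t => by
    simp only [hD, hadj, pow_one]; ring
  have hDs' : ∀ k t, D (k + 1) t = D k t + D 1 ((A ^ k).adjoint t) := fun k t => by
    simp only [hD, hadj', pow_one]; ring
  have hAlo : ∀ t, (1 - α * b) * ‖t‖ ≤ ‖A.adjoint t‖ := fun t => by
    have e : A.adjoint t = t + α • B.adjoint t := by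
      rw [hA, map_add, map_smulₛₗ]
      simp [ContinuousLinearMap.one_def, ContinuousLinearMap.adjoint_id]
    have h1 := norm_sub_norm_le t (-(α • B.adjoint t))
    rw [sub_neg_eq_add, ← e, norm_neg, norm_smul, Real.norm_of_nonneg hα.le] at h1
    have := mul_le_mul_of_nonneg_left (hBn t) hα.le
    nlinarith
  have hlo : ∀ (k : ℕ) (t : 𝔼), s₀ / 2 * srate b (k * α) * ‖t‖ ^ 2 ≤ D k t := by
    intro k
    induction k with
    | zero => intro t; rw [hD0]; simp [srate]
    | succ k ih =>
      intro t
      rw [hDs]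
      have h1 := ih (A.adjoint t)
      have h2 := srate_step hb0 hα (t := k * α) (by positivity)
      have h3 : (k : ℝ) * α + α = ((k + 1 : ℕ) : ℝ) * α := by push_cast; ring
      rw [h3] at h2
      have hr : 0 ≤ srate b (k * α) := by unfold srate; positivity
      have h4 : ((1 - α * b) * ‖t‖) ^ 2 ≤ ‖A.adjoint t‖ ^ 2 :=
        pow_le_pow_left₀ (mul_nonneg (by linarith) (norm_nonneg _)) (hAlo t) 2
      calc s₀ / 2 * srate b ((k + 1 : ℕ) * α) * ‖t‖ ^ 2
          ≤ s₀ / 2 * (α + (1 - α * b) ^ 2 * srate b (k * α)) * ‖t‖ ^ 2 := by gcongr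
        _ = s₀ / 2 * α * ‖t‖ ^ 2 + s₀ / 2 * srate b (k * α) * ((1 - α * b) * ‖t‖) ^ 2 := by ring
        _ ≤ s₀ / 2 * α * ‖t‖ ^ 2 + s₀ / 2 * srate b (k * α) * ‖A.adjoint t‖ ^ 2 := by gcongr
        _ ≤ _ := add_le_add (hD1lo t) h1
  have hup1 : ∀ (k : ℕ) (t : 𝔼), D k t ≤ k * α * (s₁ * N ^ 2) * ‖t‖ ^ 2 := by
    intro k
    induction k with
    | zero => intro t; rw [hD0]; simp
    | succ k ih =>
      intro t
      rw [hDs']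
      have h1 := hD1up ((A ^ k).adjoint t)
      have h2 : ‖(A ^ k).adjoint t‖ ^ 2 ≤ (N * ‖t‖) ^ 2 := by gcongr; exact hnorm k t
      have h3 : α * (s₁ * ‖(A ^ k).adjoint t‖ ^ 2) ≤ α * (s₁ * (N * ‖t‖) ^ 2) := by gcongr
      have h4 := ih t
      push_cast
      nlinarith
  have hup2 : ∀ (k : ℕ) (t : 𝔼), D k t ≤ p₁ * ‖t‖ ^ 2 := fun k t => by
    have := hp ((A ^ k).adjoint t)
    have := hp₁ t
    simp only [hD]; linarith
  set K := p₁ + s₁ * N ^ 2 with hK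
  have hK0 : 0 ≤ K := by positivity
  have hup : ∀ (k : ℕ) (t : 𝔼), D k t ≤ K * (1 + 2 * b) * srate b (k * α) * ‖t‖ ^ 2 := by
    intro k t
    have hx : 0 ≤ (k : ℝ) * α := by positivity
    rcases le_total ((k : ℝ) * α) 1 with h | h
    · refine (hup1 k t).trans ?_
      refine mul_le_mul_of_nonneg_right ?_ (by positivity)
      have : (k : ℝ) * α ≤ (1 + 2 * b) * srate b (k * α) := by
        unfold srate
        rw [← mul_div_assoc, le_div_iff₀ (by positivity)]
        nlinarith [mul_nonneg hb0 hx, mul_nonneg (mul_nonneg hb0 hx) (sub_nonneg.2 h)]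
      calc (k : ℝ) * α * (s₁ * N ^ 2) ≤ (1 + 2 * b) * srate b (k * α) * K := by
            gcongr
            · unfold srate; positivity
            · rw [hK]; linarith
        _ = _ := by ring
    · refine (hup2 k t).trans ?_
      refine mul_le_mul_of_nonneg_right ?_ (by positivity)
      have : 1 ≤ (1 + 2 * b) * srate b (k * α) := by
        unfold srate
        rw [← mul_div_assoc, le_div_iff₀ (by positivity)]
        nlinarith [mul_nonneg hb0 hx]
      calc p₁ ≤ K := by rw [hK]; linarith [mul_nonneg hs10 (sq_nonneg N)]
        _ = 1 * K := by ring
        _ ≤ (1 + 2 * b) * srate b (k * α) * K := by gcongr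
        _ = _ := by ring
  let Q : ℕ → 𝔼 →L[ℝ] 𝔼 := fun k => P - A ^ k * P * star (A ^ k)
  have hQs : ∀ k, (Q k).adjoint = Q k := fun k => by
    rw [← ContinuousLinearMap.star_eq_adjoint] at hP ⊢
    simp only [Q, star_sub, star_mul, star_star, hP, mul_assoc]
  have hQ : ∀ k t, ⟪Q k t, t⟫ = D k t := fun k t => by
    simp only [Q, hD, ContinuousLinearMap.star_eq_adjoint]
    rw [_root_.sub_apply, inner_sub_left]
    congr 1
    rw [ContinuousLinearMap.adjoint_inner_right]; rfl
  have hex : ∀ k : ℕ, ∃ L Li : 𝔼 →L[ℝ] 𝔼, (∀ t, ‖L.adjoint t‖ ^ 2 = D k t) ∧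
      (1 ≤ k → (∀ t, L (Li t) = t) ∧ ‖L‖ ≤ Real.sqrt (K * (1 + 2 * b) * srate b (k * α)) ∧
        ‖Li‖ ≤ Real.sqrt (1 / (s₀ / 2 * srate b (k * α)))) := by
    intro k
    by_cases hk : 1 ≤ k
    · have hx : 0 < (k : ℝ) * α := by
        have : (0 : ℝ) < k := by exact_mod_cast hk
        positivity
      have hr : 0 < srate b (k * α) := by unfold srate; positivity
      obtain ⟨L, Li, h1, h2, h3, h4⟩ := exists_sqrt_inv (Q k) (hQs k)
        (c := s₀ / 2 * srate b (k * α)) (C := K * (1 + 2 * b) * srate b (k * α)) (by positivity)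
        (by positivity) (fun t => by rw [hQ]; exact hlo k t) (fun t => by rw [hQ]; exact hup k t)
      exact ⟨L, Li, fun t => by rw [h1, hQ], fun _ => ⟨h2, h3, h4⟩⟩
    · obtain ⟨L, h1, h2⟩ := exists_sqrt (Q k) (hQs k) (fun t => by
        rw [hQ]
        exact le_trans (by unfold srate; positivity) (hlo k t))
      exact ⟨L, 0, fun t => by rw [h1, h2, hQ], fun h => absurd h hk⟩
  choose L Li h1 h2 using hex
  have hc0 : 0 < s₀ / 2 := by positivity
  refine ⟨L, Li, h1, fun k hk => (h2 k hk).1, fun k hk => ?_, fun k hk => ?_, ?_⟩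
  · obtain ⟨_, h3, h4⟩ := h2 k hk
    have hx : 0 < (k : ℝ) * α := by
      have : (0 : ℝ) < k := by exact_mod_cast hk
      positivity
    have hr : 0 < srate b (k * α) := by unfold srate; positivity
    refine (mul_le_mul h3 h4 (norm_nonneg _) (Real.sqrt_nonneg _)).trans ?_
    rw [← Real.sqrt_mul (by positivity)]
    apply Real.sqrt_le_sqrt
    apply le_of_eq
    field_simp
  · obtain ⟨_, h3, h4⟩ := h2 k hk
    have hx : 0 < (k : ℝ) * α := by
      have : (0 : ℝ) < k := by exact_mod_cast hk
      positivity
    have hr : 0 < srate b (k * α) := by unfold srate; positivity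
    refine (pow_le_pow_left₀ (norm_nonneg _) h4 2).trans ?_
    rw [Real.sq_sqrt (by positivity)]
    apply le_of_eq
    have hx' : (k : ℝ) ≠ 0 := by have : (0 : ℝ) < k := by exact_mod_cast hk
                                 exact this.ne'
    unfold srate
    field_simp
  · rw [← LinearIsometryEquiv.norm_map ContinuousLinearMap.adjoint (L 1)]
    have : ‖(L 1).adjoint‖ ≤ Real.sqrt (s₁ * α) := by
      refine ContinuousLinearMap.opNorm_le_bound _ (Real.sqrt_nonneg _) fun t => ?_
      refine abs_le_of_sq_le_sq' ?_ (by positivity) |>.2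
      rw [mul_pow, Real.sq_sqrt (by positivity), h1]
      exact (hD1up t).trans (le_of_eq (by ring))
    calc _ ≤ Real.sqrt (s₁ * α) ^ 2 := by gcongr
      _ = _ := Real.sq_sqrt (by positivity)

end Cov

/-! ### The telescoping sum -/

section Tele
variable {V : Type*} [NormedAddCommGroup V] [InnerProductSpace ℝ V] [FiniteDimensional ℝ V]
  [MeasurableSpace V] [BorelSpace V]

local notation "𝒩" => ProbabilityTheory.stdGaussian V

/-- Closeness of the variances in every direction bounds the difference of the averages of any
quadratic form. -/
lemma cov_close (ν₁ ν₂ : Measure V) [IsProbabilityMeasure ν₁] [IsProbabilityMeasure ν₂]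
    (h₁ : Integrable (fun u => ‖u‖ ^ 2) ν₁) (h₂ : Integrable (fun u => ‖u‖ ^ 2) ν₂) (η : ℝ)
    (h : ∀ t, |(∫ u, ⟪u, t⟫ ^ 2 ∂ν₁) - ∫ u, ⟪u, t⟫ ^ 2 ∂ν₂| ≤ η * ‖t‖ ^ 2)
    (β : V →ₗ[ℝ] V →ₗ[ℝ] ℝ) (K : ℝ) (hβ : ∀ u v, |β u v| ≤ K * (‖u‖ * ‖v‖)) :
    |(∫ u, β u u ∂ν₁) - ∫ u, β u u ∂ν₂| ≤ K * ((Module.finrank ℝ V : ℝ) ^ 2 * η) := by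
  let e := stdOrthonormalBasis ℝ V
  have hexp : ∀ u, β u u = ∑ i, ∑ j, β (e i) (e j) *
      ((⟪u, e i + e j⟫ ^ 2 - ⟪u, e i - e j⟫ ^ 2) / 4) := by
    intro u
    conv_lhs => rw [← e.sum_repr' u]
    simp only [map_sum, LinearMap.sum_apply, map_smul, LinearMap.smul_apply, smul_eq_mul,
      Finset.mul_sum]
    rw [Finset.sum_comm]
    refine Finset.sum_congr rfl fun i _ => Finset.sum_congr rfl fun j _ => ?_
    rw [inner_add_right, inner_sub_right, real_inner_comm u (e i), real_inner_comm u (e j)]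
    ring
  have hi : ∀ (ρ : Measure V) [IsProbabilityMeasure ρ], Integrable (fun u => ‖u‖ ^ 2) ρ →
      ∀ t, Integrable (fun u => ⟪u, t⟫ ^ 2) ρ := by
    intro ρ _ hρ t
    refine Integrable.mono' (hρ.mul_const (‖t‖ ^ 2)) (by fun_prop)
      (Filter.Eventually.of_forall fun u => ?_)
    rw [Real.norm_eq_abs, abs_pow, ← mul_pow]
    gcongr
    exact abs_real_inner_le_norm u t
  have hint : ∀ (ρ : Measure V) [IsProbabilityMeasure ρ], Integrable (fun u => ‖u‖ ^ 2) ρ →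
      ∫ u, β u u ∂ρ = ∑ i, ∑ j, β (e i) (e j) *
      (((∫ u, ⟪u, e i + e j⟫ ^ 2 ∂ρ) - ∫ u, ⟪u, e i - e j⟫ ^ 2 ∂ρ) / 4) := by
    intro ρ _ hρ
    have hsub : ∀ i j, Integrable (fun u => β (e i) (e j) *
        ((⟪u, e i + e j⟫ ^ 2 - ⟪u, e i - e j⟫ ^ 2) / 4)) ρ := fun i j =>
      (((hi ρ hρ _).sub (hi ρ hρ _)).div_const 4).const_mul _
    simp_rw [hexp]
    rw [integral_finsetSum _ fun i _ => integrable_finsetSum _ fun j _ => hsub i j]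
    refine Finset.sum_congr rfl fun i _ => ?_
    rw [integral_finsetSum _ fun j _ => hsub i j]
    refine Finset.sum_congr rfl fun j _ => ?_
    rw [integral_const_mul, integral_div, integral_sub (hi ρ hρ _) (hi ρ hρ _)]
  rw [hint ν₁ h₁, hint ν₂ h₂, ← Finset.sum_sub_distrib]
  simp_rw [← Finset.sum_sub_distrib]
  have hterm : ∀ i j, |β (e i) (e j) *
      (((∫ u, ⟪u, e i + e j⟫ ^ 2 ∂ν₁) - ∫ u, ⟪u, e i - e j⟫ ^ 2 ∂ν₁) / 4) - β (e i) (e j) *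
      (((∫ u, ⟪u, e i + e j⟫ ^ 2 ∂ν₂) - ∫ u, ⟪u, e i - e j⟫ ^ 2 ∂ν₂) / 4)| ≤ K * η := by
    intro i j
    have h1 := h (e i + e j)
    have h2 := h (e i - e j)
    have h3 := parallelogram_law_with_norm ℝ (e i) (e j)
    have hn : ∀ i, ‖e i‖ = 1 := e.orthonormal.1
    rw [hn, hn] at h3
    have h4 := hβ (e i) (e j)
    rw [hn, hn] at h4
    rw [← mul_sub, abs_mul]
    refine (mul_le_mul (h4.trans (le_of_eq (by ring))) ?_ (abs_nonneg _)
      (by have := abs_nonneg ((β (e i)) (e j)); linarith)).trans (le_refl (K * η))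
    have h5 : η * ‖e i + e j‖ ^ 2 + η * ‖e i - e j‖ ^ 2 = 4 * η := by
      rw [← mul_add]
      linear_combination η * h3
    rw [abs_le] at *
    constructor <;> linarith [h1.1, h1.2, h2.1, h2.2]
  calc _ ≤ ∑ i, |∑ j, (β (e i) (e j) *
      (((∫ u, ⟪u, e i + e j⟫ ^ 2 ∂ν₁) - ∫ u, ⟪u, e i - e j⟫ ^ 2 ∂ν₁) / 4) - β (e i) (e j) *
      (((∫ u, ⟪u, e i + e j⟫ ^ 2 ∂ν₂) - ∫ u, ⟪u, e i - e j⟫ ^ 2 ∂ν₂) / 4))| :=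
        Finset.abs_sum_le_sum_abs _ _
    _ ≤ ∑ i : Fin (Module.finrank ℝ V), ∑ j : Fin (Module.finrank ℝ V), K * η :=
        Finset.sum_le_sum fun i _ => (Finset.abs_sum_le_sum_abs _ _).trans
          (Finset.sum_le_sum fun j _ => hterm i j)
    _ = _ := by simp; ring

lemma integrable_cube_std : Integrable (fun u : V => ‖u‖ ^ 3) 𝒩 :=
  (ProbabilityTheory.IsGaussian.memLp_id 𝒩 3 (by simp)).integrable_norm_pow (by norm_num)

lemma integral_inner_sq_std (t : V) : ∫ u, ⟪u, t⟫ ^ 2 ∂𝒩 = ‖t‖ ^ 2 := by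
  have h := ProbabilityTheory.variance_dual_stdGaussian (E := V) (InnerProductSpace.toDual ℝ V t)
  have h0 := ProbabilityTheory.integral_strongDual_stdGaussian (E := V)
    (InnerProductSpace.toDual ℝ V t)
  rw [ProbabilityTheory.variance_of_integral_eq_zero (by fun_prop) h0] at h
  simp only [LinearIsometryEquiv.norm_map] at h
  rw [← h]
  refine integral_congr_ae (Filter.Eventually.of_forall fun u => ?_)
  simp [real_inner_comm]

lemma gauss_add_integral (L₁ L₂ L₃ : V →L[ℝ] V)
    (h : ∀ t, ‖L₁.adjoint t‖ ^ 2 + ‖L₂.adjoint t‖ ^ 2 = ‖L₃.adjoint t‖ ^ 2)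
    (φ : V → ℝ) {Λ : ℝ≥0} (hφ : LipschitzWith Λ φ) :
    ∫ n', ∫ n, φ (L₁ n' + L₂ n) ∂𝒩 ∂𝒩 = ∫ n, φ (L₃ n) ∂𝒩 := by
  have hm : Measurable (fun p : V × V => L₁ p.1 + L₂ p.2) := by fun_prop
  have hc := hφ.continuous
  have hi3 : Integrable φ (Measure.map L₃ 𝒩) := by
    rw [integrable_map_measure hc.aestronglyMeasurable (by fun_prop)]
    exact integrable_lip_of_integrable_norm integrable_norm_std (hφ.comp L₃.lipschitz)
  have hg := gauss_add L₁ L₂ L₃ h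
  have hi := hi3
  rw [← hg, integrable_map_measure hc.aestronglyMeasurable hm.aemeasurable] at hi
  have e := integral_prod _ hi
  simp only [Function.comp] at e
  rw [← e, ← integral_map (f := φ) hm.aemeasurable hc.aestronglyMeasurable, hg,
    integral_map (by fun_prop) hc.aestronglyMeasurable]

/-- The function `x ↦ E h(A^k x + L_k n)`, with `n` standard Gaussian. -/
noncomputable def fsm (h : V → ℝ) (A : V →L[ℝ] V) (L : ℕ → V →L[ℝ] V) (k : ℕ) (x : V) : ℝ :=
  ∫ n, h ((A ^ k) x + L k n) ∂𝒩

lemma integrable_lip_std {φ : V → ℝ} {Λ : ℝ≥0} (hφ : LipschitzWith Λ φ) (c : V)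
    (L : V →L[ℝ] V) : Integrable (fun n => φ (c + L n)) 𝒩 :=
  integrable_lip_of_integrable_norm (Λ := Λ * (1 * ‖L‖₊)) integrable_norm_std
    (hφ.comp ((isometry_add_left c).lipschitz.comp L.lipschitz))

lemma abs_integral_sub_le_of_forall {Ω : Type*} [MeasurableSpace Ω] {μ : Measure Ω}
    [IsProbabilityMeasure μ]
    {f g b : Ω → ℝ} (hf : Integrable f μ) (hg : Integrable g μ) (hb : Integrable b μ)
    (h : ∀ x, |f x - g x| ≤ b x) : |(∫ x, f x ∂μ) - ∫ x, g x ∂μ| ≤ ∫ x, b x ∂μ := by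
  rw [← integral_sub hf hg, ← Real.norm_eq_abs]
  exact norm_integral_le_of_norm_le hb (Filter.Eventually.of_forall h)

lemma fsm_lip {h : V → ℝ} (hh : LipschitzWith 1 h) (A : V →L[ℝ] V) (L : ℕ → V →L[ℝ] V) (k : ℕ)
    {c : ℝ} (hc : ‖A ^ k‖ ≤ c) (x y : V) : |fsm h A L k x - fsm h A L k y| ≤ c * ‖x - y‖ := by
  unfold fsm
  refine (abs_integral_sub_le_of_forall (integrable_lip_std hh _ _) (integrable_lip_std hh _ _)
    (integrable_const (c * ‖x - y‖)) fun n => ?_).trans (by simp)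
  have := hh.dist_le_mul ((A ^ k) x + L k n) ((A ^ k) y + L k n)
  rw [dist_add_right, Real.dist_eq, dist_eq_norm, ← map_sub] at this
  simp only [NNReal.coe_one, one_mul] at this
  exact this.trans (((A ^ k).le_opNorm _).trans (by gcongr))

lemma fsm_lipschitz {h : V → ℝ} (hh : LipschitzWith 1 h) (A : V →L[ℝ] V) (L : ℕ → V →L[ℝ] V)
    (k : ℕ) : LipschitzWith ‖A ^ k‖₊ (fsm h A L k) :=
  LipschitzWith.of_dist_le_mul fun x y => by
    rw [Real.dist_eq, dist_eq_norm]; exact fsm_lip hh A L k le_rfl x y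

/-- Semigroup property: averaging `f_k` over a step with Gaussian noise `L 1 n` gives `f_{k+1}`,
because the covariances add up as `A^k (P - A P Aᵀ) (A^k)ᵀ + (P - A^k P (A^k)ᵀ)`. -/
lemma fsm_succ {h : V → ℝ} (hh : LipschitzWith 1 h) (A P : V →L[ℝ] V) (L : ℕ → V →L[ℝ] V)
    (hL : ∀ k t, ‖(L k).adjoint t‖ ^ 2 = ⟪P t, t⟫ - ⟪P ((A ^ k).adjoint t), (A ^ k).adjoint t⟫)
    (k : ℕ) (x : V) : ∫ n', fsm h A L k (A x + L 1 n') ∂𝒩 = fsm h A L (k + 1) x := by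
  have hadd : ∀ t, ‖((A ^ k) ∘L (L 1)).adjoint t‖ ^ 2 + ‖(L k).adjoint t‖ ^ 2 =
      ‖(L (k + 1)).adjoint t‖ ^ 2 := by
    intro t
    rw [ContinuousLinearMap.adjoint_comp, ContinuousLinearMap.comp_apply, hL, hL, hL, pow_succ (n := k),
      pow_one]
    have : (A ^ k * A).adjoint t = A.adjoint ((A ^ k).adjoint t) := by
      have := ContinuousLinearMap.adjoint_comp (A ^ k) A
      exact congrArg (fun f : V →L[ℝ] V => f t) this
    rw [this]; ring
  have h2 : LipschitzWith (1 * 1) (fun z => h ((A ^ (k + 1)) x + z)) :=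
    hh.comp (isometry_add_left _).lipschitz
  have := gauss_add_integral _ _ _ hadd _ h2
  unfold fsm
  rw [← this]
  congr 1; ext n'; congr 1; ext n
  congr 1
  rw [map_add, pow_succ]
  simp only [mul_apply_eq_comp, ContinuousLinearMap.comp_apply]
  abel

/-- Telescoping from `f_0 = h` to `f_n`. Each step pays for the perturbation `p`, through the
Lipschitz constant of `f_k`, and for the exchange `τ k` of the noise for a Gaussian. The last term
is the distance of `f_n` from a constant, which is small since `A^n` is. -/
lemma telescope {h : V → ℝ} (hh : LipschitzWith 1 h) (A P LP : V →L[ℝ] V) (L : ℕ → V →L[ℝ] V)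
    (hL : ∀ k t, ‖(L k).adjoint t‖ ^ 2 = ⟪P t, t⟫ - ⟪P ((A ^ k).adjoint t), (A ^ k).adjoint t⟫)
    (hLP : ∀ t, ‖LP.adjoint t‖ ^ 2 = ⟪P t, t⟫)
    {N ρ : ℝ} (hN : ∀ k : ℕ, ‖A ^ k‖ ≤ N * ρ ^ k)
    (ν π : Measure V) [IsProbabilityMeasure ν] [IsProbabilityMeasure π]
    (hν : Integrable (fun u => ‖u‖) ν) (hπ : Integrable (fun u => ‖u‖) π)
    (s : ℝ) (p : V → V) (hp : Continuous p) (hpi : Integrable (fun y => ‖p y‖) π)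
    (hinv : Measure.map (fun q : V × V => A q.1 + p q.1 + s • q.2) (π.prod ν) = π)
    (τ : ℕ → ℝ) (hτ : ∀ k m, |(∫ u, fsm h A L k (m + s • u) ∂ν)
      - ∫ n, fsm h A L k (m + L 1 n) ∂𝒩| ≤ τ k) (n : ℕ) :
    |(∫ y, h y ∂π) - ∫ n, h (LP n) ∂𝒩| ≤
      ∑ k ∈ Finset.range n, (N * ρ ^ k * (∫ y, ‖p y‖ ∂π) + τ k) +
        N * ρ ^ n * ((∫ y, ‖y‖ ∂π) + ∫ n, ‖LP n‖ ∂𝒩) := by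
  have hfi : ∀ k, Integrable (fsm h A L k) π := fun k =>
    integrable_lip_of_integrable_norm hπ (fsm_lipschitz hh A L k)
  have hfν : ∀ k m, Integrable (fun u => fsm h A L k (m + s • u)) ν := fun k m =>
    integrable_lip_of_integrable_norm (Λ := ‖A ^ k‖₊ * (1 * ‖s‖₊)) hν
      ((fsm_lipschitz hh A L k).comp ((isometry_add_left m).lipschitz.comp (lipschitzWith_smul s)))
  have hstep : ∀ k, |(∫ y, fsm h A L k y ∂π) - ∫ y, fsm h A L (k + 1) y ∂π| ≤
      N * ρ ^ k * (∫ y, ‖p y‖ ∂π) + τ k := by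
    intro k
    have hm : Measurable (fun q : V × V => A q.1 + p q.1 + s • q.2) := by fun_prop
    have hcf := (fsm_lipschitz hh A L k).continuous
    have hi : Integrable (fun q : V × V => fsm h A L k (A q.1 + p q.1 + s • q.2)) (π.prod ν) := by
      have := hfi k
      rwa [← hinv, integrable_map_measure hcf.aestronglyMeasurable hm.aemeasurable] at this
    have e1 : ∫ y, fsm h A L k y ∂π = ∫ y, ∫ u, fsm h A L k (A y + p y + s • u) ∂ν ∂π := by
      conv_lhs => rw [← hinv]
      rw [integral_map hm.aemeasurable hcf.aestronglyMeasurable, integral_prod _ hi]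
    rw [e1]
    refine (abs_integral_sub_le_of_forall hi.integral_prod_left (hfi (k + 1))
      (b := fun y => N * ρ ^ k * ‖p y‖ + τ k)
      ((hpi.const_mul _).add (integrable_const _)) fun y => ?_).trans ?_
    · rw [← fsm_succ hh A P L hL]
      have h1 := hτ k (A y)
      have h2 : |(∫ u, fsm h A L k (A y + p y + s • u) ∂ν) - ∫ u, fsm h A L k (A y + s • u) ∂ν| ≤
          N * ρ ^ k * ‖p y‖ := by
        refine (abs_integral_sub_le_of_forall (hfν k _) (hfν k _)
          (integrable_const (N * ρ ^ k * ‖p y‖)) fun u => ?_).trans (by simp)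
        have := fsm_lip hh A L k (hN k) (A y + p y + s • u) (A y + s • u)
        have e : A y + p y + s • u - (A y + s • u) = p y := by abel
        rwa [e] at this
      calc _ ≤ _ := abs_sub_le _ (∫ u, fsm h A L k (A y + s • u) ∂ν) _
        _ ≤ _ := add_le_add h2 h1
    · rw [integral_add (hpi.const_mul _) (integrable_const _), integral_const_mul]
      simp
  have h0 : fsm h A L 0 = h := by
    have hL0 : L 0 = 0 := by
      have : (L 0).adjoint = 0 := by
        ext1 t
        have := hL 0 t
        rw [pow_zero] at this
        have e1 : (1 : V →L[ℝ] V).adjoint t = t := by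
          simp [ContinuousLinearMap.one_def, ContinuousLinearMap.adjoint_id]
        rw [e1, sub_self] at this
        simpa using this
      simpa using congrArg ContinuousLinearMap.adjoint this
    ext x
    simp [fsm, hL0]
  have htel : ∀ n, |(∫ y, h y ∂π) - ∫ y, fsm h A L n y ∂π| ≤
      ∑ k ∈ Finset.range n, (N * ρ ^ k * (∫ y, ‖p y‖ ∂π) + τ k) := by
    intro n
    induction n with
    | zero => simp [h0]
    | succ n ih =>
      rw [Finset.sum_range_succ]
      exact (abs_sub_le _ (∫ y, fsm h A L n y ∂π) _).trans (add_le_add ih (hstep n))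
  -- the target Gaussian law is itself invariant for the linear recursion with Gaussian noise
  have hend : ∫ n, h (LP n) ∂𝒩 = ∫ n', fsm h A L n (LP n') ∂𝒩 := by
    refine (gauss_add_integral ((A ^ n) ∘L LP) (L n) LP (fun t => ?_) h hh).symm
    rw [ContinuousLinearMap.adjoint_comp, ContinuousLinearMap.comp_apply, hL, hLP, hLP]
    ring
  have hgap : ∀ (κ : Measure V) [IsProbabilityMeasure κ] (Lx : V →L[ℝ] V),
      Integrable (fun u => ‖u‖) κ →
      |(∫ y, fsm h A L n (Lx y) ∂κ) - fsm h A L n 0| ≤ N * ρ ^ n * ∫ y, ‖Lx y‖ ∂κ := by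
    intro κ _ Lx hκ
    have hx : Integrable (fun y => ‖Lx y‖) κ :=
      (Lx.integrable_comp ((integrable_norm_iff (by fun_prop)).1 hκ)).norm
    have := abs_integral_sub_le_of_forall (f := fun y => fsm h A L n (Lx y))
      (g := fun _ => fsm h A L n 0) (b := fun y => N * ρ ^ n * ‖Lx y‖)
      (integrable_lip_of_integrable_norm hκ ((fsm_lipschitz hh A L n).comp Lx.lipschitz))
      (integrable_const _) (hx.const_mul _) (fun y => by
        simpa using fsm_lip hh A L n (hN n) (Lx y) 0)
    rw [integral_const_mul] at this
    simpa using this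
  have g1 := hgap π (.id ℝ V) hπ
  have g2 := hgap 𝒩 LP integrable_norm_std
  simp only [ContinuousLinearMap.id_apply] at g1
  rw [← hend] at g2
  have g3 := htel n
  rw [abs_le] at *
  constructor <;> linarith [g1.1, g1.2, g2.1, g2.2, g3.1, g3.2]

end Tele

/-! ### Local errors and their sum -/

section Local
variable {V : Type*} [NormedAddCommGroup V] [InnerProductSpace ℝ V] [FiniteDimensional ℝ V]
  [MeasurableSpace V] [BorelSpace V]

local notation "𝒩" => ProbabilityTheory.stdGaussian V

/-- Replacing the scaled noise by a Gaussian with nearly the same covariance, under the smoothing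
by the accumulated Gaussian noise of `k` later steps. -/
lemma local_raw {h : V → ℝ} (hh : LipschitzWith 1 h) (A Sg : V →L[ℝ] V) (L Li : ℕ → V →L[ℝ] V)
    (ν : Measure V) [IsProbabilityMeasure ν] (h3 : Integrable (fun u => ‖u‖ ^ 3) ν)
    (hmean : ∫ u, u ∂ν = 0) (hcov : ∀ t, ∫ u, ⟪u, t⟫ ^ 2 ∂ν = ⟪Sg t, t⟫)
    {s α η : ℝ} (hs : 0 ≤ s) (hsα : s ^ 2 = α)
    (hL1 : ∀ t, |α * ⟪Sg t, t⟫ - ‖(L 1).adjoint t‖ ^ 2| ≤ η * ‖t‖ ^ 2)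
    (k : ℕ) (hLi : ∀ t, L k (Li k t) = t) (m : V) :
    |(∫ u, fsm h A L k (m + s • u) ∂ν) - ∫ n, fsm h A L k (m + L 1 n) ∂𝒩| ≤
      gK V * ‖L k‖ * ((‖Li k‖ * ‖A ^ k‖) ^ 3 *
        (s ^ 3 * (∫ u, ‖u‖ ^ 3 ∂ν) + ‖L 1‖ ^ 3 * ∫ u : V, ‖u‖ ^ 3 ∂𝒩) +
        (‖Li k‖ * ‖A ^ k‖) ^ 2 * ((Module.finrank ℝ V : ℝ) ^ 2 * η)) := by
  set ν₁ := Measure.map (fun u : V => s • u) ν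
  set ν₂ := Measure.map (L 1) 𝒩
  have hms : Measurable (fun u : V => s • u) := by fun_prop
  have : IsProbabilityMeasure ν₁ := Measure.isProbabilityMeasure_map hms.aemeasurable
  have : IsProbabilityMeasure ν₂ := Measure.isProbabilityMeasure_map (by fun_prop)
  have i1 : Integrable (fun u => ‖u‖ ^ 3) ν₁ := by
    rw [integrable_map_measure (by fun_prop) (by fun_prop)]
    refine (h3.const_mul (s ^ 3)).congr (Filter.Eventually.of_forall fun u => ?_)
    simp [norm_smul, mul_pow, abs_of_nonneg hs]
  have e1 : ∫ u, ‖u‖ ^ 3 ∂ν₁ = s ^ 3 * ∫ u, ‖u‖ ^ 3 ∂ν := by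
    rw [integral_map (by fun_prop) (by fun_prop), ← integral_const_mul]
    congr 1; ext u
    simp [norm_smul, mul_pow, abs_of_nonneg hs]
  have hle : ∀ u, ‖L 1 u‖ ^ 3 ≤ ‖L 1‖ ^ 3 * ‖u‖ ^ 3 := fun u => by
    rw [← mul_pow]; gcongr; exact (L 1).le_opNorm u
  have i2' : Integrable (fun u => ‖L 1 u‖ ^ 3) 𝒩 := by
    refine Integrable.mono' (integrable_cube_std.const_mul (‖L 1‖ ^ 3)) (by fun_prop)
      (Filter.Eventually.of_forall fun u => ?_)
    rw [Real.norm_of_nonneg (by positivity)]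
    exact hle u
  have i2 : Integrable (fun u => ‖u‖ ^ 3) ν₂ := by
    rw [integrable_map_measure (by fun_prop) (by fun_prop)]
    exact i2'
  have e2 : ∫ u, ‖u‖ ^ 3 ∂ν₂ ≤ ‖L 1‖ ^ 3 * ∫ u : V, ‖u‖ ^ 3 ∂𝒩 := by
    rw [integral_map (by fun_prop) (by fun_prop), ← integral_const_mul]
    exact integral_mono i2' (integrable_cube_std.const_mul _) hle
  have m1 : ∫ u, u ∂ν₁ = 0 := by
    rw [integral_map (by fun_prop) (by fun_prop), integral_smul, hmean, smul_zero]
  have m2 : ∫ u, u ∂ν₂ = 0 := by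
    rw [integral_map (by fun_prop) (by fun_prop), (L 1).integral_comp_comm,
      ProbabilityTheory.integral_id_stdGaussian, map_zero]
    exact (integrable_norm_iff (by fun_prop)).1 integrable_norm_std
  have hc : ∀ t, |(∫ u, ⟪u, t⟫ ^ 2 ∂ν₁) - ∫ u, ⟪u, t⟫ ^ 2 ∂ν₂| ≤ η * ‖t‖ ^ 2 := by
    intro t
    have a1 : ∫ u, ⟪u, t⟫ ^ 2 ∂ν₁ = α * ⟪Sg t, t⟫ := by
      rw [integral_map (by fun_prop) (by fun_prop), ← hcov, ← hsα, ← integral_const_mul]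
      congr 1; ext u
      rw [inner_smul_left]; simp [mul_pow]
    have a2 : ∫ u, ⟪u, t⟫ ^ 2 ∂ν₂ = ‖(L 1).adjoint t‖ ^ 2 := by
      rw [integral_map (by fun_prop) (by fun_prop), ← integral_inner_sq_std]
      congr 1; ext u
      rw [ContinuousLinearMap.adjoint_inner_right]
    rw [a1, a2]; exact hL1 t
  set R := Li k ∘L (A ^ k) with hR
  set g : V → ℝ := fun n => h ((A ^ k) m + L k n) with hg
  have hgl : LipschitzWith ‖L k‖₊ g := by
    have := hh.comp ((isometry_add_left ((A ^ k) m)).lipschitz.comp (L k).lipschitz)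
    rwa [one_mul, one_mul] at this
  have hf : ∀ u, fsm h A L k (m + u) = ∫ n, g (n + R u) ∂𝒩 := by
    intro u
    unfold fsm
    congr 1; ext n
    simp only [hg, hR, ContinuousLinearMap.comp_apply, map_add, hLi]
    congr 1; abel
  have key := step_compare g ‖L k‖₊ hgl R ν₁ ν₂ i1 i2 m1 m2 _
    (fun β K hβ => cov_close ν₁ ν₂ (integrable_pow_of_cube i1 (by norm_num))
      (integrable_pow_of_cube i2 (by norm_num)) η hc β K hβ)
  simp_rw [← hf] at key
  have hcf : Continuous (fun u => fsm h A L k (m + u)) :=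
    (fsm_lipschitz hh A L k).continuous.comp (by fun_prop)
  rw [integral_map (by fun_prop) hcf.aestronglyMeasurable,
    integral_map (by fun_prop) hcf.aestronglyMeasurable] at key
  refine key.trans ?_
  have hRn : ‖R‖ ≤ ‖Li k‖ * ‖A ^ k‖ := ContinuousLinearMap.opNorm_comp_le _ _
  have hη : 0 ≤ (Module.finrank ℝ V : ℝ) ^ 2 * η := by
    rcases Nat.eq_zero_or_pos (Module.finrank ℝ V) with h0 | h0
    · simp [h0]
    · have : Nontrivial V := Module.nontrivial_of_finrank_pos h0
      obtain ⟨t, ht⟩ := exists_ne (0 : V)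
      have h1 := (abs_nonneg _).trans (hL1 t)
      have : 0 < ‖t‖ ^ 2 := by positivity
      have : 0 ≤ η := nonneg_of_mul_nonneg_left h1 this
      positivity
  have hm3 : 0 ≤ ∫ u, ‖u‖ ^ 3 ∂ν := integral_nonneg fun u => by positivity
  have := gK_nonneg (V := V)
  rw [e1]
  simp only [coe_nnnorm]
  have hm3' : 0 ≤ ∫ u, ‖u‖ ^ 3 ∂ν₂ := integral_nonneg fun u => by positivity
  gcongr

set_option maxHeartbeats 2000000 in
/-- The bound of `local_raw` with all constants independent of `α` and the dependence on `k` made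
explicit. -/
lemma local_bound {h : V → ℝ} (hh : LipschitzWith 1 h) (A Sg : V →L[ℝ] V)
    (L Li : ℕ → V →L[ℝ] V)
    (ν : Measure V) [IsProbabilityMeasure ν] (h3 : Integrable (fun u => ‖u‖ ^ 3) ν)
    (hmean : ∫ u, u ∂ν = 0) (hcov : ∀ t, ∫ u, ⟪u, t⟫ ^ 2 ∂ν = ⟪Sg t, t⟫)
    {s α η₀ N ρ κ c b σ : ℝ} (hs : 0 < s) (hsα : s ^ 2 = α) (hα1 : α ≤ 1) (hη₀ : 0 ≤ η₀)
    (hρ : 0 ≤ ρ) (hρ1 : ρ ≤ 1) (hN : ∀ k : ℕ, ‖A ^ k‖ ≤ N * ρ ^ k) (hN0 : 0 ≤ N)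
    (hc : 0 < c) (hb : 0 ≤ b) (hσ : 0 ≤ σ)
    (hL1 : ∀ t, |α * ⟪Sg t, t⟫ - ‖(L 1).adjoint t‖ ^ 2| ≤ α ^ 2 * η₀ * ‖t‖ ^ 2)
    (hL1' : ‖L 1‖ ≤ σ * s)
    (hLi : ∀ k, 1 ≤ k → ∀ t, L k (Li k t) = t)
    (hκ : ∀ k, 1 ≤ k → ‖L k‖ * ‖Li k‖ ≤ κ)
    (hLic : ∀ k : ℕ, 1 ≤ k → ‖Li k‖ ^ 2 ≤ (1 / (k * α) + 2 * b) / c)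
    (k : ℕ) (m : V) :
    |(∫ u, fsm h A L k (m + s • u) ∂ν) - ∫ n, fsm h A L k (m + L 1 n) ∂𝒩| ≤
      gK V * κ * (N ^ 3 * ((∫ u, ‖u‖ ^ 3 ∂ν) + σ ^ 3 * ∫ u : V, ‖u‖ ^ 3 ∂𝒩) +
        N ^ 2 * ((Module.finrank ℝ V : ℝ) ^ 2 * η₀)) * (1 / c + 2 * b / c + 1) * s *
        (ρ ^ k / k + α * ρ ^ k) +
      if k = 0 then N * ((∫ u, ‖u‖ ∂ν) + σ * ∫ u : V, ‖u‖ ∂𝒩) * s else 0 := by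
  have hgK := gK_nonneg (V := V)
  have hα : 0 < α := by rw [← hsα]; positivity
  have hm3 : 0 ≤ ∫ u, ‖u‖ ^ 3 ∂ν := integral_nonneg fun u => by positivity
  have hg3 : 0 ≤ ∫ u : V, ‖u‖ ^ 3 ∂𝒩 := integral_nonneg fun u => by positivity
  have hκ0 : 0 ≤ κ := le_trans (by positivity) (hκ 1 le_rfl)
  set M := (∫ u, ‖u‖ ^ 3 ∂ν) + σ ^ 3 * ∫ u : V, ‖u‖ ^ 3 ∂𝒩 with hM
  set D := (Module.finrank ℝ V : ℝ) ^ 2 * η₀ with hD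
  have hM0 : 0 ≤ M := by positivity
  have hD0 : 0 ≤ D := by positivity
  -- at `k = 0` there is no smoothing: `ρ ^ 0 / 0` is `0` and the Lipschitz bound is the last term
  rcases Nat.eq_zero_or_pos k with hk | hk
  · subst hk
    rw [if_pos rfl]
    have h1 : Integrable (fun u : V => ‖u‖) ν := by
      simpa using integrable_pow_of_cube h3 (k := 1) (by norm_num)
    have hN0' := hN 0
    have hl := fun x y => fsm_lip hh A L 0 hN0' x y
    have t1 : |(∫ u, fsm h A L 0 (m + s • u) ∂ν) - fsm h A L 0 m| ≤ N * s * ∫ u, ‖u‖ ∂ν := by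
      have := abs_integral_sub_le_of_forall (f := fun u => fsm h A L 0 (m + s • u))
        (g := fun _ => fsm h A L 0 m) (b := fun u => N * s * ‖u‖) (μ := ν)
        (integrable_lip_of_integrable_norm (Λ := ‖A ^ 0‖₊ * (1 * ‖s‖₊)) h1
          ((fsm_lipschitz hh A L 0).comp
            ((isometry_add_left m).lipschitz.comp (lipschitzWith_smul s))))
        (integrable_const _) (h1.const_mul _) (fun u => by
          have := hl (m + s • u) m
          rw [add_sub_cancel_left, norm_smul, Real.norm_of_nonneg hs.le] at this
          simpa [mul_assoc] using this)
      rw [integral_const_mul] at this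
      simpa using this
    have t2 : |(∫ n, fsm h A L 0 (m + L 1 n) ∂𝒩) - fsm h A L 0 m| ≤
        N * (σ * s) * ∫ u : V, ‖u‖ ∂𝒩 := by
      have := abs_integral_sub_le_of_forall (f := fun n => fsm h A L 0 (m + L 1 n))
        (g := fun _ => fsm h A L 0 m) (b := fun u => N * (σ * s) * ‖u‖) (μ := 𝒩)
        (integrable_lip_std (fsm_lipschitz hh A L 0) m (L 1))
        (integrable_const _) (integrable_norm_std.const_mul _) (fun u => by
          have := hl (m + L 1 u) m
          rw [add_sub_cancel_left] at this
          refine this.trans ?_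
          rw [pow_zero, mul_one, mul_assoc]
          gcongr
          exact ((L 1).le_opNorm u).trans (by gcongr))
      rw [integral_const_mul] at this
      simpa using this
    have : 0 ≤ gK V * κ * (N ^ 3 * M + N ^ 2 * D) * (1 / c + 2 * b / c + 1) * s *
        (ρ ^ 0 / ((0 : ℕ) : ℝ) + α * ρ ^ 0) := by positivity
    rw [abs_le] at *
    constructor <;> nlinarith [t1.1, t1.2, t2.1, t2.2]
  · rw [if_neg (by omega), add_zero]
    have hk0 : (0 : ℝ) < k := by exact_mod_cast hk
    refine (local_raw hh A Sg L Li ν h3 hmean hcov hs.le hsα hL1 k (hLi k hk) m).trans ?_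
    set x := ‖L k‖
    set y := ‖Li k‖
    have hx : 0 ≤ x := norm_nonneg _
    have hy : 0 ≤ y := norm_nonneg _
    have hxy : x * y ≤ κ := hκ k hk
    have hr0 : 0 ≤ ρ ^ k := by positivity
    have hr1 : ρ ^ k ≤ 1 := pow_le_one₀ hρ hρ1
    set r := ρ ^ k with hr
    have hAk : ‖A ^ k‖ ≤ N * r := hN k
    have hs1 : s ≤ 1 := by nlinarith
    have hM1 : s ^ 3 * (∫ u, ‖u‖ ^ 3 ∂ν) + ‖L 1‖ ^ 3 * ∫ u : V, ‖u‖ ^ 3 ∂𝒩 ≤ s ^ 3 * M := by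
      have : ‖L 1‖ ^ 3 ≤ (σ * s) ^ 3 := by gcongr
      have := mul_le_mul_of_nonneg_right this hg3
      rw [hM]; nlinarith
    have hα2 : α ^ 2 ≤ s ^ 3 := by
      rw [← hsα]
      calc (s ^ 2) ^ 2 = s ^ 3 * s := by ring
        _ ≤ s ^ 3 * 1 := by gcongr
        _ = _ := mul_one _
    have hD1 : (Module.finrank ℝ V : ℝ) ^ 2 * (α ^ 2 * η₀) ≤ s ^ 3 * D := by
      calc _ = α ^ 2 * D := by rw [hD]; ring
        _ ≤ _ := by gcongr
    have hr3 : r ^ 3 ≤ r := by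
      calc r ^ 3 = r * r ^ 2 := by ring
        _ ≤ r * 1 := by gcongr; exact pow_le_one₀ hr0 hr1
        _ = r := mul_one r
    have hr2 : r ^ 2 ≤ r := by nlinarith
    have hyy : y ≤ 1 + y ^ 2 := by nlinarith [sq_nonneg (y - 1)]
    have hy2 : 1 + y ^ 2 ≤ (1 / c + 2 * b / c + 1) * (1 / (k * α) + 1) := by
      have := hLic k hk
      have h1 : 0 ≤ 1 / (k * α) := by positivity
      have h2 : 0 ≤ 1 / c := by positivity
      have h3 : 0 ≤ 2 * b / c := by positivity
      have h4 : (1 / (k * α) + 2 * b) / c = 1 / c * (1 / (k * α)) + 2 * b / c := by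
        field_simp
      nlinarith [mul_nonneg h1 h2, mul_nonneg h1 h3]
    calc gK V * x * ((y * ‖A ^ k‖) ^ 3 *
        (s ^ 3 * (∫ u, ‖u‖ ^ 3 ∂ν) + ‖L 1‖ ^ 3 * ∫ u : V, ‖u‖ ^ 3 ∂𝒩) +
        (y * ‖A ^ k‖) ^ 2 * ((Module.finrank ℝ V : ℝ) ^ 2 * (α ^ 2 * η₀)))
        ≤ gK V * x * ((y * (N * r)) ^ 3 * (s ^ 3 * M) + (y * (N * r)) ^ 2 * (s ^ 3 * D)) := by
          gcongr
      _ = gK V * (x * y) * (y ^ 2 * N ^ 3 * M * r ^ 3 + y * (N ^ 2 * D) * r ^ 2) * s ^ 3 := by ring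
      _ ≤ gK V * κ * ((1 + y ^ 2) * N ^ 3 * M * r + (1 + y ^ 2) * (N ^ 2 * D) * r) * s ^ 3 := by
          gcongr
          linarith
      _ = gK V * κ * (N ^ 3 * M + N ^ 2 * D) * (1 + y ^ 2) * (r * s ^ 3) := by ring
      _ ≤ gK V * κ * (N ^ 3 * M + N ^ 2 * D) *
          ((1 / c + 2 * b / c + 1) * (1 / (k * α) + 1)) * (r * s ^ 3) := by
          gcongr
      _ = gK V * κ * (N ^ 3 * M + N ^ 2 * D) * (1 / c + 2 * b / c + 1) * s *
          (r * (α * (1 / (k * α) + 1))) := by rw [← hsα]; ring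
      _ = _ := by
          congr 1
          field_simp

lemma sum_pow_div_le {ρ : ℝ} (h0 : 0 ≤ ρ) (h1 : ρ < 1) (n : ℕ) :
    ∑ k ∈ Finset.range n, ρ ^ k / k ≤ -Real.log (1 - ρ) := by
  have hs := Real.hasSum_pow_div_log_of_abs_lt_one (x := ρ) (by rwa [abs_of_nonneg h0])
  have : ∑ k ∈ Finset.range n, ρ ^ k / k ≤ ∑ k ∈ Finset.range (n + 1), ρ ^ k / k := by
    rw [Finset.sum_range_succ]
    have : 0 ≤ ρ ^ n / n := by positivity
    linarith
  refine this.trans ?_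
  rw [Finset.sum_range_succ']
  simp only [Nat.cast_zero, div_zero, add_zero]
  push_cast
  exact sum_le_hasSum _ (fun i _ => by positivity) hs

lemma sum_pow_le {ρ : ℝ} (h0 : 0 ≤ ρ) (h1 : ρ < 1) (n : ℕ) :
    ∑ k ∈ Finset.range n, ρ ^ k ≤ (1 - ρ)⁻¹ :=
  sum_le_hasSum _ (fun i _ => by positivity) (hasSum_geometric_of_lt_one h0 h1)

/-- The limit `n → ∞` of the telescoping bound, by the geometric and the logarithmic series. -/
lemma limit_bound {X N ρ ε C s α C₀ K : ℝ} (h0 : 0 ≤ ρ) (h1 : ρ < 1) (hN : 0 ≤ N) (hε : 0 ≤ ε)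
    (hC : 0 ≤ C) (hs : 0 ≤ s) (hα : 0 ≤ α) (hC₀ : 0 ≤ C₀)
    (h : ∀ n : ℕ, X ≤ ∑ k ∈ Finset.range n, (N * ρ ^ k * ε +
      (C * s * (ρ ^ k / k + α * ρ ^ k) + if k = 0 then C₀ * s else 0)) + N * ρ ^ n * K) :
    X ≤ N * ε / (1 - ρ) + C * s * (-Real.log (1 - ρ) + α / (1 - ρ)) + C₀ * s := by
  have hb : ∀ n : ℕ, X ≤ (N * ε / (1 - ρ) + C * s * (-Real.log (1 - ρ) + α / (1 - ρ)) + C₀ * s)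
      + N * ρ ^ n * K := by
    intro n
    refine (h n).trans (add_le_add ?_ le_rfl)
    rw [Finset.sum_add_distrib, Finset.sum_add_distrib, ← Finset.mul_sum, Finset.sum_add_distrib,
      ← Finset.mul_sum, ← Finset.sum_mul, ← Finset.mul_sum]
    have a1 := sum_pow_le h0 h1 n
    have a2 := sum_pow_div_le h0 h1 n
    have a3 : ∑ k ∈ Finset.range n, (if k = 0 then C₀ * s else 0) ≤ C₀ * s := by
      rw [Finset.sum_ite_eq']
      split_ifs
      · exact le_rfl
      · positivity
    calc _ ≤ N * (1 - ρ)⁻¹ * ε + (C * s * (-Real.log (1 - ρ) + α * (1 - ρ)⁻¹) + C₀ * s) := by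
          gcongr
      _ = _ := by ring
  have ht : Filter.Tendsto (fun n : ℕ => (N * ε / (1 - ρ) + C * s * (-Real.log (1 - ρ) +
      α / (1 - ρ)) + C₀ * s) + N * ρ ^ n * K) Filter.atTop (nhds ((N * ε / (1 - ρ) + C * s *
      (-Real.log (1 - ρ) + α / (1 - ρ)) + C₀ * s) + N * 0 * K)) :=
    tendsto_const_nhds.add (((tendsto_pow_atTop_nhds_zero_of_lt_one h0 h1).const_mul N).mul_const K)
  have := ge_of_tendsto' ht hb
  simpa using this

end Local

/-! ### From Wasserstein bounds to tail bounds -/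

section Tail

/-- The bound used for tails at an arbitrary distance, valid with a constant proportional to the
standard deviation `√v`. -/
lemma gaussianPDF_le {v : ℝ≥0} (hv : v ≠ 0) {x : ℝ} (hx : x ≠ 0) :
    ProbabilityTheory.gaussianPDFReal 0 v x ≤ Real.sqrt v / x ^ 2 := by
  have hv0 : (0 : ℝ) < v := by positivity
  have hx2 : 0 < x ^ 2 := by positivity
  rw [ProbabilityTheory.gaussianPDFReal, sub_zero]
  have h1 : Real.exp (-x ^ 2 / (2 * v)) ≤ 2 * v / x ^ 2 := by
    have := Real.add_one_le_exp (x ^ 2 / (2 * v))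
    have hy : 0 < x ^ 2 / (2 * v) := by positivity
    rw [neg_div, Real.exp_neg, show 2 * (v : ℝ) / x ^ 2 = (x ^ 2 / (2 * v))⁻¹ by rw [inv_div]]
    exact inv_anti₀ hy (by linarith)
  have h2 : (Real.sqrt (2 * Real.pi * v))⁻¹ ≤ (2 * Real.sqrt v)⁻¹ := by
    have hs : 0 < Real.sqrt v := Real.sqrt_pos.2 hv0
    refine inv_anti₀ (by positivity) (Real.le_sqrt_of_sq_le ?_)
    rw [mul_pow, Real.sq_sqrt hv0.le]
    have := Real.pi_gt_three
    nlinarith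
  calc _ ≤ (2 * Real.sqrt v)⁻¹ * (2 * v / x ^ 2) := by gcongr
    _ = (v / Real.sqrt v) / x ^ 2 := by field_simp
    _ = _ := by rw [Real.div_sqrt]

/-- The ramp equal to `0` left of `c`, to `1` right of `c + ε`, and linear in between. -/
noncomputable def ramp (c ε x : ℝ) : ℝ := max 0 (min 1 ((x - c) / ε))

lemma ramp_lip {c ε : ℝ} (hε : 0 < ε) : LipschitzWith (Real.toNNReal ε⁻¹) (ramp c ε) := by
  have h1 : LipschitzWith (Real.toNNReal ε⁻¹) (fun x => (x - c) / ε) := by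
    refine LipschitzWith.of_dist_le_mul fun x y => ?_
    rw [Real.coe_toNNReal _ (by positivity), Real.dist_eq, Real.dist_eq, ← sub_div,
      sub_sub_sub_cancel_right, abs_div, abs_of_pos hε, div_eq_inv_mul]
  exact (h1.const_min 1).const_max 0

lemma ramp_nonneg (c ε x : ℝ) : 0 ≤ ramp c ε x := le_max_left _ _
lemma ramp_le_one (c ε x : ℝ) : ramp c ε x ≤ 1 := max_le zero_le_one (min_le_left _ _)

lemma ramp_bounds (μ : Measure ℝ) [IsProbabilityMeasure μ] {c ε : ℝ} (hε : 0 < ε) :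
    μ.real (Set.Ioi (c + ε)) ≤ ∫ x, ramp c ε x ∂μ ∧
    ∫ x, ramp c ε x ∂μ ≤ μ.real (Set.Ioi c) := by
  have hi : Integrable (ramp c ε) μ :=
    Integrable.mono' (integrable_const 1) (ramp_lip hε).continuous.aestronglyMeasurable
      (Filter.Eventually.of_forall fun x => by
        rw [Real.norm_of_nonneg (ramp_nonneg _ _ _)]; exact ramp_le_one _ _ _)
  constructor
  · rw [← integral_indicator_one measurableSet_Ioi]
    refine integral_mono ((integrable_const 1).indicator measurableSet_Ioi) hi fun x => ?_
    by_cases hx : x ∈ Set.Ioi (c + ε)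
    · rw [Set.indicator_of_mem hx]
      simp only [ramp, Pi.one_apply]
      refine le_max_of_le_right (le_min le_rfl ?_)
      rw [le_div_iff₀ hε]
      have : c + ε < x := hx
      linarith
    · rw [Set.indicator_of_notMem hx]; exact ramp_nonneg _ _ _
  · rw [← integral_indicator_one measurableSet_Ioi]
    refine integral_mono hi ((integrable_const 1).indicator measurableSet_Ioi) fun x => ?_
    by_cases hx : x ∈ Set.Ioi c
    · rw [Set.indicator_of_mem hx]; exact ramp_le_one _ _ _
    · rw [Set.indicator_of_notMem hx]
      refine max_le le_rfl (min_le_of_right_le ?_)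
      have : x ≤ c := not_lt.1 hx
      exact div_nonpos_of_nonpos_of_nonneg (by linarith) hε.le

/-- Moving the threshold `c ≥ a / 2` by `ε` changes a Gaussian tail by `O(ε / a²)`. -/
lemma strip_le {v : ℝ≥0} (hv : v ≠ 0) {a c ε : ℝ} (ha : 0 < a) (hε : 0 < ε) (hc : a / 2 ≤ c) :
    (ProbabilityTheory.gaussianReal 0 v).real (Set.Ioi c) ≤
      (ProbabilityTheory.gaussianReal 0 v).real (Set.Ioi (c + ε)) +
        ε * (Real.sqrt v / (a / 2) ^ 2) := by
  have hu : Set.Ioi c = Set.Ioc c (c + ε) ∪ Set.Ioi (c + ε) :=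
    (Set.Ioc_union_Ioi_eq_Ioi (by linarith)).symm
  have h1 := measureReal_union_le (μ := ProbabilityTheory.gaussianReal 0 v)
    (Set.Ioc c (c + ε)) (Set.Ioi (c + ε))
  rw [← hu] at h1
  have h2 : (ProbabilityTheory.gaussianReal 0 v).real (Set.Ioc c (c + ε)) ≤
      ε * (Real.sqrt v / (a / 2) ^ 2) := by
    have h0 : 0 ≤ ∫ x in Set.Ioc c (c + ε), ProbabilityTheory.gaussianPDFReal 0 v x :=
      integral_nonneg fun x => ProbabilityTheory.gaussianPDFReal_nonneg _ _ _
    rw [Measure.real, ProbabilityTheory.gaussianReal_apply_eq_integral 0 hv,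
      ENNReal.toReal_ofReal h0]
    have := norm_setIntegral_le_of_norm_le_const (μ := volume) (s := Set.Ioc c (c + ε))
      (f := ProbabilityTheory.gaussianPDFReal 0 v) (C := Real.sqrt v / (a / 2) ^ 2)
      (by simp) (fun x hx => by
        rw [Real.norm_of_nonneg (ProbabilityTheory.gaussianPDFReal_nonneg _ _ _)]
        have hx1 : a / 2 ≤ x := hc.trans hx.1.le
        refine (gaussianPDF_le hv (by linarith)).trans ?_
        gcongr)
    rw [Real.norm_of_nonneg h0] at this
    refine this.trans (le_of_eq ?_)
    simp only [Measure.real, Real.volume_Ioc]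
    rw [show c + ε - c = ε by ring, ENNReal.toReal_ofReal hε.le]
    ring
  linarith

/-- A Wasserstein-1 bound `W` against a centered Gaussian gives a tail bound of order `1 / a`: the
ramp has width `a η`, and the Gaussian density is at most of order `1 / a²` on `[a / 2, ∞)`. -/
lemma tail_of_wass (μ : Measure ℝ) [IsProbabilityMeasure μ] {v : ℝ≥0} (hv : v ≠ 0) {W : ℝ}
    (hW : ∀ φ : ℝ → ℝ, LipschitzWith 1 φ →
      |(∫ x, φ x ∂μ) - ∫ x, φ x ∂ProbabilityTheory.gaussianReal 0 v| ≤ W)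
    {a η : ℝ} (ha : 0 < a) (hη : 0 < η) (hη2 : η ≤ 1 / 2) :
    |μ.real (Set.Ioi a) - (ProbabilityTheory.gaussianReal 0 v).real (Set.Ioi a)| ≤
      (W / η + 4 * Real.sqrt v * η) / a := by
  set ε := a * η with hε
  have hε0 : 0 < ε := by positivity
  have hramp : ∀ c, |(∫ x, ramp c ε x ∂μ) - ∫ x, ramp c ε x ∂ProbabilityTheory.gaussianReal 0 v|
      ≤ W / ε := by
    intro c
    have hl : LipschitzWith 1 (fun x => ε * ramp c ε x) := by
      refine LipschitzWith.of_dist_le_mul fun x y => ?_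
      have := (ramp_lip (c := c) hε0).dist_le_mul x y
      rw [Real.coe_toNNReal _ (by positivity)] at this
      rw [Real.dist_eq, ← mul_sub, abs_mul, abs_of_pos hε0, ← Real.dist_eq]
      calc _ ≤ ε * (ε⁻¹ * dist x y) := by gcongr
        _ = _ := by rw [← mul_assoc, mul_inv_cancel₀ hε0.ne']; simp
    have := hW _ hl
    rw [integral_const_mul, integral_const_mul, ← mul_sub, abs_mul, abs_of_pos hε0] at this
    rw [le_div_iff₀ hε0]; linarith
  have e : (W / η + 4 * Real.sqrt v * η) / a = W / ε + ε * (Real.sqrt v / (a / 2) ^ 2) := by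
    rw [hε]; field_simp; ring
  rw [e]
  have b1 := ramp_bounds μ (c := a - ε) hε0
  have b2 := ramp_bounds (ProbabilityTheory.gaussianReal 0 v) (c := a - ε) hε0
  have b3 := ramp_bounds μ (c := a) hε0
  have b4 := ramp_bounds (ProbabilityTheory.gaussianReal 0 v) (c := a) hε0
  have r1 := hramp (a - ε)
  have r2 := hramp a
  have hle : ε ≤ a / 2 := by rw [hε]; nlinarith
  have s1 := strip_le hv (a := a) (c := a - ε) ha hε0 (by linarith)
  have s2 := strip_le hv (a := a) (c := a) ha hε0 (by linarith)
  rw [sub_add_cancel] at b1 b2 s1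
  rw [abs_le] at *
  constructor <;> linarith [r1.1, r1.2, r2.1, r2.2, b1.1, b1.2, b2.1, b2.2, b3.1, b3.2, b4.1, b4.2]

/-- One-dimensional projections of `L n`, with `n` standard Gaussian, are centered Gaussian with
variance `‖Lᵀ ζ‖²`. -/
lemma gaussian_proj {V : Type*} [NormedAddCommGroup V] [InnerProductSpace ℝ V]
    [FiniteDimensional ℝ V] [MeasurableSpace V] [BorelSpace V] (L : V →L[ℝ] V) (ζ : V) {v : ℝ}
    (hv : ‖L.adjoint ζ‖ ^ 2 = v) :
    Measure.map (fun n => ⟪L n, ζ⟫) (ProbabilityTheory.stdGaussian V) =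
      ProbabilityTheory.gaussianReal 0 v.toNNReal := by
  have hm : Measurable (fun n => ⟪L n, ζ⟫) := by fun_prop
  have : IsProbabilityMeasure (Measure.map (fun n => ⟪L n, ζ⟫)
    (ProbabilityTheory.stdGaussian V)) := Measure.isProbabilityMeasure_map hm.aemeasurable
  refine Measure.ext_of_charFun (funext fun t => ?_)
  rw [ProbabilityTheory.charFun_gaussianReal, charFun_apply,
    integral_map hm.aemeasurable (by fun_prop)]
  have e : ∀ n, ⟪⟪L n, ζ⟫, t⟫ = ⟪n, t • L.adjoint ζ⟫ := fun n => by
    rw [inner_smul_right, ContinuousLinearMap.adjoint_inner_right]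
    simp
  simp_rw [e]
  rw [← charFun_apply, ProbabilityTheory.charFun_stdGaussian]
  congr 1
  have hv0 : 0 ≤ v := by rw [← hv]; positivity
  rw [Real.coe_toNNReal _ hv0, ← hv, norm_smul]
  push_cast
  rw [mul_pow, ← Complex.ofReal_pow, Real.norm_eq_abs, sq_abs]
  push_cast; ring

lemma sqrt_log_facts {α : ℝ} (h0 : 0 < α) (h1 : α ≤ 1 / 3) :
    1 ≤ Real.log (1 / α) ∧ Real.sqrt α * Real.log (1 / α) ≤ 2 ∧
    Real.sqrt (Real.sqrt α * Real.log (1 / α)) =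
      α ^ ((1 : ℝ) / 4) * Real.sqrt (Real.log (1 / α)) := by
  have hs : 0 < Real.sqrt α := Real.sqrt_pos.2 h0
  refine ⟨?_, ?_, ?_⟩
  · rw [Real.le_log_iff_exp_le (by positivity), le_div_iff₀ h0]
    have := Real.exp_one_lt_d9
    nlinarith
  · have e : Real.log (1 / α) = 2 * Real.log (1 / Real.sqrt α) := by
      rw [one_div, one_div, Real.log_inv, Real.log_inv, Real.log_sqrt h0.le]; ring
    have := Real.log_le_sub_one_of_pos (x := 1 / Real.sqrt α) (by positivity)
    have h3 : Real.sqrt α * (1 / Real.sqrt α) = 1 := by field_simp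
    rw [e]
    nlinarith
  · rw [Real.sqrt_mul hs.le]
    congr 1
    rw [Real.sqrt_eq_rpow, Real.sqrt_eq_rpow, ← Real.rpow_mul h0.le]
    norm_num

end Tail

/-! ### The stochastic approximation chain -/

section Chain
variable {V : Type*} [NormedAddCommGroup V] [InnerProductSpace ℝ V] [FiniteDimensional ℝ V]
  [MeasurableSpace V] [BorelSpace V]

/-- Powers of `1 + α (J - 1)` decay geometrically when `J` is the derivative of a contraction in
the norm `‖D ·‖`. -/
lemma pow_bound (D Di : V →L[ℝ] V) (hDi : ∀ x, Di (D x) = x) (hD : ∀ x, D (Di x) = x)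
    (T : V → V) {γ : ℝ} (hγ : 0 ≤ γ) (hT : ∀ x y, ‖D (T x - T y)‖ ≤ γ * ‖D (x - y)‖)
    {x₀ : V} {Jc : V →L[ℝ] V} (hJ : HasFDerivAt T Jc x₀) {α : ℝ} (h0 : 0 ≤ α) (h1 : α ≤ 1)
    (k : ℕ) : ‖(1 + α • (Jc - 1)) ^ k‖ ≤ ‖Di‖ * ‖D‖ * (1 - α * (1 - γ)) ^ k := by
  set A : V →L[ℝ] V := 1 + α • (Jc - 1)
  have hJ' : HasFDerivAt (fun u => D (T (Di u))) (D ∘L Jc ∘L Di) (D x₀) := by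
    have h2 : HasFDerivAt T Jc (Di (D x₀)) := by rwa [hDi]
    exact D.hasFDerivAt.comp _ (h2.comp _ Di.hasFDerivAt)
  have hJn : ‖D ∘L Jc ∘L Di‖ ≤ γ := by
    have hl : LipschitzWith (Real.toNNReal γ) (fun u => D (T (Di u))) := by
      refine LipschitzWith.of_dist_le_mul fun u v => ?_
      rw [dist_eq_norm, dist_eq_norm, ← map_sub, Real.coe_toNNReal _ hγ]
      refine (hT _ _).trans (le_of_eq ?_)
      rw [← map_sub, hD]
    have := hJ'.le_of_lipschitz hl
    rwa [Real.coe_toNNReal _ hγ] at this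
  have hAn : ∀ x, ‖D (A x)‖ ≤ (1 - α * (1 - γ)) * ‖D x‖ := by
    intro x
    have e : D (A x) = (1 - α) • D x + α • (D ∘L Jc ∘L Di) (D x) := by
      simp only [A, ContinuousLinearMap.comp_apply, hDi]
      simp only [_root_.add_apply, _root_.sub_apply, _root_.smul_apply,
        one_apply_eq_self, map_add, map_smul, map_sub]
      module
    rw [e]
    refine (norm_add_le _ _).trans ?_
    rw [norm_smul, norm_smul, Real.norm_of_nonneg h0, Real.norm_of_nonneg (by linarith)]
    have := ((D ∘L Jc ∘L Di).le_opNorm (D x)).trans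
      (mul_le_mul_of_nonneg_right hJn (norm_nonneg _))
    nlinarith [mul_le_mul_of_nonneg_left this h0]
  have hρ : 0 ≤ 1 - α * (1 - γ) := by nlinarith
  have hpow : ∀ (k : ℕ) x, ‖D ((A ^ k) x)‖ ≤ (1 - α * (1 - γ)) ^ k * ‖D x‖ := by
    intro k
    induction k with
    | zero => intro x; simp
    | succ k ih =>
      intro x
      rw [pow_succ' A, mul_apply_eq_comp, pow_succ', mul_assoc]
      exact (hAn _).trans (by gcongr; exact ih x)
  refine ContinuousLinearMap.opNorm_le_bound _ (by positivity) fun x => ?_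
  calc ‖(A ^ k) x‖ = ‖Di (D ((A ^ k) x))‖ := by rw [hDi]
    _ ≤ ‖Di‖ * ‖D ((A ^ k) x)‖ := Di.le_opNorm _
    _ ≤ ‖Di‖ * ((1 - α * (1 - γ)) ^ k * (‖D‖ * ‖x‖)) := by
      gcongr
      exact (hpow k x).trans (by gcongr; exact D.le_opNorm x)
    _ = _ := by ring

/-- Invariance of a law is preserved by the change of coordinates `D`. -/
lemma conj_invariant {Φ : V × V → V} (hΦ : Continuous Φ) (D Di : V →L[ℝ] V)
    (hDi : ∀ x, Di (D x) = x) (ν μ : Measure V) [IsProbabilityMeasure ν] [IsProbabilityMeasure μ]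
    (hμ : Measure.map Φ (μ.prod ν) = μ) :
    Measure.map (fun q : V × V => D (Φ (Di q.1, q.2))) ((Measure.map D μ).prod ν) =
      Measure.map D μ := by
  have e : (Measure.map D μ).prod ν = Measure.map (Prod.map D id) (μ.prod ν) := by
    rw [← Measure.map_prod_map _ _ (by fun_prop) measurable_id, Measure.map_id]
  rw [e, Measure.map_map (by fun_prop) (by fun_prop)]
  conv_rhs => rw [← hμ, Measure.map_map (by fun_prop) (by fun_prop)]
  congr 1
  ext q
  simp [hDi]

/-- The stochastic approximation step `(x, z) ↦ x + α (T x - x + z)`. -/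
def sastep (T : V → V) (α : ℝ) (q : V × V) : V := q.1 + α • (T q.1 - q.1 + q.2)

lemma sastep_contr (D : V →L[ℝ] V) (T : V → V) {γ : ℝ}
    (hT : ∀ x y, ‖D (T x - T y)‖ ≤ γ * ‖D (x - y)‖) {α : ℝ} (h0 : 0 ≤ α) (h1 : α ≤ 1) (x y z : V) :
    ‖D (sastep T α (x, z) - sastep T α (y, z))‖ ≤ (1 - α * (1 - γ)) * ‖D (x - y)‖ := by
  have e : sastep T α (x, z) - sastep T α (y, z) = (1 - α) • (x - y) + α • (T x - T y) := by
    simp only [sastep]; module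
  rw [e, map_add, map_smul, map_smul]
  refine (norm_add_le _ _).trans ?_
  rw [norm_smul, norm_smul, Real.norm_of_nonneg h0, Real.norm_of_nonneg (by linarith)]
  nlinarith [mul_le_mul_of_nonneg_left (hT x y) h0]

/-- In the coordinates given by `D` the step is a contraction of factor `1 - α (1 - γ)`, so
`exists_invariant` and `invariant_unique` apply. -/
lemma chain_exists_unique (D Di : V →L[ℝ] V) (hDi : ∀ x, Di (D x) = x) (hD : ∀ x, D (Di x) = x)
    (T : V → V) (hTc : Continuous T) {γ : ℝ} (hγ : 0 ≤ γ) (hγ1 : γ < 1)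
    (hT : ∀ x y, ‖D (T x - T y)‖ ≤ γ * ‖D (x - y)‖) {α : ℝ} (h0 : 0 < α) (h1 : α ≤ 1)
    (ν : Measure V) [IsProbabilityMeasure ν] (hν : MemLp (fun z => z) 2 ν) :
    ∃ μ : Measure V, IsProbabilityMeasure μ ∧ Measure.map (sastep T α) (μ.prod ν) = μ ∧
      MemLp (fun x => x) 2 μ ∧ ∀ μ' : Measure V, IsProbabilityMeasure μ' →
        Measure.map (sastep T α) (μ'.prod ν) = μ' → μ' = μ := by
  have hc : Continuous (sastep T α) := by unfold sastep; fun_prop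
  set Φ : V × V → V := fun q => D (sastep T α (Di q.1, q.2)) with hΦ
  have hΦc : Continuous Φ := by fun_prop
  have hρ0 : 0 ≤ 1 - α * (1 - γ) := by nlinarith
  have hρ1 : 1 - α * (1 - γ) < 1 := by
    have : 0 < α * (1 - γ) := mul_pos h0 (by linarith)
    linarith
  have hlip : ∀ x y z, ‖Φ (x, z) - Φ (y, z)‖ ≤ (1 - α * (1 - γ)) * ‖x - y‖ := by
    intro x y z
    have := sastep_contr D T hT h0.le h1 (Di x) (Di y) z
    rw [map_sub, ← map_sub Di, hD] at this
    exact this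
  have hm0 : MemLp (fun z => Φ (0, z)) 2 ν := by
    have e : (fun z => Φ (0, z)) = fun z => D (α • T 0) + (α • D) z := by
      ext1 z
      simp [hΦ, sastep]
    rw [e]
    have h3 : MemLp (fun z => (α • D) z) 2 ν := (α • D).comp_memLp' hν
    have h4 : MemLp (fun _ : V => D (α • T 0)) 2 ν := memLp_const _
    exact h4.add h3
  obtain ⟨μt, hp, hinv, hm⟩ : ∃ π : Measure V, IsProbabilityMeasure π ∧
      Measure.map Φ (π.prod ν) = π ∧ MemLp (fun x => x) 2 π := by
    obtain ⟨r, hr⟩ : ∃ r : ℝ≥0, (r : ℝ) = 1 - α * (1 - γ) := ⟨⟨_, hρ0⟩, rfl⟩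
    rw [← hr] at hlip hρ1
    exact exists_invariant ν Φ hΦc r (by exact_mod_cast hρ1) hlip hm0
  have hback : (fun q : V × V => Di (Φ (D q.1, q.2))) = sastep T α := by
    ext1 q
    simp [hΦ, hDi]
  refine ⟨Measure.map Di μt, Measure.isProbabilityMeasure_map (by fun_prop), ?_, ?_, ?_⟩
  · have := conj_invariant hΦc Di D hD ν μt hinv
    rwa [hback] at this
  · rw [memLp_map_measure_iff (by fun_prop) (by fun_prop)]
    exact Di.comp_memLp' hm
  · intro μ' hp' hinv'
    have h2 := conj_invariant hc D Di hDi ν μ' hinv'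
    have : IsProbabilityMeasure (Measure.map D μ') :=
      Measure.isProbabilityMeasure_map (by fun_prop)
    have h3 := invariant_unique ν Φ hΦc (1 - α * (1 - γ)) hρ0 hρ1 hlip _ _ h2 hinv
    rw [← h3, Measure.map_map (by fun_prop) (by fun_prop)]
    have : Di ∘ D = id := by ext1 x; simp [hDi]
    rw [this, Measure.map_id]

/-- The second moment at stationarity is of order `α`: the centered noise contributes
`α² E ‖D ξ‖²`, which the contraction balances with a loss of at least `α (1 - γ) E ‖D (X - x₀)‖²`. -/
lemma second_moment (D : V →L[ℝ] V)
    (T : V → V) (hTc : Continuous T) {γ : ℝ} (hγ : 0 ≤ γ) (hγ1 : γ < 1)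
    (hT : ∀ x y, ‖D (T x - T y)‖ ≤ γ * ‖D (x - y)‖) {x₀ : V} (hfix : T x₀ = x₀)
    {α : ℝ} (h0 : 0 < α) (h1 : α ≤ 1)
    (ν : Measure V) [IsProbabilityMeasure ν] (hν : MemLp (fun z => z) 2 ν)
    (hmean : ∫ z, z ∂ν = 0)
    (μ : Measure V) [IsProbabilityMeasure μ] (hμ : MemLp (fun x => x) 2 μ)
    (hinv : Measure.map (sastep T α) (μ.prod ν) = μ) :
    ∫ x, ‖D (x - x₀)‖ ^ 2 ∂μ ≤ α * (∫ z, ‖D z‖ ^ 2 ∂ν) / (1 - γ) := by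
  have hc : Continuous (sastep T α) := by unfold sastep; fun_prop
  set ρ := 1 - α * (1 - γ) with hρ
  have hρ0 : 0 ≤ ρ := by rw [hρ]; nlinarith
  set F : V → V := fun x => D (sastep T α (x, 0) - x₀) with hF
  have hFc : Continuous F := by fun_prop
  have hFb : ∀ x, ‖F x‖ ≤ ρ * ‖D (x - x₀)‖ := by
    intro x
    have := sastep_contr D T hT h0.le h1 x x₀ 0
    have e : sastep T α (x₀, 0) = x₀ := by simp [sastep, hfix]
    rwa [e] at this
  have hi : Integrable (fun x => ‖D (x - x₀)‖ ^ 2) μ := by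
    have : MemLp (fun x => D (x - x₀)) 2 μ := D.comp_memLp' (hμ.sub (memLp_const _))
    exact this.integrable_norm_pow (by norm_num)
  have hiF : Integrable (fun x => ‖F x‖ ^ 2) μ := by
    refine Integrable.mono' (hi.const_mul (ρ ^ 2)) (by fun_prop)
      (Filter.Eventually.of_forall fun x => ?_)
    rw [Real.norm_of_nonneg (by positivity), ← mul_pow]
    gcongr; exact hFb x
  have hDν : MemLp (fun z => D z) 2 ν := D.comp_memLp' hν
  have hiν : Integrable (fun z => ‖D z‖ ^ 2) ν := hDν.integrable_norm_pow (by norm_num)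
  have hiν1 : Integrable (fun z : V => z) ν := hν.integrable (by norm_num)
  have hexp : ∀ q : V × V, ‖D (sastep T α q - x₀)‖ ^ 2 =
      ‖F q.1‖ ^ 2 + 2 * α * ⟪F q.1, D q.2⟫ + α ^ 2 * ‖D q.2‖ ^ 2 := by
    intro q
    have e : D (sastep T α q - x₀) = F q.1 + α • D q.2 := by
      simp only [hF, sastep, ← map_smul, ← map_add]
      congr 1; module
    rw [e, norm_add_sq_real, inner_smul_right, norm_smul, mul_pow, Real.norm_eq_abs, sq_abs]
    ring
  have hg : AEStronglyMeasurable (fun x => ‖D (x - x₀)‖ ^ 2) (Measure.map (sastep T α) (μ.prod ν)) :=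
    (by fun_prop : Continuous fun x => ‖D (x - x₀)‖ ^ 2).aestronglyMeasurable
  have hi2 : Integrable (fun q => ‖D (sastep T α q - x₀)‖ ^ 2) (μ.prod ν) := by
    have := hi
    rwa [← hinv, integrable_map_measure (by rw [hinv] at hg ⊢; exact hg) hc.aemeasurable] at this
  have e1 : ∫ x, ‖D (x - x₀)‖ ^ 2 ∂μ = ∫ x, ∫ z, ‖D (sastep T α (x, z) - x₀)‖ ^ 2 ∂ν ∂μ := by
    conv_lhs => rw [← hinv]
    rw [integral_map hc.aemeasurable hg, integral_prod _ hi2]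
  have e2 : ∀ x, ∫ z, ‖D (sastep T α (x, z) - x₀)‖ ^ 2 ∂ν =
      ‖F x‖ ^ 2 + α ^ 2 * ∫ z, ‖D z‖ ^ 2 ∂ν := by
    intro x
    have hi3 : Integrable (fun z => ⟪F x, D z⟫) ν := (D.integrable_comp hiν1).const_inner (F x)
    have e3 : ∫ z, ⟪F x, D z⟫ ∂ν = 0 := by
      rw [integral_inner (D.integrable_comp hiν1), D.integral_comp_comm hiν1, hmean, map_zero,
        inner_zero_right]
    simp_rw [hexp]
    have i1 : Integrable (fun _ : V => ‖F x‖ ^ 2) ν := integrable_const _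
    have i2 : Integrable (fun z => 2 * α * ⟪F x, D z⟫) ν := hi3.const_mul _
    have i3 : Integrable (fun z => ‖F x‖ ^ 2 + 2 * α * ⟪F x, D z⟫) ν := i1.add i2
    rw [integral_add i3 (hiν.const_mul _), integral_add i1 i2, integral_const_mul,
      integral_const_mul, e3]
    simp
  simp_rw [e2] at e1
  rw [integral_add hiF (integrable_const _)] at e1
  have e4 : ∫ x, ‖F x‖ ^ 2 ∂μ ≤ ρ ^ 2 * ∫ x, ‖D (x - x₀)‖ ^ 2 ∂μ := by
    rw [← integral_const_mul]
    refine integral_mono hiF (hi.const_mul _) fun x => ?_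
    simp only
    rw [← mul_pow]
    gcongr; exact hFb x
  have hV : 0 ≤ ∫ x, ‖D (x - x₀)‖ ^ 2 ∂μ := integral_nonneg fun x => by positivity
  simp only [integral_const, probReal_univ, one_smul] at e1
  have hρ1 : ρ ≤ 1 := by rw [hρ]; nlinarith
  have h5 : ρ ^ 2 ≤ ρ := by nlinarith
  have h6 := mul_le_mul_of_nonneg_right h5 hV
  rw [le_div_iff₀ (by linarith)]
  have h7 : α * ((∫ x, ‖D (x - x₀)‖ ^ 2 ∂μ) * (1 - γ)) ≤ α * (α * ∫ z, ‖D z‖ ^ 2 ∂ν) := by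
    have : (∫ x, ‖D (x - x₀)‖ ^ 2 ∂μ) * (1 - ρ) ≤ α ^ 2 * ∫ z, ‖D z‖ ^ 2 ∂ν := by linarith
    rw [hρ] at this
    linarith
  exact le_of_mul_le_mul_left h7 h0

end Chain

section Taylor
variable {d : ℕ}
local notation "𝔼" => EuclideanSpace ℝ (Fin d)

lemma taylor_scalar (f : 𝔼 → ℝ) (hf : ContDiff ℝ 2 f) (M : ℝ) (hM0 : 0 ≤ M)
    (hM : ∀ x : 𝔼, ∀ j k : Fin d, |iteratedFDeriv ℝ 2 f x
        ![EuclideanSpace.single j 1, EuclideanSpace.single k 1]| ≤ M) (x e : 𝔼) :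
    |f (x + e) - f x - fderiv ℝ f x e| ≤ M * d ^ 2 * ‖e‖ ^ 2 := by
  have hd1 : Differentiable ℝ f := hf.differentiable (by norm_num)
  have hd2 : Differentiable ℝ (fderiv ℝ f) :=
    (hf.fderiv_right (m := 1) (by norm_num)).differentiable (by norm_num)
  have hcoord : ∀ (u : 𝔼) i, |u i| ≤ ‖u‖ := fun u i => by
    rw [← Real.norm_eq_abs]; exact PiLp.norm_apply_le u i
  have hsum : ∀ u : 𝔼, u = ∑ i, u i • EuclideanSpace.single i (1 : ℝ) := fun u => by
    ext j
    simp [Finset.sum_apply, Pi.single_apply]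
  have h2 : ∀ z, ‖fderiv ℝ (fderiv ℝ f) z‖ ≤ M * d ^ 2 := by
    intro z
    refine ContinuousLinearMap.opNorm_le_bound₂ _ (by positivity) fun u v => ?_
    conv_lhs => rw [hsum u, hsum v]
    simp only [map_sum, _root_.sum_apply, map_smul, _root_.smul_apply,
      smul_eq_mul]
    calc ‖_‖ ≤ ∑ k : Fin d, ∑ j : Fin d, ‖u‖ * (‖v‖ * M) := by
          refine norm_sum_le_of_le _ fun k _ => ?_
          simp only [Finset.mul_sum]
          refine norm_sum_le_of_le _ fun j _ => ?_
          have h := hM z j k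
          rw [iteratedFDeriv_two_apply] at h
          simp only [norm_mul, Real.norm_eq_abs]
          calc _ ≤ ‖v‖ * (‖u‖ * M) := by
                gcongr
                exacts [hcoord v k, hcoord u j, h]
            _ = _ := by ring
      _ = _ := by simp; ring
  have h3 : ∀ z, ‖fderiv ℝ f z - fderiv ℝ f x‖ ≤ M * d ^ 2 * ‖z - x‖ := fun z =>
    convex_univ.norm_image_sub_le_of_norm_fderiv_le (fun y _ => hd2 y) (fun y _ => h2 y)
      (Set.mem_univ x) (Set.mem_univ z)
  have h4 := (convex_closedBall x ‖e‖).norm_image_sub_le_of_norm_fderiv_le'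
    (f := f) (φ := fderiv ℝ f x) (C := M * d ^ 2 * ‖e‖) (fun y _ => hd1 y) (fun y hy => by
      refine (h3 y).trans ?_
      gcongr
      simpa [dist_eq_norm] using hy) (Metric.mem_closedBall_self (norm_nonneg e))
    (y := x + e) (by simp [dist_eq_norm])
  rw [add_sub_cancel_left, Real.norm_eq_abs] at h4
  calc _ ≤ _ := h4
    _ = _ := by ring

/-- The quadratic Taylor bound, from bounds on the second partial derivatives of the components. -/
lemma taylor_bound (T : 𝔼 → 𝔼) (hT : ContDiff ℝ 2 T) (M : ℝ) (hM0 : 0 ≤ M)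
    (hM : ∀ x : 𝔼, ∀ i j k : Fin d, |iteratedFDeriv ℝ 2 (fun y => T y i) x
        ![EuclideanSpace.single j 1, EuclideanSpace.single k 1]| ≤ M) (x e : 𝔼) :
    ‖T (x + e) - T x - fderiv ℝ T x e‖ ≤ d * (M * d ^ 2) * ‖e‖ ^ 2 := by
  have hc : ∀ i, |(T (x + e) - T x - fderiv ℝ T x e) i| ≤ M * d ^ 2 * ‖e‖ ^ 2 := by
    intro i
    have hTi : ContDiff ℝ 2 (fun y => T y i) :=
      (EuclideanSpace.proj (𝕜 := ℝ) i).contDiff.comp hT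
    have h := taylor_scalar _ hTi M hM0 (fun x j k => hM x i j k) x e
    have hd : HasFDerivAt (fun y => T y i) ((EuclideanSpace.proj (𝕜 := ℝ) i) ∘L fderiv ℝ T x) x :=
      (EuclideanSpace.proj (𝕜 := ℝ) i).hasFDerivAt.comp x
        (hT.differentiable (by norm_num) x).hasFDerivAt
    rw [hd.fderiv] at h
    exact h
  set u := T (x + e) - T x - fderiv ℝ T x e
  have : u = ∑ i, u i • EuclideanSpace.single i (1 : ℝ) := by
    ext j
    simp [Finset.sum_apply, Pi.single_apply]
  rw [this]
  calc _ ≤ ∑ i : Fin d, M * d ^ 2 * ‖e‖ ^ 2 := norm_sum_le_of_le _ fun i _ => by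
        rw [norm_smul]; simpa using hc i
    _ = _ := by simp; ring

end Taylor

/-! ### Rescaling and the rate for a fixed step size -/

section Rescale
variable {V : Type*} [NormedAddCommGroup V] [InnerProductSpace ℝ V] [FiniteDimensional ℝ V]
  [MeasurableSpace V] [BorelSpace V]

/-- The law of `(X - x₀) / √α` is invariant for the linear recursion `y ↦ A y + √α ξ` with
`A = 1 + α (J - 1)`, perturbed by the Taylor remainder of `T`. -/
lemma rescaled_invariant (T : V → V) (hTc : Continuous T) (x₀ : V) (Jc : V →L[ℝ] V) {α s : ℝ}
    (hs : 0 < s) (hsα : s ^ 2 = α) (ν μ : Measure V) [IsProbabilityMeasure ν]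
    [IsProbabilityMeasure μ] (hinv : Measure.map (sastep T α) (μ.prod ν) = μ) :
    Measure.map (fun q : V × V => (1 + α • (Jc - 1) : V →L[ℝ] V) q.1 +
        s • (T (x₀ + s • q.1) - x₀ - Jc (s • q.1)) + s • q.2)
      ((Measure.map (fun x => s⁻¹ • (x - x₀)) μ).prod ν) =
      Measure.map (fun x => s⁻¹ • (x - x₀)) μ := by
  have hc : Continuous (sastep T α) := by unfold sastep; fun_prop
  have hfc : Continuous (fun x : V => s⁻¹ • (x - x₀)) := by fun_prop
  have e : (Measure.map (fun x : V => s⁻¹ • (x - x₀)) μ).prod ν =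
      Measure.map (Prod.map (fun x : V => s⁻¹ • (x - x₀)) id) (μ.prod ν) := by
    rw [← Measure.map_prod_map _ _ hfc.measurable measurable_id, Measure.map_id]
  rw [e, Measure.map_map (by fun_prop) (by fun_prop)]
  conv_rhs => rw [← hinv, Measure.map_map (by fun_prop) (by fun_prop)]
  congr 1
  ext1 ⟨x, z⟩
  simp only [Function.comp_apply, Prod.map_apply, id, sastep, _root_.add_apply,
    _root_.smul_apply, _root_.sub_apply, one_apply_eq_self]
  rw [smul_inv_smul₀ hs.ne', map_smul, add_sub_cancel, ← hsα]
  have h2 : s ^ 2 * s⁻¹ = s := by field_simp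
  have h3 : s⁻¹ * s ^ 2 = s := by field_simp
  simp only [smul_sub, smul_add, smul_smul, h2, h3, map_sub]
  abel

/-- After rescaling, the second moment is bounded independently of the step size. -/
lemma rescaled_second_moment (D Di : V →L[ℝ] V) (hDi : ∀ x, Di (D x) = x) (x₀ : V) {α s W : ℝ}
    (hs : 0 < s) (hsα : s ^ 2 = α) (μ : Measure V) [IsProbabilityMeasure μ]
    (hμ : MemLp (fun x => x) 2 μ) (hW : ∫ x, ‖D (x - x₀)‖ ^ 2 ∂μ ≤ α * W) :
    Integrable (fun y => ‖y‖ ^ 2) (Measure.map (fun x => s⁻¹ • (x - x₀)) μ) ∧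
      ∫ y, ‖y‖ ^ 2 ∂(Measure.map (fun x => s⁻¹ • (x - x₀)) μ) ≤ ‖Di‖ ^ 2 * W := by
  have hfc : Continuous (fun x : V => s⁻¹ • (x - x₀)) := by fun_prop
  have hα : 0 < α := by rw [← hsα]; positivity
  have hsub : MemLp (fun x => x - x₀) 2 μ := hμ.sub (memLp_const _)
  have hi1 : Integrable (fun x => ‖x - x₀‖ ^ 2) μ := hsub.integrable_norm_pow (by norm_num)
  have hi2 : Integrable (fun x => ‖D (x - x₀)‖ ^ 2) μ :=
    (D.comp_memLp' hsub).integrable_norm_pow (by norm_num)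
  have e : ∀ x, ‖s⁻¹ • (x - x₀)‖ ^ 2 = α⁻¹ * ‖x - x₀‖ ^ 2 := fun x => by
    rw [norm_smul, mul_pow, ← hsα, Real.norm_eq_abs, sq_abs, inv_pow]
  constructor
  · rw [integrable_map_measure (by fun_prop) hfc.aemeasurable]
    simpa only [Function.comp_def, e] using hi1.const_mul α⁻¹
  · rw [integral_map hfc.aemeasurable (by fun_prop)]
    simp only [e]
    rw [integral_const_mul]
    have h1 : ∫ x, ‖x - x₀‖ ^ 2 ∂μ ≤ ‖Di‖ ^ 2 * ∫ x, ‖D (x - x₀)‖ ^ 2 ∂μ := by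
      rw [← integral_const_mul]
      refine integral_mono hi1 (hi2.const_mul _) fun x => ?_
      simp only
      rw [← mul_pow]
      gcongr
      have := Di.le_opNorm (D (x - x₀))
      rwa [hDi] at this
    calc _ ≤ α⁻¹ * (‖Di‖ ^ 2 * (α * W)) := by gcongr; exact h1.trans (by gcongr)
      _ = _ := by field_simp

end Rescale

section Core
variable {d : ℕ}
local notation "𝔼" => EuclideanSpace ℝ (Fin d)
local notation "𝒩" => ProbabilityTheory.stdGaussian (EuclideanSpace ℝ (Fin d))

set_option maxHeartbeats 2000000 in
/-- The rate for a fixed step size, with all constants spelled out: `C` bounds the local errors,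
`C₀` the error of the step `k = 0`, where `h` is not smoothed. -/
lemma rate_fixed (T : 𝔼 → 𝔼) (hTc : Continuous T) {Ct : ℝ} (hCt : 0 ≤ Ct) {x₀ : 𝔼}
    {B : 𝔼 →L[ℝ] 𝔼}
    (htay : ∀ e, ‖T (x₀ + e) - x₀ - (B + 1) e‖ ≤ Ct * ‖e‖ ^ 2)
    (P Sg LP : 𝔼 →L[ℝ] 𝔼) (hP : P.adjoint = P)
    (hL : ∀ t, 2 * ⟪P (B.adjoint t), t⟫ = -⟪Sg t, t⟫) {s₀ : ℝ}
    (hp : ∀ t, 0 ≤ ⟪P t, t⟫) (hs₀ : ∀ t, s₀ * ‖t‖ ^ 2 ≤ ⟪Sg t, t⟫) (hs0 : 0 < s₀)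
    (hLP : ∀ t, ‖LP.adjoint t‖ ^ 2 = ⟪P t, t⟫)
    (ν : Measure 𝔼) [IsProbabilityMeasure ν] (h3 : Integrable (fun u => ‖u‖ ^ 3) ν)
    (hmean : ∫ u, u ∂ν = 0) (hcov : ∀ t, ∫ u, ⟪u, t⟫ ^ 2 ∂ν = ⟪Sg t, t⟫)
    {N g : ℝ} (hN0 : 0 ≤ N) (hg : 0 < g) (hg1 : g ≤ 1) {V2 : ℝ}
    {α : ℝ} (hα : 0 < α) (hα3 : α ≤ 1 / 3) (hαb : α * ‖B‖ ≤ 1 / 2)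
    (hαp : α * (‖B‖ ^ 2 * ‖P‖) ≤ s₀ / 2)
    (hN : ∀ k : ℕ, ‖(1 + α • B) ^ k‖ ≤ N * (1 - α * g) ^ k)
    (μ : Measure 𝔼) [IsProbabilityMeasure μ]
    (hinv : Measure.map (sastep T α) (μ.prod ν) = μ)
    (hi2 : Integrable (fun y => ‖y‖ ^ 2) (Measure.map (fun x => (√α)⁻¹ • (x - x₀)) μ))
    (hV2 : ∫ y, ‖y‖ ^ 2 ∂(Measure.map (fun x => (√α)⁻¹ • (x - x₀)) μ) ≤ V2)
    {κ C C₀ : ℝ} (hκ : κ = √((‖P‖ + ‖Sg‖ * N ^ 2) * (1 + 2 * ‖B‖) / (s₀ / 2)))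
    (hC : C = gK 𝔼 * κ * (N ^ 3 * ((∫ u, ‖u‖ ^ 3 ∂ν) + (√‖Sg‖) ^ 3 * ∫ u, ‖u‖ ^ 3 ∂𝒩) +
        N ^ 2 * ((Module.finrank ℝ 𝔼 : ℝ) ^ 2 * (‖B‖ ^ 2 * ‖P‖))) *
          (1 / (s₀ / 2) + 2 * ‖B‖ / (s₀ / 2) + 1))
    (hC₀ : C₀ = N * ((∫ u, ‖u‖ ∂ν) + √‖Sg‖ * ∫ u, ‖u‖ ∂𝒩))
    {h : 𝔼 → ℝ} (hh : LipschitzWith 1 h) :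
    |(∫ y, h y ∂(Measure.map (fun x => (√α)⁻¹ • (x - x₀)) μ)) - ∫ n, h (LP n) ∂𝒩| ≤
      (N * Ct * V2 / g + C * (1 - Real.log g + 1 / g) + C₀) * (√α * Real.log (1 / α)) := by
  set s := √α with hs
  have hs0' : 0 < s := Real.sqrt_pos.2 hα
  have hsα : s ^ 2 = α := Real.sq_sqrt hα.le
  set π : Measure 𝔼 := Measure.map (fun x => s⁻¹ • (x - x₀)) μ with hπdef
  have hπp : IsProbabilityMeasure π := Measure.isProbabilityMeasure_map (by fun_prop)
  have hle : ∀ (Q : 𝔼 →L[ℝ] 𝔼) t, ⟪Q t, t⟫ ≤ ‖Q‖ * ‖t‖ ^ 2 := fun Q t => by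
    calc _ ≤ ‖Q t‖ * ‖t‖ := real_inner_le_norm _ _
      _ ≤ ‖Q‖ * ‖t‖ * ‖t‖ := by gcongr; exact Q.le_opNorm t
      _ = _ := by ring
  have hρ0 : 0 ≤ 1 - α * g := by nlinarith
  have hρ1 : 1 - α * g < 1 := by have := mul_pos hα hg; linarith
  obtain ⟨L, Li, hLcov, hLLi, hLκ, hLic, hL1n⟩ := exists_gauss_family B P Sg hP hL le_rfl
    (norm_nonneg B) hp (hle P) hs₀ hs0 (hle Sg) (norm_nonneg _) (norm_nonneg _) hα hαb hαp
    (N := N) (fun k => (hN k).trans (mul_le_of_le_one_right hN0 (pow_le_one₀ hρ0 hρ1.le)))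
  have hπ1 : Integrable (fun y => ‖y‖) π := by
    refine Integrable.mono' ((integrable_const 1).add hi2) (by fun_prop)
      (Filter.Eventually.of_forall fun y => ?_)
    simp only [Pi.add_apply, norm_norm]
    nlinarith [sq_nonneg (‖y‖ - 1)]
  have hν1 : Integrable (fun u => ‖u‖) ν := by
    simpa using integrable_pow_of_cube h3 (k := 1) (by norm_num)
  have hinvπ := rescaled_invariant T hTc x₀ (B + 1) hs0' hsα ν μ hinv
  rw [add_sub_cancel_right] at hinvπ
  -- the Taylor remainder, of order `α ^ (3 / 2)`
  set p : 𝔼 → 𝔼 := fun y => s • (T (x₀ + s • y) - x₀ - (B + 1) (s • y)) with hpdef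
  have hpc : Continuous p := by fun_prop
  have hpb : ∀ y, ‖p y‖ ≤ Ct * α * s * ‖y‖ ^ 2 := by
    intro y
    rw [hpdef]
    simp only
    rw [norm_smul, Real.norm_of_nonneg hs0'.le]
    calc _ ≤ s * (Ct * ‖s • y‖ ^ 2) := by gcongr; exact htay _
      _ = _ := by rw [norm_smul, Real.norm_of_nonneg hs0'.le, mul_pow, hsα]; ring
  have hpi : Integrable (fun y => ‖p y‖) π :=
    Integrable.mono' (hi2.const_mul (Ct * α * s)) (by fun_prop)
      (Filter.Eventually.of_forall fun y => by rw [norm_norm]; exact hpb y)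
  have hε : ∫ y, ‖p y‖ ∂π ≤ Ct * α * s * V2 := by
    calc _ ≤ ∫ y, Ct * α * s * ‖y‖ ^ 2 ∂π := integral_mono hpi (hi2.const_mul _) hpb
      _ ≤ _ := by rw [integral_const_mul]; gcongr
  -- the covariances `α Σ` of the noise and `L 1 (L 1)ᵀ` of its substitute differ by `O(α ^ 2)`
  have hL1 : ∀ t, |α * ⟪Sg t, t⟫ - ‖(L 1).adjoint t‖ ^ 2| ≤
      α ^ 2 * (‖B‖ ^ 2 * ‖P‖) * ‖t‖ ^ 2 := by
    intro t
    have := cov_step B P Sg hP hL α t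
    rw [hLcov, pow_one, this]
    have e : α * ⟪Sg t, t⟫ - (⟪P t, t⟫ - (⟪P t, t⟫ - α * ⟪Sg t, t⟫ +
        α ^ 2 * ⟪P (B.adjoint t), B.adjoint t⟫)) = α ^ 2 * ⟪P (B.adjoint t), B.adjoint t⟫ := by
      ring
    rw [e, abs_of_nonneg (mul_nonneg (by positivity) (hp _))]
    have hBa : ‖B.adjoint t‖ ≤ ‖B‖ * ‖t‖ := by
      have := B.adjoint.le_opNorm t
      rwa [LinearIsometryEquiv.norm_map] at this
    calc _ ≤ α ^ 2 * (‖P‖ * (‖B‖ * ‖t‖) ^ 2) := by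
          gcongr
          exact (hle P _).trans (by gcongr)
      _ = _ := by ring
  have hL1' : ‖L 1‖ ≤ √‖Sg‖ * s := by
    rw [hs, ← Real.sqrt_mul (norm_nonneg _)]
    exact Real.le_sqrt_of_sq_le hL1n
  have hloc := local_bound hh (1 + α • B) Sg L Li ν h3 hmean hcov hs0' hsα (by linarith)
    (by positivity) hρ0 hρ1.le hN hN0 (by linarith : 0 < s₀ / 2) (norm_nonneg B)
    (Real.sqrt_nonneg _) hL1 hL1' hLLi hLκ hLic
  rw [← hκ, ← hC, ← hC₀] at hloc
  have htel := telescope hh (1 + α • B) P LP L hLcov hLP hN ν π hν1 hπ1 s p hpc hpi hinvπ _ hloc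
  have hgK := gK_nonneg (V := 𝔼)
  have hκ0 : 0 ≤ κ := by rw [hκ]; positivity
  have hm3 : 0 ≤ ∫ u, ‖u‖ ^ 3 ∂ν := integral_nonneg fun u => by positivity
  have hm3' : 0 ≤ ∫ u : 𝔼, ‖u‖ ^ 3 ∂𝒩 := integral_nonneg fun u => by positivity
  have hm1 : 0 ≤ ∫ u, ‖u‖ ∂ν := integral_nonneg fun u => by positivity
  have hm1' : 0 ≤ ∫ u : 𝔼, ‖u‖ ∂𝒩 := integral_nonneg fun u => by positivity
  have hC' : 0 ≤ C := by rw [hC]; positivity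
  have hC₀' : 0 ≤ C₀ := by rw [hC₀]; positivity
  have hlim := limit_bound hρ0 hρ1 hN0 (integral_nonneg fun y => norm_nonneg (p y)) hC' hs0'.le
    hα.le hC₀' htel
  refine hlim.trans ?_
  obtain ⟨hlog, -, -⟩ := sqrt_log_facts hα hα3
  have hV20 : 0 ≤ V2 := le_trans (integral_nonneg fun y => by positivity) hV2
  have hlg : Real.log g ≤ 0 := Real.log_nonpos hg.le hg1
  have e1 : 1 - (1 - α * g) = α * g := by ring
  -- this is where the logarithmic factor comes from
  have e2 : -Real.log (α * g) = Real.log (1 / α) - Real.log g := by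
    rw [Real.log_mul hα.ne' hg.ne', one_div, Real.log_inv]; ring
  rw [e1, e2]
  set ℓ := Real.log (1 / α) with hℓ
  have f1 : N * (∫ y, ‖p y‖ ∂π) / (α * g) ≤ N * Ct * V2 / g * (s * ℓ) := by
    calc _ ≤ N * (Ct * α * s * V2) / (α * g) := by gcongr
      _ = N * Ct * V2 / g * (s * 1) := by field_simp
      _ ≤ _ := by gcongr
  have f2 : C * s * (ℓ - Real.log g + α / (α * g)) ≤ C * (1 - Real.log g + 1 / g) * (s * ℓ) := by
    have : ℓ - Real.log g + α / (α * g) ≤ (1 - Real.log g + 1 / g) * ℓ := by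
      have e3 : α / (α * g) = 1 / g := by field_simp
      rw [e3]
      have : 0 ≤ 1 / g := by positivity
      nlinarith [mul_nonneg this (sub_nonneg.2 hlog),
        mul_nonneg (neg_nonneg.2 hlg) (sub_nonneg.2 hlog)]
    calc _ ≤ C * s * ((1 - Real.log g + 1 / g) * ℓ) := by gcongr
      _ = _ := by ring
  have f3 : C₀ * s ≤ C₀ * (s * ℓ) := by
    gcongr
    nlinarith
  linarith

end Core

/-! ### Matrices, covariances and weights -/

section MatrixFacts
variable {d : ℕ}
local notation "𝔼" => EuclideanSpace ℝ (Fin d)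
local notation "𝒩" => ProbabilityTheory.stdGaussian (EuclideanSpace ℝ (Fin d))

lemma posDef_inner_pos {S : Matrix (Fin d) (Fin d) ℝ} (hS : S.PosDef) {x : 𝔼} (hx : x ≠ 0) :
    0 < ⟪toEuclideanCLM (𝕜 := ℝ) S x, x⟫ := by
  have h := hS.dotProduct_mulVec_pos (x := x.ofLp) (by simpa using hx)
  have e : ⟪toEuclideanCLM (𝕜 := ℝ) S x, x⟫ = star x.ofLp ⬝ᵥ S *ᵥ x.ofLp := by
    rw [real_inner_comm, EuclideanSpace.inner_eq_star_dotProduct, dotProduct_comm]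
    simp
  rwa [e]

lemma posDef_inner_nonneg {S : Matrix (Fin d) (Fin d) ℝ} (hS : S.PosDef) (x : 𝔼) :
    0 ≤ ⟪toEuclideanCLM (𝕜 := ℝ) S x, x⟫ := by
  rcases eq_or_ne x 0 with rfl | hx
  · simp
  · exact (posDef_inner_pos hS hx).le

lemma posDef_adjoint {S : Matrix (Fin d) (Fin d) ℝ} (hS : S.PosDef) :
    (toEuclideanCLM (𝕜 := ℝ) S).adjoint = toEuclideanCLM (𝕜 := ℝ) S := by
  rw [← ContinuousLinearMap.star_eq_adjoint, ← map_star, star_eq_conjTranspose,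
    hS.isHermitian.eq]

lemma posDef_lower (hd : 1 ≤ d) {S : Matrix (Fin d) (Fin d) ℝ} (hS : S.PosDef) :
    ∃ s₀ : ℝ, 0 < s₀ ∧ ∀ t : 𝔼, s₀ * ‖t‖ ^ 2 ≤ ⟪toEuclideanCLM (𝕜 := ℝ) S t, t⟫ := by
  have : Nonempty (Fin d) := ⟨⟨0, hd⟩⟩
  have hne : (Metric.sphere (0 : 𝔼) 1).Nonempty := NormedSpace.sphere_nonempty.2 zero_le_one
  obtain ⟨x, hx, hmin⟩ := (isCompact_sphere (0 : 𝔼) 1).exists_isMinOn hne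
    (f := fun t => ⟪toEuclideanCLM (𝕜 := ℝ) S t, t⟫) (by fun_prop)
  have hx0 : x ≠ 0 := by rintro rfl; simp at hx
  refine ⟨_, posDef_inner_pos hS hx0, fun t => ?_⟩
  rcases eq_or_ne t 0 with rfl | ht
  · simp
  have h : ⟪toEuclideanCLM (𝕜 := ℝ) S x, x⟫ ≤
      ⟪toEuclideanCLM (𝕜 := ℝ) S (‖t‖⁻¹ • t), ‖t‖⁻¹ • t⟫ :=
    hmin (by simp [norm_smul, ht])
  rw [map_smul, inner_smul_left, inner_smul_right, conj_trivial] at h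
  have ht' : 0 < ‖t‖ := norm_pos_iff.2 ht
  calc _ ≤ (‖t‖⁻¹ * (‖t‖⁻¹ * ⟪toEuclideanCLM (𝕜 := ℝ) S t, t⟫)) * ‖t‖ ^ 2 := by gcongr
    _ = _ := by field_simp

/-- The Lyapunov equation as an identity of quadratic forms, using the symmetry of `Σ_Y`. -/
lemma lyapunov_form {J S SY : Matrix (Fin d) (Fin d) ℝ}
    (hLyap : (J - 1) * SY + SY * (J - 1)ᵀ + S = 0) (hSY : SY.PosDef) (t : 𝔼) :
    2 * ⟪toEuclideanCLM (𝕜 := ℝ) SY ((toEuclideanCLM (𝕜 := ℝ) (J - 1)).adjoint t), t⟫ =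
      -⟪toEuclideanCLM (𝕜 := ℝ) S t, t⟫ := by
  have h := congrArg (fun Q => ⟪toEuclideanCLM (𝕜 := ℝ) Q t, t⟫) hLyap
  have hstar : toEuclideanCLM (𝕜 := ℝ) (J - 1)ᵀ = (toEuclideanCLM (𝕜 := ℝ) (J - 1)).adjoint := by
    rw [← ContinuousLinearMap.star_eq_adjoint, ← map_star, star_eq_conjTranspose,
      conjTranspose_eq_transpose_of_trivial]
  simp only [map_add, map_mul, hstar, map_zero, _root_.add_apply, mul_apply_eq_comp,
    inner_add_left, _root_.zero_apply, inner_zero_left] at h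
  have h1 : ⟪toEuclideanCLM (𝕜 := ℝ) (J - 1) (toEuclideanCLM (𝕜 := ℝ) SY t), t⟫ =
      ⟪toEuclideanCLM (𝕜 := ℝ) SY ((toEuclideanCLM (𝕜 := ℝ) (J - 1)).adjoint t), t⟫ := by
    rw [← ContinuousLinearMap.adjoint_inner_right, ← ContinuousLinearMap.adjoint_inner_right,
      posDef_adjoint hSY, real_inner_comm]
  linarith

lemma cov_form (ν : Measure 𝔼) [IsProbabilityMeasure ν] (h2 : Integrable (fun x => ‖x‖ ^ 2) ν)
    {S : Matrix (Fin d) (Fin d) ℝ} (hcov : ∀ i j, (∫ x, x i * x j ∂ν) = S i j) (t : 𝔼) :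
    ∫ u, ⟪u, t⟫ ^ 2 ∂ν = ⟪toEuclideanCLM (𝕜 := ℝ) S t, t⟫ := by
  have hcoord : ∀ (u : 𝔼) i, |u i| ≤ ‖u‖ := fun u i => by
    rw [← Real.norm_eq_abs]; exact PiLp.norm_apply_le u i
  have hi : ∀ i j, Integrable (fun x : 𝔼 => x i * x j) ν := fun i j =>
    Integrable.mono' h2 (by fun_prop) (Filter.Eventually.of_forall fun x => by
      rw [Real.norm_eq_abs, abs_mul, pow_two]
      gcongr <;> exact hcoord _ _)
  have e : ∀ u : 𝔼, ⟪u, t⟫ ^ 2 = ∑ i, ∑ j, t i * t j * (u i * u j) := fun u => by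
    rw [PiLp.inner_apply, pow_two, Finset.sum_mul_sum]
    refine Finset.sum_congr rfl fun i _ => Finset.sum_congr rfl fun j _ => ?_
    simp only [RCLike.inner_apply, conj_trivial]
    ring
  simp_rw [e]
  rw [integral_finsetSum _ fun i _ => integrable_finsetSum _ fun j _ => (hi i j).const_mul _]
  simp_rw [integral_finsetSum _ fun j _ => (hi _ j).const_mul _, integral_const_mul, hcov]
  rw [PiLp.inner_apply]
  refine Finset.sum_congr rfl fun i _ => ?_
  simp only [RCLike.inner_apply, conj_trivial, ofLp_toEuclideanCLM, mulVec, dotProduct,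
    Finset.mul_sum]
  exact Finset.sum_congr rfl fun j _ => by ring

/-- A law with the characteristic function of the centered Gaussian of covariance `P = LP LPᵀ` is
the image of the standard Gaussian under `LP`. -/
lemma gauss_eq_map (LP P : 𝔼 →L[ℝ] 𝔼) (hLP : ∀ t, ‖LP.adjoint t‖ ^ 2 = ⟪P t, t⟫)
    (γG : Measure 𝔼) [IsProbabilityMeasure γG]
    (hγG : ∀ t : 𝔼, (∫ x, Complex.exp (Complex.I * ((⟪t, x⟫ : ℝ) : ℂ)) ∂γG)
        = Complex.exp (-(1/2 : ℂ) * ((⟪t, P t⟫ : ℝ) : ℂ))) :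
    γG = Measure.map LP 𝒩 := by
  have : IsProbabilityMeasure (Measure.map LP 𝒩) := Measure.isProbabilityMeasure_map (by fun_prop)
  refine Measure.ext_of_charFun (funext fun t => ?_)
  rw [charFun_apply, charFun_apply, integral_map (by fun_prop) (by fun_prop)]
  have e1 : ∀ x : 𝔼, Complex.exp ((⟪x, t⟫ : ℝ) * Complex.I) =
      Complex.exp (Complex.I * ((⟪t, x⟫ : ℝ) : ℂ)) := fun x => by
    rw [real_inner_comm, mul_comm]
  simp_rw [e1 , hγG]
  have h := ProbabilityTheory.charFun_stdGaussian (LP.adjoint t)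
  rw [charFun_apply] at h
  have e2 : ∀ x : 𝔼, Complex.exp (Complex.I * ((⟪t, LP x⟫ : ℝ) : ℂ)) =
      Complex.exp ((⟪x, LP.adjoint t⟫ : ℝ) * Complex.I) := fun x => by
    rw [ContinuousLinearMap.adjoint_inner_right, real_inner_comm, mul_comm]
  simp_rw [e2, h]
  congr 1
  rw [← Complex.ofReal_pow, hLP, real_inner_comm]
  ring

/-- The weighted norm is the Euclidean norm composed with `diag (√wᵢ)`. -/
lemma exists_weight {w : Fin d → ℝ} (hw : ∀ i, 0 < w i) :
    ∃ D Di : 𝔼 →L[ℝ] 𝔼, (∀ x, Di (D x) = x) ∧ (∀ x, D (Di x) = x) ∧ ∀ x, ‖D x‖ = wnorm w x := by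
  refine ⟨toEuclideanCLM (𝕜 := ℝ) (diagonal fun i => √(w i)),
    toEuclideanCLM (𝕜 := ℝ) (diagonal fun i => (√(w i))⁻¹), fun x => ?_, fun x => ?_, fun x => ?_⟩
  · ext i
    have := (Real.sqrt_pos.2 (hw i)).ne'
    simp [mulVec_diagonal, this]
  · ext i
    have := (Real.sqrt_pos.2 (hw i)).ne'
    simp [mulVec_diagonal, this]
  · rw [EuclideanSpace.norm_eq, wnorm]
    congr 1
    refine Finset.sum_congr rfl fun i _ => ?_
    simp [mulVec_diagonal, mul_pow, Real.sq_sqrt (hw i).le]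

/-- A Wasserstein bound with rate `√α log (1/α)` yields, after projection to a line, the tail
bound with rate `α^{1/4} (log (1/α))^{1/2} / a`. -/
lemma tail_fixed (π : Measure 𝔼) [IsProbabilityMeasure π] (LP P : 𝔼 →L[ℝ] 𝔼)
    (hLP : ∀ t, ‖LP.adjoint t‖ ^ 2 = ⟪P t, t⟫) {α U : ℝ} (hα : 0 < α) (hα3 : α ≤ 1 / 3)
    (hW : ∀ h : 𝔼 → ℝ, LipschitzWith 1 h →
      |(∫ y, h y ∂π) - ∫ n, h (LP n) ∂𝒩| ≤ U * (√α * Real.log (1 / α)))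
    {ζ : 𝔼} (hζ : ‖ζ‖ = 1) (hv : 0 < ⟪P ζ, ζ⟫) {a : ℝ} (ha : 0 < a) :
    |(π {y | a < ⟪y, ζ⟫}).toReal -
      ((ProbabilityTheory.gaussianReal 0 (⟪P ζ, ζ⟫ : ℝ).toNNReal) (Set.Ioi a)).toReal| ≤
      (4 * U + √‖P‖) * (α ^ ((1:ℝ)/4) * √(Real.log (1/α)) / a) := by
  obtain ⟨hlog, hle, hsq⟩ := sqrt_log_facts hα hα3
  set r := √α * Real.log (1 / α) with hr
  have hr0 : 0 < r := by have := Real.sqrt_pos.2 hα; positivity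
  have hm : Measurable (fun y : 𝔼 => ⟪y, ζ⟫) := by fun_prop
  have hp : IsProbabilityMeasure (Measure.map (fun y : 𝔼 => ⟪y, ζ⟫) π) :=
    Measure.isProbabilityMeasure_map hm.aemeasurable
  have hlip : LipschitzWith 1 (fun y : 𝔼 => ⟪y, ζ⟫) := by
    refine LipschitzWith.of_dist_le_mul fun x y => ?_
    rw [Real.dist_eq, ← inner_sub_left, dist_eq_norm, NNReal.coe_one, one_mul]
    exact (abs_real_inner_le_norm _ _).trans (by rw [hζ, mul_one])
  have hW' : ∀ φ : ℝ → ℝ, LipschitzWith 1 φ →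
      |(∫ x, φ x ∂(Measure.map (fun y : 𝔼 => ⟪y, ζ⟫) π)) -
        ∫ x, φ x ∂ProbabilityTheory.gaussianReal 0 (⟪P ζ, ζ⟫ : ℝ).toNNReal| ≤ U * r := by
    intro φ hφ
    have h := hW (fun y => φ ⟪y, ζ⟫) (by simpa [Function.comp_def] using hφ.comp hlip)
    rw [← gaussian_proj LP ζ (hLP ζ), integral_map hm.aemeasurable
      hφ.continuous.aestronglyMeasurable, integral_map (by fun_prop)
      hφ.continuous.aestronglyMeasurable]
    exact h
  have h := tail_of_wass (Measure.map (fun y : 𝔼 => ⟪y, ζ⟫) π)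
    (by simpa using hv) hW' ha (η := √r / 4) (by positivity) (by
      have : √r ≤ 2 := Real.sqrt_le_iff.2 ⟨by norm_num, by linarith⟩
      linarith)
  rw [measureReal_def, measureReal_def, Measure.map_apply hm measurableSet_Ioi] at h
  refine h.trans ?_
  rw [← hsq, Real.coe_toNNReal _ hv.le]
  have h1 : U * r / (√r / 4) = 4 * U * √r := by
    have : r = √r * √r := (Real.mul_self_sqrt hr0.le).symm
    have h0 : √r ≠ 0 := (Real.sqrt_pos.2 hr0).ne'
    rw [div_eq_iff (by positivity)]
    linear_combination U * this
  have h2 : √⟪P ζ, ζ⟫ ≤ √‖P‖ := by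
    refine Real.sqrt_le_sqrt ((real_inner_le_norm _ _).trans ?_)
    have := P.le_opNorm ζ
    rwa [hζ, mul_one] at this ⊢
  rw [h1, ← mul_div_assoc (4 * √⟪P ζ, ζ⟫), ← mul_div_assoc (4 * U + √‖P‖)]
  refine div_le_div_of_nonneg_right ?_ ha.le
  nlinarith [mul_le_mul_of_nonneg_right h2 (Real.sqrt_nonneg r)]

end MatrixFacts

/-! ### The theorem -/

/-- stochastic approximation with a contractive operator, i.i.d. noise.
For a continuously differentiable operator `T` that is a `γ`-contraction in a weighted
Euclidean norm, with bounded second partials, unique fixed point `x*` and Jacobian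
`J := DT(x*)`, i.i.d. noise with mean zero, covariance `Σ ≻ 0` and finite third moment,
and `Σ_Y ≻ 0` solving `(J−I)Σ_Y + Σ_Y(J−I)ᵀ + Σ = 0`, there exist `α'' ∈ (0,1]` and
constants `U₃, U₃'` such that for every `α ∈ (0,α'')` the chain
`X_{k+1} = X_k + α(T(X_k) − X_k + ξ_k)` has a unique invariant law `μ_α`, and the law
`π_α` of `(X−x*)/√α` satisfies the Wasserstein-1 bound `U₃ α^{1/2} log(1/α)` against
`N(0,Σ_Y)` and the non-uniform tail bound `U₃' α^{1/4}(log(1/α))^{1/2}/a`. -/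
theorem stmt17 {d : ℕ} (hd : 1 ≤ d)
    (w : Fin d → ℝ) (hw : ∀ i, 0 < w i)
    (T : EuclideanSpace ℝ (Fin d) → EuclideanSpace ℝ (Fin d)) (γc M : ℝ)
    (hγc : γc ∈ Set.Ioo (0:ℝ) 1)
    (hT : ∀ x y, wnorm w (T x - T y) ≤ γc * wnorm w (x - y))
    (hTdiff : ContDiff ℝ 2 T)
    (hM : ∀ x : EuclideanSpace ℝ (Fin d), ∀ i j k : Fin d,
      |iteratedFDeriv ℝ 2 (fun y => T y i) x
        ![EuclideanSpace.single j 1, EuclideanSpace.single k 1]| ≤ M)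
    (xstar : EuclideanSpace ℝ (Fin d)) (hfix : T xstar = xstar)
    (hfixuniq : ∀ x, T x = x → x = xstar)
    (J : Matrix (Fin d) (Fin d) ℝ)
    (hJ : ∀ v, fderiv ℝ T xstar v = Matrix.toEuclideanLin J v)
    (ν : Measure (EuclideanSpace ℝ (Fin d))) [IsProbabilityMeasure ν]
    (S : Matrix (Fin d) (Fin d) ℝ) (hS : S.PosDef)
    (hmean : (∫ x, x ∂ν) = 0)
    (hcov : ∀ i j, (∫ x, x i * x j ∂ν) = S i j)
    (hm3 : Integrable (fun x => ‖x‖ ^ 3) ν)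
    (SY : Matrix (Fin d) (Fin d) ℝ) (hSY : SY.PosDef)
    (hLyap : (J - 1) * SY + SY * (J - 1)ᵀ + S = 0)
    (γG : Measure (EuclideanSpace ℝ (Fin d))) [IsProbabilityMeasure γG]
    (hγG : ∀ t : EuclideanSpace ℝ (Fin d),
      (∫ x, Complex.exp (Complex.I * ((⟪t, x⟫ : ℝ) : ℂ)) ∂γG)
        = Complex.exp (-(1/2 : ℂ) * ((⟪t, Matrix.toEuclideanLin SY t⟫ : ℝ) : ℂ))) :
    ∃ α'' ∈ Set.Ioc (0:ℝ) 1, ∃ U₃ U₃' : ℝ, ∀ α ∈ Set.Ioo (0:ℝ) α'',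
      ∃ μα : Measure (EuclideanSpace ℝ (Fin d)), IsProbabilityMeasure μα ∧
        Measure.map (fun p : EuclideanSpace ℝ (Fin d) × EuclideanSpace ℝ (Fin d) =>
          p.1 + α • (T p.1 - p.1 + p.2)) (μα.prod ν) = μα ∧
        (∀ μ' : Measure (EuclideanSpace ℝ (Fin d)), IsProbabilityMeasure μ' →
          Measure.map (fun p : EuclideanSpace ℝ (Fin d) × EuclideanSpace ℝ (Fin d) =>
            p.1 + α • (T p.1 - p.1 + p.2)) (μ'.prod ν) = μ' → μ' = μα) ∧
        (∀ h : EuclideanSpace ℝ (Fin d) → ℝ, LipschitzWith 1 h →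
          |(∫ y, h y ∂(Measure.map (fun x => (Real.sqrt α)⁻¹ • (x - xstar)) μα))
              - ∫ y, h y ∂γG|
            ≤ U₃ * (Real.sqrt α * Real.log (1/α))) ∧
        (∀ ζ : EuclideanSpace ℝ (Fin d), ‖ζ‖ = 1 → ∀ a : ℝ, 0 < a →
          |((Measure.map (fun x => (Real.sqrt α)⁻¹ • (x - xstar)) μα)
              {y | a < ⟪y, ζ⟫}).toReal
            - ((ProbabilityTheory.gaussianReal 0
                  (⟪ζ, Matrix.toEuclideanLin SY ζ⟫ : ℝ).toNNReal) (Set.Ioi a)).toReal|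
            ≤ U₃' * (α ^ ((1:ℝ)/4) * Real.sqrt (Real.log (1/α)) / a)) := by
  obtain ⟨hγ0, hγ1⟩ := hγc
  obtain ⟨D, Di, hDi, hD, hDw⟩ := exists_weight hw
  have hTD : ∀ x y, ‖D (T x - T y)‖ ≤ γc * ‖D (x - y)‖ := fun x y => by
    rw [hDw, hDw]; exact hT x y
  set P := toEuclideanCLM (𝕜 := ℝ) SY with hPdef
  set Sg := toEuclideanCLM (𝕜 := ℝ) S with hSgdef
  set B := toEuclideanCLM (𝕜 := ℝ) (J - 1) with hBdef
  have hBJ : fderiv ℝ T xstar = B + 1 := by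
    have : fderiv ℝ T xstar = toEuclideanCLM (𝕜 := ℝ) J := by ext1 v; exact hJ v
    rw [this, hBdef, map_sub, map_one, sub_add_cancel]
  have hTd : Differentiable ℝ T := hTdiff.differentiable (by norm_num)
  have hJd : HasFDerivAt T (B + 1) xstar := hBJ ▸ (hTd xstar).hasFDerivAt
  have hM0 : 0 ≤ M := (abs_nonneg _).trans (hM xstar ⟨0, hd⟩ ⟨0, hd⟩ ⟨0, hd⟩)
  have htay : ∀ e, ‖T (xstar + e) - xstar - (B + 1) e‖ ≤ d * (M * d ^ 2) * ‖e‖ ^ 2 := fun e => by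
    have := taylor_bound T hTdiff M hM0 hM xstar e
    rwa [hfix, hBJ] at this
  have hPp : ∀ t, 0 ≤ ⟪P t, t⟫ := posDef_inner_nonneg hSY
  obtain ⟨s₀, hs0, hs₀⟩ := posDef_lower hd hS
  obtain ⟨L, hLs, hLn⟩ := exists_sqrt P (posDef_adjoint hSY) hPp
  have hLP : ∀ t, ‖L.adjoint t‖ ^ 2 = ⟪P t, t⟫ := fun t => by rw [hLs, hLn]
  have h2 := integrable_pow_of_cube hm3 (k := 2) (by norm_num)
  have hcov' := cov_form ν h2 hcov
  have hν2 : MemLp (fun z => z) 2 ν :=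
    (memLp_two_iff_integrable_sq_norm (by fun_prop)).2 h2
  have hG : γG = Measure.map L (ProbabilityTheory.stdGaussian (EuclideanSpace ℝ (Fin d))) :=
    gauss_eq_map L P hLP γG hγG
  have hg : 0 < 1 - γc := by linarith
  -- `α ≤ 1 / 3` ensures `log (1 / α) ≥ 1`; the other two constraints keep `1 + α (J - 1)`
  -- invertible and the increments of the covariance comparable to `α Σ`
  set α₀ : ℝ := min (1 / 3) (min (1 / (2 * (‖B‖ + 1))) (s₀ / (2 * (‖B‖ ^ 2 * ‖P‖ + 1)))) with hα₀
  have hα₀p : 0 < α₀ := by positivity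
  have hα₀1 : α₀ ≤ 1 / 3 := min_le_left _ _
  refine ⟨α₀, ⟨hα₀p, by linarith⟩, ?_⟩
  set N := ‖Di‖ * ‖D‖ with hNdef
  set V2 := ‖Di‖ ^ 2 * ((∫ z, ‖D z‖ ^ 2 ∂ν) / (1 - γc)) with hV2def
  obtain ⟨κ, hκ⟩ : ∃ κ, κ = √((‖P‖ + ‖Sg‖ * N ^ 2) * (1 + 2 * ‖B‖) / (s₀ / 2)) := ⟨_, rfl⟩
  obtain ⟨C, hC⟩ : ∃ C, C = gK (EuclideanSpace ℝ (Fin d)) * κ *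
      (N ^ 3 * ((∫ u, ‖u‖ ^ 3 ∂ν) + (√‖Sg‖) ^ 3 *
        ∫ u, ‖u‖ ^ 3 ∂ProbabilityTheory.stdGaussian (EuclideanSpace ℝ (Fin d))) +
        N ^ 2 * ((Module.finrank ℝ (EuclideanSpace ℝ (Fin d)) : ℝ) ^ 2 * (‖B‖ ^ 2 * ‖P‖))) *
          (1 / (s₀ / 2) + 2 * ‖B‖ / (s₀ / 2) + 1) := ⟨_, rfl⟩
  obtain ⟨C₀, hC₀⟩ : ∃ C₀, C₀ = N * ((∫ u, ‖u‖ ∂ν) + √‖Sg‖ *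
      ∫ u, ‖u‖ ∂ProbabilityTheory.stdGaussian (EuclideanSpace ℝ (Fin d))) := ⟨_, rfl⟩
  obtain ⟨U, hU⟩ : ∃ U, U = N * (d * (M * d ^ 2)) * V2 / (1 - γc) +
      C * (1 - Real.log (1 - γc) + 1 / (1 - γc)) + C₀ := ⟨_, rfl⟩
  refine ⟨U, 4 * U + √‖P‖, fun α hα => ?_⟩
  obtain ⟨hα0, hα1⟩ := hα
  have hα3 : α ≤ 1 / 3 := (hα1.trans_le hα₀1).le
  have hαb : α * ‖B‖ ≤ 1 / 2 := by
    have h : α ≤ 1 / (2 * (‖B‖ + 1)) :=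
      hα1.le.trans ((min_le_right _ _).trans (min_le_left _ _))
    rw [le_div_iff₀ (by positivity)] at h
    linarith
  have hαp : α * (‖B‖ ^ 2 * ‖P‖) ≤ s₀ / 2 := by
    have h : α ≤ s₀ / (2 * (‖B‖ ^ 2 * ‖P‖ + 1)) :=
      hα1.le.trans ((min_le_right _ _).trans (min_le_right _ _))
    rw [le_div_iff₀ (by positivity)] at h
    linarith
  obtain ⟨μ, hμp, hinv, hμ2, huniq⟩ := chain_exists_unique D Di hDi hD T hTd.continuous hγ0.le hγ1
    hTD hα0 (by linarith) ν hν2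
  have hs : 0 < √α := Real.sqrt_pos.2 hα0
  have hsm := second_moment D T hTd.continuous hγ0.le hγ1 hTD hfix hα0 (by linarith) ν hν2 hmean
    μ hμ2 hinv
  rw [mul_div_assoc] at hsm
  obtain ⟨hi2, hV2⟩ := rescaled_second_moment D Di hDi xstar hs (Real.sq_sqrt hα0.le) μ hμ2 hsm
  have hpow : ∀ k : ℕ, ‖(1 + α • B) ^ k‖ ≤ N * (1 - α * (1 - γc)) ^ k := fun k => by
    have := pow_bound D Di hDi hD T hγ0.le hTD hJd hα0.le (by linarith) k
    rwa [add_sub_cancel_right] at this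
  have hW : ∀ h : EuclideanSpace ℝ (Fin d) → ℝ, LipschitzWith 1 h →
      |(∫ y, h y ∂(Measure.map (fun x => (√α)⁻¹ • (x - xstar)) μ)) -
        ∫ n, h (L n) ∂ProbabilityTheory.stdGaussian (EuclideanSpace ℝ (Fin d))| ≤
        U * (√α * Real.log (1 / α)) := fun h hh => by
    rw [hU]
    exact rate_fixed T hTd.continuous (by positivity) htay P Sg L (posDef_adjoint hSY)
      (lyapunov_form hLyap hSY) hPp hs₀ hs0 hLP ν hm3 hmean hcov' (by positivity) hg (by linarith)
      hα0 hα3 hαb hαp hpow μ hinv hi2 hV2 hκ hC hC₀ hh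
  have hπp : IsProbabilityMeasure (Measure.map (fun x => (√α)⁻¹ • (x - xstar)) μ) :=
    Measure.isProbabilityMeasure_map (by fun_prop)
  refine ⟨μ, hμp, hinv, huniq, fun h hh => ?_, fun ζ hζ a ha => ?_⟩
  · rw [hG, integral_map (φ := L) (by fun_prop) hh.continuous.aestronglyMeasurable]
    exact hW h hh
  · have hζ0 : ζ ≠ 0 := by rintro rfl; simp at hζ
    have := tail_fixed _ L P hLP hα0 hα3 hW hζ (posDef_inner_pos hSY hζ0) ha
    rw [real_inner_comm] at this
    exact this
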